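/- Fix integers n ≥ 2 and d ≥ 2. Let H(X) ∈ ℤ[X₁,…,Xₙ] be irreducible over ℚ, and set F(Y,X) = Y^d − H(X). Suppose there is no σ ∈ GL_n(ℚ) and no proper subset I ⊊ {1,…,n} such that H(σ(X)) lies in ℚ[(X_i)_{i∈I}] (i.e. H(σ(X)) depends only on the variables indexed by I). Then there exists an integer e(n) ≥ 1 depending only on n such that for every ε > 0 there is a constant C, depending only on n, deg F and ε, with N(F,B) ≤ C · (log(‖F‖+2))^{e(n)} · B^{n−1+1/(n+1)+ε} for all real B ≥ 1. -/

import Mathlib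

open Polynomial

noncomputable section

/-- The rational function field `ℚ(X₁,…,Xₙ)`. -/
abbrev RF (n : ℕ) := FractionRing (MvPolynomial (Fin n) ℚ)

/-- Base change a polynomial `F ∈ ℤ[Y,X₁,…,Xₙ]` (written as a polynomial in `Y`
with coefficients in `ℤ[X₁,…,Xₙ]`) to `ℚ[Y,X₁,…,Xₙ]`. -/
def toQ {n : ℕ} (F : Polynomial (MvPolynomial (Fin n) ℤ)) :
    Polynomial (MvPolynomial (Fin n) ℚ) :=
  F.map (MvPolynomial.map (Int.castRingHom ℚ))

/-- View a polynomial in `ℚ[X][Y]` as a polynomial in `ℚ(X)[Y]`. -/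
def toFracQ {n : ℕ} (F : Polynomial (MvPolynomial (Fin n) ℚ)) : Polynomial (RF n) :=
  F.map (algebraMap (MvPolynomial (Fin n) ℚ) (RF n))

/-- View a polynomial in `ℤ[X][Y]` as a polynomial in `ℚ(X)[Y]`. -/
def toFrac {n : ℕ} (F : Polynomial (MvPolynomial (Fin n) ℤ)) : Polynomial (RF n) :=
  toFracQ (toQ F)

/-- The degree of `F(Y,X)` in the variable `Xᵢ`. -/
def degX {n : ℕ} {R : Type*} [CommSemiring R]
    (F : Polynomial (MvPolynomial (Fin n) R)) (i : Fin n) : ℕ :=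
  F.support.sup fun k => (F.coeff k).degreeOf i

/-- The total degree of `F(Y,X₁,…,Xₙ)` as a polynomial in `n+1` variables. -/
def totalDeg {n : ℕ} {R : Type*} [CommSemiring R]
    (F : Polynomial (MvPolynomial (Fin n) R)) : ℕ :=
  F.support.sup fun k => k + (F.coeff k).totalDegree

/-- `‖g‖`: the maximum absolute value of a coefficient of `g ∈ ℤ[X₁,…,Xₙ]`. -/
def mvNorm {n : ℕ} (g : MvPolynomial (Fin n) ℤ) : ℕ :=
  g.support.sup fun m => (g.coeff m).natAbs

/-- `‖F‖`: the maximum absolute value of a coefficient of `F ∈ ℤ[Y,X₁,…,Xₙ]`. -/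
def polyNorm {n : ℕ} (F : Polynomial (MvPolynomial (Fin n) ℤ)) : ℕ :=
  F.support.sup fun k => mvNorm (F.coeff k)

/-- The counting function
`N(F,B) = #{x ∈ ℤⁿ ∩ [−B,B]ⁿ : ∃ y ∈ ℤ, F(y,x) = 0}`. -/
def NFB {n : ℕ} (F : Polynomial (MvPolynomial (Fin n) ℤ)) (B : ℝ) : ℕ :=
  Set.ncard {x : Fin n → ℤ | (∀ i, |(x i : ℝ)| ≤ B) ∧
    ∃ y : ℤ, Polynomial.eval y (F.map (MvPolynomial.eval x)) = 0}

/-- `F ∈ ℤ[Y,X₁,…,Xₙ]` is absolutely irreducible: irreducible over `ℚ̄`. -/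
def AbsIrred {n : ℕ} (F : Polynomial (MvPolynomial (Fin n) ℤ)) : Prop :=
  Irreducible (F.map (MvPolynomial.map (Int.castRingHom (AlgebraicClosure ℚ))))

/-- `G` has positive degree in `Y` and in each variable `Xᵢ`. -/
def AllPosDeg {n : ℕ} (G : Polynomial (MvPolynomial (Fin n) ℤ)) : Prop :=
  0 < G.natDegree ∧ ∀ i : Fin n, 0 < degX G i

/-- A field extension `M` of `ℚ(X₁,…,Xₙ)` is an `n`-genuine extension: every
`G ∈ ℤ[Y,X₁,…,Xₙ]` irreducible over `ℚ(X)` with `M ≅ ℚ(X)[Y]/(G)` has positive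
degree in each of `Y, X₁, …, Xₙ`. -/
def IsGenuineExt (n : ℕ) (M : Type*) [Field M] [Algebra (RF n) M] : Prop :=
  ∀ G : Polynomial (MvPolynomial (Fin n) ℤ), Irreducible (toFrac G) →
    Nonempty (AdjoinRoot (toFrac G) ≃ₐ[RF n] M) → AllPosDeg G

/-- A field extension `M` of `ℚ(X₁,…,Xₙ)` is strongly `n`-genuine: every
intermediate field strictly containing `ℚ(X)` is `n`-genuine. -/
def IsStronglyGenuineExt (n : ℕ) (M : Type*) [Field M] [Algebra (RF n) M] : Prop :=
  ∀ M' : IntermediateField (RF n) M, M' ≠ ⊥ → IsGenuineExt n M'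

/-- The extension `ℚ(X)[Y]/(Fq)` presented by `Fq ∈ ℚ[X][Y]` is `n`-genuine. -/
def GenuineExtOfQ {n : ℕ} (Fq : Polynomial (MvPolynomial (Fin n) ℚ)) : Prop :=
  ∀ G : Polynomial (MvPolynomial (Fin n) ℤ), Irreducible (toFrac G) →
    Nonempty (AdjoinRoot (toFrac G) ≃ₐ[RF n] AdjoinRoot (toFracQ Fq)) → AllPosDeg G

/-- The extension `ℚ(X)[Y]/(Fq)` presented by `Fq ∈ ℚ[X][Y]` is strongly
`n`-genuine: for any field `M` isomorphic over `ℚ(X)` to `ℚ(X)[Y]/(Fq)`, every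
intermediate field strictly containing `ℚ(X)` is `n`-genuine. -/
def StronglyGenuineExtOfQ {n : ℕ} (Fq : Polynomial (MvPolynomial (Fin n) ℚ)) : Prop :=
  ∀ (M : Type) [Field M] [Algebra (RF n) M],
    Nonempty (AdjoinRoot (toFracQ Fq) ≃ₐ[RF n] M) → IsStronglyGenuineExt n M

/-- An absolutely irreducible `F ∈ ℤ[Y,X₁,…,Xₙ]` is an `n`-genuine polynomial. -/
def IsGenuinePoly {n : ℕ} (F : Polynomial (MvPolynomial (Fin n) ℤ)) : Prop :=
  AbsIrred F ∧ GenuineExtOfQ (toQ F)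

/-- An absolutely irreducible `F ∈ ℤ[Y,X₁,…,Xₙ]` is a strongly `n`-genuine polynomial. -/
def IsStronglyGenuinePoly {n : ℕ} (F : Polynomial (MvPolynomial (Fin n) ℤ)) : Prop :=
  AbsIrred F ∧ StronglyGenuineExtOfQ (toQ F)

/-- The ring map `ℚ[X₁,…,Xₙ] → ℚ[X₁,…,Xₙ]` induced by the linear substitution
`Xᵢ ↦ Σⱼ σᵢⱼ Xⱼ`. -/
def lsubMv {n : ℕ} (σ : Matrix (Fin n) (Fin n) ℚ) :
    MvPolynomial (Fin n) ℚ →+* MvPolynomial (Fin n) ℚ :=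
  (MvPolynomial.aeval (R := ℚ)
    fun i => ∑ j, MvPolynomial.C (σ i j) * MvPolynomial.X j).toRingHom

/-- `F_σ(Y,X) := F(Y,σ(X))` for a linear change of variables `σ`. -/
def applyGL {n : ℕ} (σ : Matrix (Fin n) (Fin n) ℚ)
    (Fq : Polynomial (MvPolynomial (Fin n) ℚ)) : Polynomial (MvPolynomial (Fin n) ℚ) :=
  Fq.map (lsubMv σ)

/-- `F` is `(1,n)`-allowable: absolutely irreducible, monic in `Y`, and
`ℚ(X)[Y]/(F_σ)` is an `n`-genuine extension for every `σ ∈ GLₙ(ℚ)`. -/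
def IsAllowable {n : ℕ} (F : Polynomial (MvPolynomial (Fin n) ℤ)) : Prop :=
  AbsIrred F ∧ F.Monic ∧
    ∀ σ : Matrix (Fin n) (Fin n) ℚ, IsUnit σ.det → GenuineExtOfQ (applyGL σ (toQ F))

/-- `F` is strongly `(1,n)`-allowable: absolutely irreducible, monic in `Y`, and
`ℚ(X)[Y]/(F_σ)` is a strongly `n`-genuine extension for every `σ ∈ GLₙ(ℚ)`. -/
def IsStronglyAllowable {n : ℕ} (F : Polynomial (MvPolynomial (Fin n) ℤ)) : Prop :=
  AbsIrred F ∧ F.Monic ∧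
    ∀ σ : Matrix (Fin n) (Fin n) ℚ, IsUnit σ.det → StronglyGenuineExtOfQ (applyGL σ (toQ F))

/-- `F` has the form (1.2) with parameter `m`:
`F = Y^{md} + f₁(X) Y^{m(d-1)} + ⋯ + f_{d-1}(X) Y^m + f_d(X)` with `f_d ≠ 0`. -/
def HasForm (n m : ℕ) (F : Polynomial (MvPolynomial (Fin n) ℤ)) : Prop :=
  ∃ (d : ℕ) (f : ℕ → MvPolynomial (Fin n) ℤ), 1 ≤ d ∧ f d ≠ 0 ∧
    F = Polynomial.X ^ (m * d) +
      ∑ j ∈ Finset.Icc 1 d, Polynomial.C (f j) * Polynomial.X ^ (m * (d - j))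

/-- `P` has a linear factor in `Y`: `P = (Y − Q(X))·H̃(Y,X)`. -/
def HasLinearFactorY {n : ℕ} {R : Type*} [CommRing R]
    (P : Polynomial (MvPolynomial (Fin n) R)) : Prop :=
  ∃ (Q : MvPolynomial (Fin n) R) (H : Polynomial (MvPolynomial (Fin n) R)),
    P = (Polynomial.X - Polynomial.C Q) * H

/-- The canonical map `ℚ[X₁,…,Xₙ] → ℚ(X)[Y]/(F)`. -/
def structMap {n : ℕ} (F : Polynomial (MvPolynomial (Fin n) ℤ)) :
    MvPolynomial (Fin n) ℚ →+* AdjoinRoot (toFrac F) :=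
  (algebraMap (RF n) (AdjoinRoot (toFrac F))).comp
    (algebraMap (MvPolynomial (Fin n) ℚ) (RF n))

/-- `z ∈ ℚ(X)[Y]/(F)` lies in the subfield `ℚ((Xᵢ)_{i≠j})`: it can be written
as a quotient of two polynomials not involving `Xⱼ`. -/
def CoordMem {n : ℕ} (j : Fin n) (F : Polynomial (MvPolynomial (Fin n) ℤ))
    (z : AdjoinRoot (toFrac F)) : Prop :=
  ∃ a b : MvPolynomial (Fin n) ℚ,
    MvPolynomial.degreeOf j a = 0 ∧ MvPolynomial.degreeOf j b = 0 ∧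
    structMap F b ≠ 0 ∧ z * structMap F b = structMap F a

/-- `z ∈ ℚ(X)[Y]/(F)` is algebraic over the subfield `ℚ((Xᵢ)_{i≠j})`. -/
def AlgOverCoord {n : ℕ} (j : Fin n) (F : Polynomial (MvPolynomial (Fin n) ℤ))
    (z : AdjoinRoot (toFrac F)) : Prop :=
  ∃ P : Polynomial (AdjoinRoot (toFrac F)), P ≠ 0 ∧ (∀ k, CoordMem j F (P.coeff k)) ∧
    Polynomial.eval z P = 0

/-- Substitute `Xᵢ = xᵢ` for `i ∈ I` into `F`, over `ℚ̄`. -/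
def substSome {n : ℕ} (I : Finset (Fin n)) (x : Fin n → ℚ)
    (F : Polynomial (MvPolynomial (Fin n) ℤ)) :
    Polynomial (MvPolynomial (Fin n) (AlgebraicClosure ℚ)) :=
  (toQ F).map
    ((MvPolynomial.aeval (R := ℚ) fun i =>
      if i ∈ I then MvPolynomial.C (algebraMap ℚ (AlgebraicClosure ℚ) (x i))
      else MvPolynomial.X i).toRingHom)

/-- Substitute `Xᵢ = xᵢ` for all `i ≠ i₀` into `F`, over `ℚ̄`. -/
def substKeepFirst {n : ℕ} (i0 : Fin n) (x : {i : Fin n // i ≠ i0} → ℤ)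
    (F : Polynomial (MvPolynomial (Fin n) ℤ)) :
    Polynomial (MvPolynomial (Fin n) (AlgebraicClosure ℚ)) :=
  F.map
    ((MvPolynomial.aeval (R := ℤ) fun i =>
      if h : i = i0 then (MvPolynomial.X i : MvPolynomial (Fin n) (AlgebraicClosure ℚ))
      else MvPolynomial.C ((x ⟨i, h⟩ : ℤ) : AlgebraicClosure ℚ)).toRingHom)

/-- `‖L‖`: maximum absolute value of an entry of an integer matrix. -/
def matNorm {n : ℕ} (L : Matrix (Fin n) (Fin n) ℤ) : ℕ :=
  Finset.univ.sup fun p : Fin n × Fin n => (L p.1 p.2).natAbs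

/-- The standard additive character `e_p(a) = exp(2πi a/p)` on `ZMod p`. -/
def eZp (p : ℕ) (a : ZMod p) : ℂ :=
  Complex.exp (2 * Real.pi * Complex.I * (a.val : ℂ) / (p : ℂ))

lemma det_natDegree_le_cols {R ι : Type*} [CommRing R] [Fintype ι] [DecidableEq ι]
    (M : Matrix ι ι R[X]) (b : ι → ℕ) (h : ∀ i j, (M i j).natDegree ≤ b j) :
    M.det.natDegree ≤ ∑ j, b j := by
  rw [Matrix.det_apply]
  refine natDegree_sum_le_of_forall_le _ _ fun σ _ => ?_
  refine (natDegree_smul_le _ _).trans ?_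
  refine (natDegree_prod_le _ _).trans ?_
  exact Finset.sum_le_sum fun i _ => h _ _

lemma resultant_natDegree_le {R : Type*} [CommRing R] (f g : R[X][X]) (m n a b : ℕ)
    (hf : ∀ i, (f.coeff i).natDegree ≤ a) (hg : ∀ i, (g.coeff i).natDegree ≤ b) :
    (resultant f g m n).natDegree ≤ m * b + n * a := by
  have := det_natDegree_le_cols (sylvester f g m n)
    (fun j => Fin.addCases (motive := fun _ => ℕ) (fun _ => b) (fun _ => a) j) (by
      intro i j
      induction j using Fin.addCases with
      | left j => simp only [sylvester, Matrix.of_apply, Fin.addCases_left]; split_ifs <;> simp [hg]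
      | right j =>
        simp only [sylvester, Matrix.of_apply, Fin.addCases_right]; split_ifs <;> simp [hf])
  refine this.trans (le_of_eq ?_)
  rw [Fin.sum_univ_add]
  simp

lemma not_pow_of_sqfree {F : Type*} [Field F] (f : F[X]) (hf : IsCoprime f (derivative f))
    (hd : 1 ≤ f.natDegree) (c : F) (hc : c ≠ 0) (l : ℕ) (hl : 2 ≤ l) (b : FractionRing F[X]) :
    b ^ l ≠ algebraMap F[X] (FractionRing F[X]) (C c) / algebraMap F[X] (FractionRing F[X]) f := by
  intro hb
  have hinj : Function.Injective (algebraMap F[X] (FractionRing F[X])) :=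
    IsFractionRing.injective _ _
  have hf0 : f ≠ 0 := by rintro rfl; simp at hd
  have hCc : (C c : F[X]) ≠ 0 := by simpa using hc
  have h1 : (b⁻¹) ^ l = algebraMap F[X] (FractionRing F[X]) (C c⁻¹ * f) := by
    rw [inv_pow, hb, inv_div, map_mul, div_eq_mul_inv, mul_comm]
    congr 1
    rw [inv_eq_iff_eq_inv, ← one_div, eq_div_iff]
    · rw [← map_mul, ← C_mul, mul_inv_cancel₀ hc]; simp
    · simpa using hc
  obtain ⟨g, hg⟩ := IsIntegrallyClosed.exists_algebraMap_eq_of_isIntegral_pow (R := F[X])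
    (x := b⁻¹) (n := l) (by omega) (h1 ▸ isIntegral_algebraMap)
  rw [← hg, ← map_pow] at h1
  have h2 := hinj h1
  have h3 : f = C c * g ^ l := by
    rw [h2, ← mul_assoc, ← C_mul, mul_inv_cancel₀ hc]; simp
  have hgf : g ∣ f := by rw [h3]; exact Dvd.dvd.mul_left (dvd_pow_self _ (by omega)) _
  have hgf' : g ∣ derivative f := by
    rw [h3, derivative_C_mul, derivative_pow]
    refine Dvd.dvd.mul_left (Dvd.dvd.mul_right (Dvd.dvd.mul_left (dvd_pow_self _ (by omega)) _) _) _
  have hu : IsUnit g := hf.isUnit_of_dvd' hgf hgf'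
  have : f.natDegree = 0 := by
    rw [h3]
    exact natDegree_eq_zero_of_isUnit (((isUnit_C.2 (isUnit_iff_ne_zero.2 hc))).mul (hu.pow l))
  omega

lemma stepanov_nonvanish (p : ℕ) [Fact p.Prime] (l e A m : ℕ) (hl : l.Prime) (he : e * l = p - 1)
    (f : (ZMod p)[X]) (hf : IsCoprime f (derivative f)) (hm : f.natDegree = m) (hm1 : 1 ≤ m)
    (h0 : f.coeff 0 ≠ 0) (r : ℕ → (ZMod p)[X]) (hr : ∀ j < l, (r j).natDegree < A)
    (hA : l * (A - 1) + (l - 1) * m < p) (hne : ∃ j < l, r j ≠ 0) :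
    ¬ (X ^ p : (ZMod p)[X]) ∣ ∑ j ∈ Finset.range l, r j * f ^ (j * e) := by
  intro hdvd
  set Kf := FractionRing (ZMod p)[X]
  have hinj : Function.Injective (algebraMap (ZMod p)[X] Kf) := IsFractionRing.injective _ _
  have hp2 := (Fact.out : p.Prime).two_le
  have hf0 : f ≠ 0 := by rintro rfl; simp at hm; omega
  set c := f.coeff 0
  set Q : (ZMod p)[X][X] := ∑ j ∈ Finset.range l, C (r j) * X ^ j with hQ
  set G : (ZMod p)[X][X] := C f * X ^ l - C (C c) with hG
  have hQc : ∀ i, Q.coeff i = if i < l then r i else 0 := by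
    intro i; simp [hQ, coeff_C_mul, coeff_X_pow]
  have hQdeg : Q.natDegree ≤ l - 1 := by
    refine natDegree_sum_le_of_forall_le _ _ fun j hj => ?_
    refine (natDegree_C_mul_X_pow_le _ _).trans ?_
    have := Finset.mem_range.1 hj; omega
  have hQ0 : Q ≠ 0 := by
    obtain ⟨j, hj, h⟩ := hne
    intro h'
    have := hQc j
    rw [h'] at this; simp [hj] at this; exact h this.symm
  have hl2 := hl.two_le
  have hGdeg : G.natDegree = l := by
    rw [hG, natDegree_sub_C, natDegree_C_mul_X_pow _ _ hf0]
  have hGc : ∀ i, (G.coeff i).natDegree ≤ m := by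
    intro i
    rw [hG, coeff_sub, coeff_C_mul, coeff_X_pow, coeff_C]
    refine (natDegree_sub_le _ _).trans ?_
    split_ifs <;> simp [hm]
  have hQcd : ∀ i, (Q.coeff i).natDegree ≤ A - 1 := by
    intro i; rw [hQc]; split_ifs with h
    · have := hr i h; omega
    · simp
  have hdeg := resultant_natDegree_le G Q l Q.natDegree m (A-1) hGc hQcd
  -- nonvanishing
  have hres : resultant G Q l Q.natDegree ≠ 0 := by
    intro hz
    have hz' := resultant_map_map G Q l Q.natDegree (algebraMap (ZMod p)[X] Kf)
    rw [hz, map_zero] at hz'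
    have hnG : (G.map (algebraMap (ZMod p)[X] Kf)).natDegree = l := by
      rw [natDegree_map_eq_of_injective hinj, hGdeg]
    have hnQ : (Q.map (algebraMap (ZMod p)[X] Kf)).natDegree = Q.natDegree :=
      natDegree_map_eq_of_injective hinj _
    have h1 : resultant (G.map (algebraMap (ZMod p)[X] Kf)) (Q.map (algebraMap (ZMod p)[X] Kf)) = 0 := by
      rw [hnG, hnQ]; exact hz'
    rw [resultant_eq_zero_iff] at h1
    apply h1.2
    have hirr : Irreducible (X ^ l - C (algebraMap (ZMod p)[X] Kf (C c) /
        algebraMap (ZMod p)[X] Kf f)) := by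
      rw [X_pow_sub_C_irreducible_iff_of_prime hl]
      exact fun b => not_pow_of_sqfree f hf (by omega) c h0 l hl2 b
    have hfK : algebraMap (ZMod p)[X] Kf f ≠ 0 := by
      rw [Ne, map_eq_zero_iff _ hinj]; exact hf0
    have hGK : G.map (algebraMap (ZMod p)[X] Kf) = C (algebraMap (ZMod p)[X] Kf f) *
        (X ^ l - C (algebraMap (ZMod p)[X] Kf (C c) / algebraMap (ZMod p)[X] Kf f)) := by
      rw [mul_sub, ← C_mul, mul_div_cancel₀ _ hfK, hG]; simp
    rw [hGK]
    rw [isCoprime_mul_unit_left_left (isUnit_C.2 (isUnit_iff_ne_zero.2 hfK))]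
    rw [hirr.coprime_iff_not_dvd]
    intro hd
    have := natDegree_le_of_dvd hd ((Polynomial.map_ne_zero_iff hinj).2 hQ0)
    rw [hnQ, natDegree_X_pow_sub_C] at this
    omega
  obtain ⟨P1, P2, -, -, hP⟩ := exists_mul_add_mul_eq_C_resultant G Q (m := l) (n := Q.natDegree)
    hGdeg.le le_rfl (Or.inl (by omega))
  have hev := congrArg (eval (f ^ e)) hP
  rw [eval_add, eval_mul, eval_mul, eval_C] at hev
  have hQe : X ^ p ∣ Q.eval (f ^ e) := by
    convert hdvd using 1
    rw [hQ, eval_finsetSum]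
    refine Finset.sum_congr rfl fun j _ => ?_
    rw [eval_mul, eval_C, eval_pow, eval_X, ← pow_mul, mul_comm e j]
  have hGe : X ^ p ∣ G.eval (f ^ e) := by
    have : G.eval (f ^ e) = f ^ p - C c := by
      simp only [hG, eval_sub, eval_mul, eval_C, eval_pow, eval_X]
      rw [← pow_mul, he, ← pow_succ']
      congr 2; omega
    rw [this, ← ZMod.expand_card f]
    have hX : X ∣ f - C c := by
      rw [X_dvd_iff]; simp [c]
    obtain ⟨g, hg⟩ := hX
    have h2 := congrArg (expand (ZMod p) p) hg
    rw [map_sub, map_mul, expand_C, expand_X] at h2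
    exact ⟨_, h2⟩
  have hfin : X ^ p ∣ resultant G Q l Q.natDegree := by
    rw [← hev]; exact dvd_add (Dvd.dvd.mul_right hGe _) (Dvd.dvd.mul_right hQe _)
  have := natDegree_le_of_dvd hfin hres
  rw [natDegree_X_pow] at this
  have h3 : Q.natDegree * m ≤ (l - 1) * m := Nat.mul_le_mul_right _ hQdeg
  omega

/-- Iterated Stepanov operator. -/
def stp {F : Type*} [Field F] (f : F[X]) (M e j : ℕ) : ℕ → F[X] →ₗ[F] F[X]
  | 0 => LinearMap.id
  | s + 1 => LinearMap.mulLeft F f ∘ₗ derivative ∘ₗ stp f M e j s +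
      LinearMap.mulLeft F (C ((M - s + j * e : ℕ) : F) * derivative f) ∘ₗ stp f M e j s

lemma stp_succ {F : Type*} [Field F] (f : F[X]) (M e j s : ℕ) (q : F[X]) :
    stp f M e j (s+1) q = f * derivative (stp f M e j s q) +
      (C ((M - s + j * e : ℕ) : F) * derivative f) * stp f M e j s q := rfl

lemma stp_natDegree {F : Type*} [Field F] (f : F[X]) (M e j s a : ℕ) (q : F[X])
    (hq : q.natDegree ≤ a) : (stp f M e j s q).natDegree ≤ a + s * f.natDegree := by
  induction s with
  | zero => simpa [stp] using hq
  | succ s ih =>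
    rw [stp_succ]
    have h1 := natDegree_derivative_le (stp f M e j s q)
    have h2 := natDegree_derivative_le f
    have h3 := natDegree_C_mul_le ((M - s + j * e : ℕ) : F) (derivative f)
    have e1 : (s + 1) * f.natDegree = s * f.natDegree + f.natDegree := by ring
    refine (natDegree_add_le _ _).trans (max_le ?_ ?_)
    · refine natDegree_mul_le.trans ?_
      omega
    · refine natDegree_mul_le.trans ?_
      omega

lemma stp_iterate (p : ℕ) [Fact p.Prime] (f : (ZMod p)[X]) (M e j s k : ℕ) (q : (ZMod p)[X])
    (hs : s ≤ M) : derivative^[s] (f ^ (M + j * e) * q * X ^ (p * k)) =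
      f ^ (M - s + j * e) * stp f M e j s q * X ^ (p * k) := by
  induction s with
  | zero => simp [stp]
  | succ s ih =>
    rw [Function.iterate_succ_apply', ih (by omega), stp_succ]
    have hX : derivative (X ^ (p * k) : (ZMod p)[X]) = 0 := by
      rw [derivative_X_pow]; simp
    obtain ⟨N, hN⟩ : ∃ N, M - s + j * e = N + 1 := ⟨M - s + j * e - 1, by omega⟩
    have hN' : M - (s + 1) + j * e = N := by omega
    rw [hN, hN', derivative_mul, hX, derivative_mul, derivative_pow]
    simp only [Nat.add_sub_cancel]
    ring

lemma stepanov_exists {F : Type*} [Field F] (f : F[X]) (a : F) (l e A M K m : ℕ)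
    (hm : f.natDegree = m) (hA : 1 ≤ A)
    (hcount : M * (A + M * m + K) < l * K * A) :
    ∃ r : ℕ → ℕ → F[X], (∀ j k, (r j k).natDegree < A) ∧
      (∃ j < l, ∃ k < K, r j k ≠ 0) ∧
      ∀ s < M, ∑ j ∈ Finset.range l, ∑ k ∈ Finset.range K,
        (C a ^ j * X ^ k) * stp f M e j s (r j k) = 0 := by
  classical
  let V := (Fin l × Fin K × Fin A) → F
  let L := A + M * m + K
  let rL : Fin l → Fin K → (V →ₗ[F] F[X]) := fun j k =>
    ∑ i : Fin A, (monomial (i : ℕ)) ∘ₗ LinearMap.proj (j, k, i)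
  have rLv : ∀ j k v, rL j k v = ∑ i : Fin A, monomial (i : ℕ) (v (j, k, i)) := by
    intro j k v; simp only [rL, LinearMap.sum_apply]; rfl
  let T : ℕ → (V →ₗ[F] F[X]) := fun s =>
    ∑ j : Fin l, ∑ k : Fin K, LinearMap.mulLeft F (C a ^ (j : ℕ) * X ^ (k : ℕ)) ∘ₗ
      stp f M e j s ∘ₗ rL j k
  have Tv : ∀ s v, T s v = ∑ j : Fin l, ∑ k : Fin K, (C a ^ (j : ℕ) * X ^ (k : ℕ)) *
      stp f M e j s (rL j k v) := by
    intro s v; simp only [T, LinearMap.sum_apply]; rfl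
  let Φ : V →ₗ[F] (Fin M × Fin L → F) := LinearMap.pi fun si =>
    lcoeff F (si.2 : ℕ) ∘ₗ T si.1
  have hker : LinearMap.ker Φ ≠ ⊥ := by
    apply LinearMap.ker_ne_bot_of_finrank_lt
    simp only [V, Module.finrank_fintype_fun_eq_card, Fintype.card_prod, Fintype.card_fin, L]
    rw [← mul_assoc]; exact hcount
  obtain ⟨v, hv, hv0⟩ := (Submodule.ne_bot_iff _).1 hker
  have hdeg : ∀ j k, (rL j k v).natDegree ≤ A - 1 := by
    intro j k
    rw [rLv]
    refine natDegree_sum_le_of_forall_le _ _ fun i _ => ?_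
    refine (natDegree_monomial_le _).trans ?_
    have := i.2; omega
  refine ⟨fun j k => if h : j < l ∧ k < K then rL ⟨j, h.1⟩ ⟨k, h.2⟩ v else 0, ?_, ?_, ?_⟩
  · intro j k
    dsimp only
    split_ifs with h
    · have := hdeg ⟨j, h.1⟩ ⟨k, h.2⟩; omega
    · simp; omega
  · by_contra! hcon
    apply hv0
    funext ⟨j, k, i⟩
    have h1 := hcon j j.2 k k.2
    simp only [j.2, k.2, and_self, dif_pos, Fin.eta] at h1
    have h2 := congrArg (fun q => coeff q (i : ℕ)) h1
    simp only [rLv, finsetSum_coeff, coeff_monomial, coeff_zero] at h2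
    have h3 : v (j, k, i) = 0 := by simpa [Fin.val_inj] using h2
    exact h3
  · intro s hs
    have hT : T s v = 0 := by
      ext i
      by_cases hi : i < L
      · have := congrFun (LinearMap.mem_ker.1 hv) (⟨s, hs⟩, ⟨i, hi⟩)
        simpa [Φ] using this
      · rw [coeff_zero]
        apply coeff_eq_zero_of_natDegree_lt
        have : (T s v).natDegree ≤ A - 1 + s * m + (K - 1) := by
          rw [Tv]
          refine natDegree_sum_le_of_forall_le _ _ fun j _ =>
            natDegree_sum_le_of_forall_le _ _ fun k _ => ?_
          have h1 := stp_natDegree f M e j s (A - 1) _ (hdeg j k)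
          rw [hm] at h1
          have h2 : (C a ^ (j : ℕ) * X ^ (k : ℕ) : F[X]).natDegree ≤ k := by
            rw [← C_pow]; exact natDegree_C_mul_X_pow_le _ _
          refine natDegree_mul_le.trans ?_
          have := k.2
          omega
        have h4 : s * m ≤ M * m := Nat.mul_le_mul_right _ hs.le
        simp only [L] at hi
        omega
    rw [← hT, Tv, Finset.sum_range]
    refine Finset.sum_congr rfl fun j _ => ?_
    rw [Finset.sum_range]
    refine Finset.sum_congr rfl fun k _ => ?_
    simp

lemma stepanov_bound (p : ℕ) [Fact p.Prime] (l e A M K m : ℕ) (hl : l.Prime) (he : e * l = p - 1)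
    (f : (ZMod p)[X]) (hf : IsCoprime f (derivative f)) (hm : f.natDegree = m) (hm1 : 1 ≤ m)
    (h0 : f.coeff 0 ≠ 0) (hA1 : 1 ≤ A) (hM1 : 1 ≤ M) (hMp : M < p)
    (hA : l * (A - 1) + (l - 1) * m < p) (hcount : M * (A + M * m + K) < l * K * A)
    (a : ZMod p) :
    M * (Finset.univ.filter fun t : ZMod p => f.eval t ^ e = a).card ≤
      M * m + A + p * m + p * K := by
  classical
  obtain ⟨r, hrd, ⟨j1, hj1, k1, hk1, hr1⟩, hs⟩ := stepanov_exists f a l e A M K m hm hA1 hcount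
  have hf0 : f ≠ 0 := by rintro rfl; simp at h0
  set R : (ZMod p)[X] := ∑ j ∈ Finset.range l, ∑ k ∈ Finset.range K,
    f ^ (M + j * e) * r j k * X ^ (p * k) with hR
  have hX0 : (X : (ZMod p)[X]) ≠ 0 := X_ne_zero
  have hR0 : R ≠ 0 := by
    intro hz
    have hex : ∃ k, k < K ∧ ∃ j < l, r j k ≠ 0 := ⟨k1, hk1, j1, hj1, hr1⟩
    obtain ⟨hkK, hkj⟩ := Nat.find_spec hex
    set k0 := Nat.find hex
    have hmin : ∀ k < k0, ∀ j < l, r j k = 0 := by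
      intro k hk j hj
      by_contra h
      exact Nat.find_min hex hk ⟨by omega, j, hj, h⟩
    refine stepanov_nonvanish p l e A m hl he f hf hm hm1 h0 (fun j => r j k0)
      (fun j _ => hrd j k0) hA hkj ?_
    have hfac : R = f ^ M * ∑ k ∈ Finset.range K, X ^ (p * k) *
        ∑ j ∈ Finset.range l, r j k * f ^ (j * e) := by
      rw [hR, Finset.sum_comm, Finset.mul_sum]
      refine Finset.sum_congr rfl fun k _ => ?_
      rw [Finset.mul_sum, Finset.mul_sum]
      refine Finset.sum_congr rfl fun j _ => ?_
      rw [pow_add]; ring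
    rw [hz] at hfac
    have h2 := (mul_eq_zero.1 hfac.symm).resolve_left (pow_ne_zero _ hf0)
    rw [← Finset.add_sum_erase _ _ (Finset.mem_range.2 hkK)] at h2
    have h3 : (X : (ZMod p)[X]) ^ (p * k0) * X ^ p ∣ ∑ k ∈ (Finset.range K).erase k0,
        X ^ (p * k) * ∑ j ∈ Finset.range l, r j k * f ^ (j * e) := by
      refine Finset.dvd_sum fun k hk => ?_
      rw [Finset.mem_erase, Finset.mem_range] at hk
      rcases lt_or_gt_of_ne hk.1 with h | h
      · rw [Finset.sum_eq_zero]; · simp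
        intro j hj
        rw [hmin k h j (Finset.mem_range.1 hj), zero_mul]
      · rw [← pow_add]
        refine Dvd.dvd.mul_right (pow_dvd_pow _ ?_) _
        calc p * k0 + p = p * (k0 + 1) := by ring
          _ ≤ p * k := Nat.mul_le_mul_left _ h
    have h4 := (dvd_add_left h3).1 (h2 ▸ dvd_zero _)
    exact (mul_dvd_mul_iff_left (pow_ne_zero _ hX0)).1 h4
  have hdegR : R.natDegree ≤ M * m + A + p * m + p * K := by
    refine natDegree_sum_le_of_forall_le _ _ fun j hj =>
      natDegree_sum_le_of_forall_le _ _ fun k hk => ?_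
    rw [Finset.mem_range] at hj hk
    have h1 : (f ^ (M + j * e)).natDegree = (M + j * e) * m := by rw [natDegree_pow, hm]
    have h2 : j * e ≤ p := by
      have : j * e ≤ l * e := Nat.mul_le_mul_right _ hj.le
      rw [mul_comm l e, he] at this; omega
    have h3 : (M + j * e) * m ≤ M * m + p * m := by
      rw [← add_mul]; exact Nat.mul_le_mul_right _ (by omega)
    have h4 := hrd j k
    have h5 : p * k ≤ p * K := Nat.mul_le_mul_left _ hk.le
    refine natDegree_mul_le.trans ?_
    rw [natDegree_X_pow]
    have h6 := natDegree_mul_le (p := f ^ (M + j * e)) (q := r j k)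
    omega
  refine le_trans ?_ hdegR
  refine le_trans ?_ (card_roots' R)
  rw [← Multiset.sum_count_eq_card (s := Finset.univ) (by simp)]
  rw [mul_comm, ← smul_eq_mul]
  refine (Finset.card_nsmul_le_sum _ (fun t => R.roots.count t) M ?_).trans
    (Finset.sum_le_sum_of_subset (Finset.subset_univ _))
  intro t ht
  rw [Finset.mem_filter] at ht
  rw [count_roots]
  have := lt_rootMultiplicity_of_isRoot_iterate_derivative_of_mem_nonZeroDivisors' (n := M - 1)
    hR0 (t := t) ?_ ?_
  · omega
  · intro s hsM
    have hsM' : s < M := by omega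
    rw [hR, iterate_derivative_sum]
    simp_rw [iterate_derivative_sum]
    have hst := congrArg (eval t) (hs s hsM')
    rw [IsRoot, eval_finsetSum]
    rw [eval_finsetSum, eval_zero] at hst
    have : ∀ j ∈ Finset.range l, eval t (∑ k ∈ Finset.range K,
        derivative^[s] (f ^ (M + j * e) * r j k * X ^ (p * k))) = f.eval t ^ (M - s) *
        eval t (∑ k ∈ Finset.range K, C a ^ j * X ^ k * stp f M e j s (r j k)) := by
      intro j _
      rw [eval_finsetSum, eval_finsetSum, Finset.mul_sum]
      refine Finset.sum_congr rfl fun k _ => ?_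
      rw [stp_iterate p f M e j s k _ hsM'.le]
      simp only [eval_mul, eval_pow, eval_X, eval_C]
      rw [pow_add, mul_comm j e, pow_mul (eval t f) e j, ht.2, pow_mul t p k, ZMod.pow_card]
      ring
    rw [Finset.sum_congr rfl this, ← Finset.mul_sum, hst, mul_zero]
  · intro s hsM hs0
    rw [mem_nonZeroDivisors_iff_ne_zero, Ne, ZMod.natCast_eq_zero_iff]
    intro hd
    have := Nat.le_of_dvd (by omega) hd
    omega

set_option maxHeartbeats 1000000 in
lemma stepanov_param (p : ℕ) [Fact p.Prime] (l D : ℕ) (hl : l.Prime) (hlp : l ∣ p - 1)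
    (hp : (4 * l * (l * D + 2)) ^ 2 ≤ p)
    (f : (ZMod p)[X]) (hf : IsCoprime f (derivative f)) (hm1 : 1 ≤ f.natDegree)
    (hmD : f.natDegree ≤ D) (h0 : f.coeff 0 ≠ 0) (a : ZMod p) :
    ((Finset.univ.filter fun t : ZMod p => f.eval t ^ ((p - 1) / l) = a).card : ℝ) ≤
      (p : ℝ) / l + (D + 2 * (1 + D + 4 * l * (l * D + 2))) * √p := by
  obtain ⟨m, hm⟩ : ∃ m, f.natDegree = m := ⟨_, rfl⟩
  rw [hm] at hm1 hmD
  have hl2 := hl.two_le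
  set cD := 4 * l * (l * D + 2) with hcD
  obtain ⟨M0, hM0⟩ : ∃ M0, M0 = Nat.sqrt p := ⟨_, rfl⟩
  have hM0c : cD ≤ M0 := by rw [hM0, Nat.le_sqrt, ← sq]; exact hp
  have hM0p : M0 * M0 ≤ p := by rw [hM0]; exact Nat.sqrt_le p
  have hM0p' : p < (M0 + 1) * (M0 + 1) := by rw [hM0]; exact Nat.lt_succ_sqrt p
  obtain ⟨c, hc⟩ : ∃ c, c = 4 * l * (l * m + 2) := ⟨_, rfl⟩
  have hlmD : l * m ≤ l * D := Nat.mul_le_mul_left _ hmD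
  have hccD : c ≤ cD := by rw [hc, hcD]; exact Nat.mul_le_mul_left _ (by omega)
  have hc1 : 2 * l + 2 * (l * m) ≤ c := by
    rw [hc]
    have e1 : 4 * l * (l * m + 2) = 4 * (l * (l * m)) + 8 * l := by ring
    have e2 : 1 * (l * m) ≤ l * (l * m) := Nat.mul_le_mul_right _ (by omega)
    omega
  have hlM0 : l < M0 := by
    have : 1 * 1 ≤ l * m := Nat.mul_le_mul (by omega) hm1
    omega
  have hM0leM : M0 ≤ M0 * M0 := Nat.le_mul_self M0
  obtain ⟨q, hq⟩ : ∃ q, q = p / l := ⟨_, rfl⟩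
  have hq1 : l * q ≤ p := by rw [hq]; exact Nat.mul_div_le p l
  have hq2 : p < l * q + l := by rw [hq]; exact Nat.lt_mul_div_succ p (by omega)
  have hqm : m + 1 ≤ q := by
    by_contra! h
    have : l * q ≤ l * m := Nat.mul_le_mul_left _ (by omega)
    omega
  obtain ⟨A, hA⟩ : ∃ A, q = A + m := ⟨q - m, by omega⟩
  have hlq : l * q = l * A + l * m := by rw [hA]; ring
  have hA1 : 1 ≤ A := by omega
  have hb := stepanov_bound p l ((p-1)/l) A (l * M0) (M0 + c) m hl (Nat.div_mul_cancel hlp) f hf hm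
    hm1 h0 hA1 (Nat.mul_pos (by omega) (by omega)) (by nlinarith) (by
      obtain ⟨A', rfl⟩ : ∃ A', A = A' + 1 := ⟨A - 1, by omega⟩
      simp only [Nat.add_sub_cancel]
      have h1 : (l - 1) * m ≤ l * m := Nat.mul_le_mul_right _ (by omega)
      have h2 : l * (A' + 1) = l * A' + l := by ring
      omega) (by
      have h1 : p ≤ 2 * (l * A) := by omega
      have h2 : l * M0 * m ≤ l * M0 * m := le_rfl
      have h3 : (l * m + 1) * (M0 * M0) + M0 * c < c * A := by
        have e1 : c * A = 2 * (l * m + 2) * (2 * (l * A)) := by rw [hc]; ring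
        have e2 : 2 * (l * m + 2) * p ≤ c * A := by rw [e1]; exact Nat.mul_le_mul_left _ h1
        have e3 : (l * m + 1) * (M0 * M0) ≤ (l * m + 1) * p := Nat.mul_le_mul_left _ hM0p
        have e4 : M0 * c ≤ M0 * M0 := Nat.mul_le_mul_left _ (by omega)
        nlinarith
      have h4 : 0 < l := by omega
      calc l * M0 * (A + l * M0 * m + (M0 + c))
          = l * (M0 * A + ((l * m + 1) * (M0 * M0) + M0 * c)) := by ring
        _ < l * (M0 * A + c * A) := by
          apply Nat.mul_lt_mul_of_pos_left _ h4
          omega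
        _ = l * (M0 + c) * A := by ring) a
  obtain ⟨N, hN⟩ : ∃ N, N = (Finset.univ.filter fun t : ZMod p => f.eval t ^ ((p - 1) / l) = a).card := ⟨_, rfl⟩
  rw [← hN] at hb ⊢
  have hbR : (l : ℝ) * M0 * N ≤ l * M0 * m + A + p * m + p * (M0 + c) := by exact_mod_cast hb
  have hs0 : (0 : ℝ) ≤ √p := Real.sqrt_nonneg _
  have hs1 : √(p:ℝ) * √p = p := Real.mul_self_sqrt (by positivity)
  have hM01 : (1 : ℝ) ≤ M0 := by exact_mod_cast (by omega : 1 ≤ M0)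
  have hs2 : √(p : ℝ) ≤ 2 * M0 := by
    have : (p : ℝ) < (M0 + 1) * (M0 + 1) := by exact_mod_cast hM0p'
    have : √(p:ℝ) < M0 + 1 := by
      rw [Real.sqrt_lt' (by positivity), sq]; exact this
    linarith
  have hs3 : 1 ≤ √(p : ℝ) := by
    rw [Real.one_le_sqrt]; exact_mod_cast (Fact.out : p.Prime).one_le
  have hlR : (2 : ℝ) ≤ l := by exact_mod_cast hl2
  have hp2 : (p : ℝ) ≤ 2 * M0 * √p := by
    calc (p : ℝ) = √p * √p := hs1.symm
      _ ≤ 2 * M0 * √p := mul_le_mul_of_nonneg_right hs2 hs0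
  have hAp : (A : ℝ) ≤ p := by
    have : 1 * A ≤ l * A := Nat.mul_le_mul_right _ (by omega)
    have : A ≤ p := by omega
    exact_mod_cast this
  have hcR : (c : ℝ) ≤ cD := by exact_mod_cast hccD
  have hcDR : (cD : ℝ) = 4 * l * (l * D + 2) := by rw [hcD]; push_cast; ring
  have hmR : (m : ℝ) ≤ D := by exact_mod_cast hmD
  rw [← hcDR]
  have hlM : (0 : ℝ) < l * M0 := by positivity
  have key : (l : ℝ) * M0 * N ≤ l * M0 * (p / l + (D + 2 * (1 + D + cD)) * √p) := by
    have e1 : (l : ℝ) * M0 * (p / l + (D + 2 * (1 + D + cD)) * √p) =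
      M0 * p + l * M0 * (D * √p) + l * ((1 + D + cD) * (2 * M0 * √p)) := by
      field_simp
      ring
    rw [e1]
    have e2 : (l : ℝ) * M0 * m ≤ l * M0 * (D * √p) := by
      apply mul_le_mul_of_nonneg_left _ hlM.le
      nlinarith [Nat.cast_nonneg (α := ℝ) D]
    have e3 : (A : ℝ) + p * m + p * c ≤ (1 + D + cD) * p := by
      have : (0 : ℝ) ≤ p := by positivity
      nlinarith
    have e4 : (1 + D + cD) * (p : ℝ) ≤ (1 + D + cD) * (2 * M0 * √p) :=
      mul_le_mul_of_nonneg_left hp2 (by positivity)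
    have e5 : (0 : ℝ) ≤ (1 + D + cD) * (2 * M0 * √p) := by positivity
    nlinarith
  exact le_of_mul_le_mul_left key hlM

lemma stepanov_upper (p : ℕ) [Fact p.Prime] (l D : ℕ) (hl : l.Prime) (hlp : l ∣ p - 1)
    (hp : (4 * l * (l * D + 2)) ^ 2 ≤ p)
    (f : (ZMod p)[X]) (hf : IsCoprime f (derivative f)) (hm1 : 1 ≤ f.natDegree)
    (hmD : f.natDegree ≤ D) (a : ZMod p) :
    ((Finset.univ.filter fun t : ZMod p => f.eval t ^ ((p - 1) / l) = a).card : ℝ) ≤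
      (p : ℝ) / l + (D + 2 * (1 + D + 4 * l * (l * D + 2))) * √p := by
  have hf0 : f ≠ 0 := by rintro rfl; simp at hm1
  have hl2 := hl.two_le
  have hDp : D < p := by
    have h1 : D < 4 * l * (l * D + 2) := by
      have e1 : 4 * l * (l * D + 2) = 4 * (l * (l * D)) + 8 * l := by ring
      have e2 : 1 * (l * D) ≤ l * (l * D) := Nat.mul_le_mul_right _ (by omega)
      have e3 : 1 * D ≤ l * D := Nat.mul_le_mul_right _ (by omega)
      omega
    nlinarith
  obtain ⟨s, hs⟩ : ∃ s, f.eval s ≠ 0 := by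
    by_contra! h
    have h1 := card_le_degree_of_subset_roots (p := f) (Z := Finset.univ) (by
      intro x _; rw [mem_roots hf0]; exact h x)
    rw [Finset.card_univ, ZMod.card] at h1
    omega
  set g := f.comp (X + C s) with hg
  have hgd : g.natDegree = f.natDegree := by rw [hg, natDegree_comp, natDegree_X_add_C, mul_one]
  have hgc : IsCoprime g (derivative g) := by
    rw [hg, derivative_comp]
    simp only [derivative_add, derivative_X, derivative_C, add_zero, one_mul]
    exact hf.map (compRingHom (X + C s))
  have hge : ∀ t, g.eval t = f.eval (t + s) := by intro t; simp [hg]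
  have hg0 : g.coeff 0 ≠ 0 := by
    rw [coeff_zero_eq_eval_zero, hge, zero_add]; exact hs
  have := stepanov_param p l D hl hlp hp g hgc (by omega) (by omega) hg0 a
  refine le_trans (le_of_eq ?_) this
  congr 1
  symm
  refine Finset.card_bij (fun t _ => t + s) ?_ ?_ ?_
  · intro t ht
    simpa [hge] using ht
  · intro t _ t' _ h; simpa using h
  · intro t ht
    exact ⟨t - s, by simpa [hge] using ht, by simp⟩

/-- The detector function. -/
def gch (p l : ℕ) (a : ZMod p) : ℝ := if a ^ ((p - 1) / l) = 1 then (l : ℝ) - 1 else -1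

lemma gch_abs_le (p l : ℕ) (hl : 1 ≤ l) (a : ZMod p) : |gch p l a| ≤ l := by
  have h : (1 : ℝ) ≤ l := by exact_mod_cast hl
  unfold gch
  split_ifs
  · rw [abs_le]; constructor <;> linarith
  · simpa using h

lemma gch_sum_eq (p l : ℕ) [Fact p.Prime] (u : ZMod p → ZMod p) :
    ∑ t, gch p l (u t) =
      l * ((Finset.univ.filter fun t : ZMod p => u t ^ ((p - 1) / l) = 1).card : ℝ) - p := by
  have : ∀ t, gch p l (u t) = l * (if u t ^ ((p - 1) / l) = 1 then (1:ℝ) else 0) - 1 := by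
    intro t; unfold gch; split_ifs <;> ring
  simp_rw [this]
  rw [Finset.sum_sub_distrib, ← Finset.mul_sum, Finset.sum_boole]
  simp [ZMod.card]

theorem weil_bound (l D : ℕ) (hl : l.Prime) : ∃ C : ℝ, 0 < C ∧ ∀ (p : ℕ) [Fact p.Prime],
    l ∣ p - 1 → ∀ f : (ZMod p)[X], IsCoprime f (derivative f) → 1 ≤ f.natDegree →
    f.natDegree ≤ D → |∑ t, gch p l (f.eval t)| ≤ C * √p := by
  have hl2 := hl.two_le
  have hl0 : (2 : ℝ) ≤ l := by exact_mod_cast hl2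
  obtain ⟨C1, hC1⟩ : ∃ C1 : ℝ, C1 = (D + 2 * (1 + D + 4 * l * (l * D + 2))) := ⟨_, rfl⟩
  have hC1p : 0 ≤ C1 := by rw [hC1]; positivity
  obtain ⟨p0, hp0⟩ : ∃ p0, p0 = (4 * l * (l * D + 2)) ^ 2 := ⟨_, rfl⟩
  refine ⟨l * p0 + l * (D + l * C1) + 1, by positivity, ?_⟩
  intro p _ hlp f hf hm1 hmD
  have hs3 : 1 ≤ √(p : ℝ) := by
    rw [Real.one_le_sqrt]; exact_mod_cast (Fact.out : p.Prime).one_le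
  have hCle : ∀ {x y : ℝ}, 0 ≤ y → x ≤ y → x ≤ y * √p := fun hy hx => by nlinarith
  rcases lt_or_ge p p0 with hp | hp
  · have h1 : |∑ t, gch p l (f.eval t)| ≤ p * l := by
      refine (Finset.abs_sum_le_sum_abs _ _).trans ?_
      refine (Finset.sum_le_card_nsmul _ _ (l : ℝ) fun t _ => gch_abs_le p l (by omega) _).trans ?_
      simp [ZMod.card]
    refine hCle (by positivity) ?_
    have h2 : (p : ℝ) ≤ p0 := by exact_mod_cast hp.le
    have h3 : 0 ≤ (l:ℝ) * (D + l * C1) + 1 := by positivity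
    nlinarith
  · have hup : ∀ a : ZMod p, ((Finset.univ.filter fun t : ZMod p => f.eval t ^ ((p - 1) / l) = a).card : ℝ) ≤
      (p : ℝ) / l + C1 * √p := by
      intro a; rw [hC1]; exact stepanov_upper p l D hl hlp (hp0 ▸ hp) f hf hm1 hmD a
    have hf0 : f ≠ 0 := by rintro rfl; simp at hm1
    rw [gch_sum_eq]
    set N : ZMod p → ℝ := fun a => ((Finset.univ.filter fun t : ZMod p => f.eval t ^ ((p - 1) / l) = a).card : ℝ) with hN
    have hlow : (p : ℝ) - D ≤ ∑ a ∈ nthRootsFinset l (1 : ZMod p), N a := by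
      have h1 : (Finset.univ.filter fun t : ZMod p => f.eval t ≠ 0).card ≤
          ∑ a ∈ nthRootsFinset l (1 : ZMod p),
            (Finset.univ.filter fun t : ZMod p => f.eval t ^ ((p - 1) / l) = a).card := by
        have hmaps : ∀ t ∈ (Finset.univ.filter fun t : ZMod p => f.eval t ≠ 0),
            f.eval t ^ ((p - 1) / l) ∈ nthRootsFinset l (1 : ZMod p) := by
          intro t ht
          rw [Finset.mem_filter] at ht
          rw [mem_nthRootsFinset hl.pos, ← pow_mul, Nat.div_mul_cancel hlp]
          exact ZMod.pow_card_sub_one_eq_one ht.2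
        rw [Finset.card_eq_sum_card_fiberwise hmaps]
        refine Finset.sum_le_sum fun a _ => Finset.card_le_card ?_
        intro t ht
        simp only [Finset.mem_filter, Finset.mem_univ, true_and] at ht ⊢
        exact ht.2
      have h2 : (Finset.univ.filter fun t : ZMod p => f.eval t = 0).card ≤ D := by
        refine le_trans (card_le_degree_of_subset_roots (p := f) ?_) hmD
        intro x hx
        rw [mem_roots hf0]
        exact (Finset.mem_filter.1 hx).2
      have h3 := Finset.card_filter_add_card_filter_not (s := Finset.univ) (fun t : ZMod p => f.eval t = 0)
      simp only [ne_eq] at h1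
      rw [Finset.card_univ, ZMod.card] at h3
      have h4 : p ≤ D + ∑ a ∈ nthRootsFinset l (1 : ZMod p),
            (Finset.univ.filter fun t : ZMod p => f.eval t ^ ((p - 1) / l) = a).card := by omega
      have h5 : (p : ℝ) ≤ D + ∑ a ∈ nthRootsFinset l (1 : ZMod p), N a := by
        simp only [hN]; exact_mod_cast h4
      linarith
    have hmem1 : (1 : ZMod p) ∈ nthRootsFinset l (1 : ZMod p) := by
      rw [mem_nthRootsFinset hl.pos]; simp
    rw [← Finset.add_sum_erase _ _ hmem1] at hlow
    have hrest : ∑ a ∈ (nthRootsFinset l (1 : ZMod p)).erase 1, N a ≤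
        (l - 1) * ((p : ℝ) / l + C1 * √p) := by
      refine (Finset.sum_le_card_nsmul _ _ _ fun a _ => hup a).trans ?_
      rw [nsmul_eq_mul]
      refine mul_le_mul_of_nonneg_right ?_ (by positivity)
      rw [Finset.card_erase_of_mem hmem1]
      have h6 : (nthRootsFinset l (1 : ZMod p)).card ≤ l := by
        unfold nthRootsFinset
        exact (@Multiset.toFinset_card_le _ (_) _).trans (card_nthRoots _ _)
      have h7 : ((nthRootsFinset l (1 : ZMod p)).card - 1 : ℕ) ≤ l - 1 := by omega
      have h8 : (((nthRootsFinset l (1 : ZMod p)).card - 1 : ℕ) : ℝ) ≤ ((l - 1 : ℕ) : ℝ) := by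
        exact_mod_cast h7
      rwa [Nat.cast_sub (by omega : 1 ≤ l), Nat.cast_one] at h8
    have hu1 := hup 1
    change N 1 ≤ _ at hu1
    change |(l : ℝ) * N 1 - p| ≤ _
    have hpl : (l : ℝ) * (p / l) = p := by field_simp
    have hC1s : 0 ≤ C1 * √(p : ℝ) := by positivity
    have hDs : (D : ℝ) ≤ D * √p := hCle (by positivity) le_rfl
    rw [abs_le]
    have hbig : (l : ℝ) * (D * √p + l * (C1 * √p)) ≤ (l * p0 + l * (D + l * C1) + 1) * √p := by
      have : 0 ≤ ((l : ℝ) * p0 + 1) * √p := by positivity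
      nlinarith
    constructor
    · have h9 : (p : ℝ) / l - D * √p - l * (C1 * √p) ≤ N 1 := by nlinarith
      have h10 : (l : ℝ) * ((p : ℝ) / l - D * √p - l * (C1 * √p)) ≤ l * N 1 :=
        mul_le_mul_of_nonneg_left h9 (by positivity)
      nlinarith
    · have h10 : (l : ℝ) * N 1 ≤ l * ((p : ℝ) / l + C1 * √p) :=
        mul_le_mul_of_nonneg_left hu1 (by positivity)
      have h11 : C1 * √(p:ℝ) ≤ D * √p + l * (C1 * √p) := by
        have : 0 ≤ D * √(p : ℝ) := by positivity
        nlinarith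
      have h12 : (l : ℝ) * (C1 * √(p:ℝ)) ≤ l * (D * √p + l * (C1 * √p)) :=
        mul_le_mul_of_nonneg_left h11 (by positivity)
      nlinarith

section primesAP
open ArithmeticFunction.vonMangoldt Complex in
lemma res_asymp {q : ℕ} [NeZero q] {a : ZMod q} (ha : IsUnit a) :
    ∃ C : ℝ, ∀ x : ℝ, 1 < x → x ≤ 2 →
      |∑' n, residueClass a n / (n : ℝ) ^ x - (q.totient : ℝ)⁻¹ / (x - 1)| ≤ C := by
  have H {x : ℝ} (hx : 1 < x) :
      ∑' n, residueClass a n / (n : ℝ) ^ x =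
        (LFunctionResidueClassAux a x).re + (q.totient : ℝ)⁻¹ / (x - 1) := by
    refine ofReal_injective ?_
    simp only [ofReal_tsum, ofReal_div, ofReal_cpow (Nat.cast_nonneg _), ofReal_natCast,
      ofReal_add, ofReal_inv, ofReal_sub, ofReal_one]
    simp_rw [← LFunctionResidueClassAux_real ha hx,
      eqOn_LFunctionResidueClassAux ha <| Set.mem_ofPred.mpr (ofReal_re x ▸ hx), sub_add_cancel,
      LSeries, LSeries.term]
    refine tsum_congr fun n ↦ ?_
    split_ifs with hn
    · simp only [hn, residueClass_apply_zero, ofReal_zero, zero_div]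
    · rfl
  have : ContinuousOn (fun x : ℝ ↦ (LFunctionResidueClassAux a x).re) (Set.Icc 1 2) :=
    continuous_re.continuousOn.comp (t := Set.univ) (continuousOn_LFunctionResidueClassAux a)
      (fun ⦃x⦄ a ↦ trivial) |>.comp continuous_ofReal.continuousOn fun x hx ↦ by
        simpa only [Set.mem_ofPred_eq, ofReal_re] using hx.1
  obtain ⟨C, hC⟩ := isCompact_Icc.exists_bound_of_continuousOn this
  refine ⟨C, fun x hx hx2 => ?_⟩
  rw [H hx, add_sub_cancel_right]
  exact hC x ⟨hx.le, hx2⟩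

open ArithmeticFunction.vonMangoldt Complex in
lemma res_summable {q : ℕ} (a : ZMod q) {x : ℝ} (hx : 1 < x) :
    Summable fun n : ℕ => residueClass a n / (n : ℝ) ^ x :=
  LSeries.summable_real_of_abscissaOfAbsConv_lt <|
        (abscissaOfAbsConv_residueClass_le_one a).trans_lt <| mod_cast hx

open ArithmeticFunction.vonMangoldt in
lemma res_poly {q : ℕ} [NeZero q] {a : ZMod q} (ha : IsUnit a) (Q : ℝ[X]) :
    ∃ C : ℝ, ∀ T : ℝ, (Q.natDegree : ℝ) + 1 ≤ T →
      (Summable fun n : ℕ => residueClass a n / n *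
        ((n : ℝ) ^ (-1 / T) * Q.eval ((n : ℝ) ^ (-1 / T)))) ∧
      T * (q.totient : ℝ)⁻¹ * (∫ u in (0:ℝ)..1, Q.eval u) - C ≤
        ∑' n : ℕ, residueClass a n / n * ((n : ℝ) ^ (-1 / T) * Q.eval ((n : ℝ) ^ (-1 / T))) := by
  obtain ⟨C, hC⟩ := res_asymp ha
  set N := Q.natDegree with hN
  refine ⟨∑ k ∈ Finset.range (N + 1), |Q.coeff k| * C, fun T hT => ?_⟩
  have hT0 : 0 < T := by have : (0 : ℝ) ≤ N := by positivity
                         linarith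
  have hterm : ∀ n : ℕ, residueClass a n / n *
      ((n : ℝ) ^ (-1 / T) * Q.eval ((n : ℝ) ^ (-1 / T))) =
      ∑ k ∈ Finset.range (N + 1), Q.coeff k * (residueClass a n / (n : ℝ) ^ (1 + (k + 1) / T)) := by
    intro n
    rcases n.eq_zero_or_pos with rfl | hn
    · simp
    have hn' : (0 : ℝ) < n := by exact_mod_cast hn
    rw [eval_eq_sum_range, Finset.mul_sum, Finset.mul_sum]
    refine Finset.sum_congr rfl fun k _ => ?_
    rw [Real.rpow_add hn', Real.rpow_one]
    have h1 : (n : ℝ) ^ ((k + 1 : ℝ) / T) = (((n : ℝ) ^ (-1 / T)) ^ (k + 1))⁻¹ := by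
      rw [← Real.rpow_natCast, ← Real.rpow_mul hn'.le, ← Real.rpow_neg hn'.le]
      congr 1; push_cast; ring
    rw [h1]
    have h2 : (n : ℝ) ^ (-1 / T) ≠ 0 := (Real.rpow_pos_of_pos hn' _).ne'
    field_simp
    ring
  have hk : ∀ k ∈ Finset.range (N + 1), 1 < 1 + ((k:ℝ) + 1) / T ∧ 1 + ((k:ℝ) + 1) / T ≤ 2 := by
    intro k hk
    have hk' : (k : ℝ) ≤ N := by exact_mod_cast Nat.lt_succ_iff.1 (Finset.mem_range.1 hk)
    constructor
    · have : 0 < ((k:ℝ) + 1) / T := by positivity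
      linarith
    · have : ((k:ℝ) + 1) / T ≤ 1 := by rw [div_le_one hT0]; linarith
      linarith
  have hsum : ∀ k ∈ Finset.range (N + 1), Summable fun n : ℕ =>
      Q.coeff k * (residueClass a n / (n : ℝ) ^ (1 + ((k:ℝ) + 1) / T)) :=
    fun k hk' => (res_summable a (hk k hk').1).mul_left _
  simp_rw [hterm]
  refine ⟨summable_sum hsum, ?_⟩
  rw [Summable.tsum_finsetSum hsum]
  have hintg : (∫ u in (0:ℝ)..1, Q.eval u) = ∑ k ∈ Finset.range (N + 1), Q.coeff k / (k + 1) := by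
    simp_rw [eval_eq_sum_range]
    rw [intervalIntegral.integral_finsetSum]
    · refine Finset.sum_congr rfl fun k _ => ?_
      rw [intervalIntegral.integral_const_mul, integral_pow]
      simp [div_eq_mul_inv]
    · intro k _
      exact (Continuous.intervalIntegrable (by fun_prop) _ _)
  rw [hintg, Finset.mul_sum, ← Finset.sum_sub_distrib]
  refine Finset.sum_le_sum fun k hk' => ?_
  rw [tsum_mul_left]
  have h1 := hC _ (hk k hk').1 (hk k hk').2
  have h2 : (q.totient : ℝ)⁻¹ / (1 + ((k:ℝ) + 1) / T - 1) = T * (q.totient : ℝ)⁻¹ / (k + 1) := by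
    rw [add_sub_cancel_left, div_div_eq_mul_div, mul_comm]
  rw [h2] at h1
  set S := ∑' n : ℕ, residueClass a n / (n : ℝ) ^ (1 + ((k:ℝ) + 1) / T)
  have h3 : |Q.coeff k * (S - T * (q.totient : ℝ)⁻¹ / (k + 1))| ≤ |Q.coeff k| * C := by
    rw [abs_mul]; exact mul_le_mul_of_nonneg_left h1 (abs_nonneg _)
  have h4 := (abs_le.1 h3).1
  have h5 : T * (q.totient : ℝ)⁻¹ * (Q.coeff k / (k + 1)) =
    Q.coeff k * (T * (q.totient : ℝ)⁻¹ / (k + 1)) := by ring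
  rw [h5]
  linarith

lemma bump_poly (α β : ℝ) (h0 : 0 ≤ α) (hab : α < β) (h1 : β ≤ 1) :
    ∃ Q : ℝ[X], 0 < ∫ u in (0:ℝ)..1, Q.eval u ∧
      ∀ u, 0 ≤ u → u ≤ 1 → Q.eval u ≤ 1 ∧ ((u < α ∨ β < u) → Q.eval u ≤ 0) := by
  set u0 := (α + β) / 2 with hu0
  set r := (β - α) / 2 with hr
  have hr0 : 0 < r := by rw [hr]; linarith
  have hr1 : r ≤ 1 / 2 := by rw [hr]; linarith
  have hb : 0 < 1 - r ^ 2 := by nlinarith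
  obtain ⟨N, hN⟩ : ∃ N : ℕ, 1 / r < ((1 - r ^ 2 / 4) / (1 - r ^ 2)) ^ N := by
    apply pow_unbounded_of_one_lt
    rw [one_lt_div hb]; nlinarith
  rw [div_pow, div_lt_div_iff₀ hr0 (by positivity), one_mul] at hN
  set Q : ℝ[X] := (1 - (X - C u0) ^ 2) ^ N - C ((1 - r ^ 2) ^ N) with hQ
  have hQe : ∀ u, Q.eval u = (1 - (u - u0) ^ 2) ^ N - (1 - r ^ 2) ^ N := by
    intro u; simp [hQ]
  have habs : ∀ u, 0 ≤ u → u ≤ 1 → 0 ≤ 1 - (u - u0) ^ 2 := by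
    intro u hu hu'
    have : u0 ≤ 1 := by rw [hu0]; linarith
    have : 0 ≤ u0 := by rw [hu0]; linarith
    nlinarith
  refine ⟨Q, ?_, fun u hu hu' => ⟨?_, ?_⟩⟩
  · simp_rw [hQe]
    rw [intervalIntegral.integral_sub (Continuous.intervalIntegrable (by fun_prop) _ _)
      (Continuous.intervalIntegrable (by fun_prop) _ _)]
    rw [intervalIntegral.integral_const]
    have hle : r * (1 - r ^ 2 / 4) ^ N ≤ ∫ u in (0:ℝ)..1, (1 - (u - u0) ^ 2) ^ N := by
      have e1 : ∫ u in (u0 - r / 2)..(u0 + r / 2), (1 - r ^ 2 / 4) ^ N ≤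
          ∫ u in (u0 - r / 2)..(u0 + r / 2), (1 - (u - u0) ^ 2) ^ N := by
        apply intervalIntegral.integral_mono_on (by linarith)
          (Continuous.intervalIntegrable (by fun_prop) _ _)
          (Continuous.intervalIntegrable (by fun_prop) _ _)
        intro u hu
        apply pow_le_pow_left₀ (by nlinarith)
        have := hu.1; have := hu.2
        nlinarith
      have e2 : ∫ u in (u0 - r / 2)..(u0 + r / 2), (1 - (u - u0) ^ 2) ^ N ≤
          ∫ u in (0:ℝ)..1, (1 - (u - u0) ^ 2) ^ N := by
        apply intervalIntegral.integral_mono_interval (by linarith) (by linarith) (by linarith)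
        · refine (MeasureTheory.ae_restrict_iff' measurableSet_Ioc).2 (Filter.Eventually.of_forall ?_)
          intro u hu
          exact pow_nonneg (habs u hu.1.le hu.2) _
        · exact (Continuous.intervalIntegrable (by fun_prop) _ _)
      rw [intervalIntegral.integral_const] at e1
      have : u0 + r / 2 - (u0 - r / 2) = r := by ring
      rw [this, smul_eq_mul] at e1
      linarith
    simp only [sub_zero, one_smul]
    nlinarith
  · rw [hQe]
    have e1 : (1 - (u - u0) ^ 2) ^ N ≤ 1 := pow_le_one₀ (habs u hu hu') (by nlinarith [sq_nonneg (u - u0)])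
    have e2 : 0 ≤ (1 - r ^ 2) ^ N := by positivity
    linarith
  · intro h
    rw [hQe, sub_nonpos]
    apply pow_le_pow_left₀ (habs u hu hu')
    rcases h with h | h <;> nlinarith

open ArithmeticFunction.vonMangoldt in
lemma gap_sum {q : ℕ} [NeZero q] {a : ZMod q} (ha : IsUnit a) (ε : ℝ) (hε : 0 < ε) (hε1 : ε < 1) :
    ∃ c : ℝ, 0 < c ∧ ∃ T0 : ℝ, ∀ T : ℝ, T0 ≤ T → ∀ s : Finset ℕ,
      (∀ n : ℕ, 1 ≤ n → (1 - ε) * T ≤ Real.log n → Real.log n ≤ T → n ∈ s) →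
      c * T ≤ ∑ n ∈ s, residueClass a n / n := by
  obtain ⟨Q, hQ0, hQ⟩ := bump_poly (Real.exp (-1)) (Real.exp (-(1 - ε))) (Real.exp_pos _).le
    (Real.exp_lt_exp.2 (by linarith)) (Real.exp_le_one_iff.2 (by linarith))
  obtain ⟨C, hC⟩ := res_poly ha Q
  have hφ : (0 : ℝ) < (q.totient : ℝ)⁻¹ := inv_pos.mpr (mod_cast q.totient.pos_of_neZero)
  set I := ∫ u in (0:ℝ)..1, Q.eval u
  refine ⟨(q.totient : ℝ)⁻¹ * I / 2, by positivity, max (Q.natDegree + 1) (2 * C / ((q.totient : ℝ)⁻¹ * I)), ?_⟩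
  intro T hT s hs
  obtain ⟨hsum, hle⟩ := hC T (le_trans (le_max_left _ _) hT)
  have hT0 : 0 < T := lt_of_lt_of_le (by positivity) (le_trans (le_max_left _ _) hT)
  have hTC : C ≤ (q.totient : ℝ)⁻¹ * I / 2 * T := by
    have := le_trans (le_max_right _ _) hT
    rw [div_le_iff₀ (by positivity)] at this
    linarith
  have hu : ∀ n : ℕ, 1 ≤ n → (n : ℝ) ^ (-1 / T) = Real.exp (-(Real.log n / T)) := by
    intro n hn
    rw [Real.rpow_def_of_pos (by exact_mod_cast hn)]
    congr 1; ring
  have hu1 : ∀ n : ℕ, 1 ≤ n → (n : ℝ) ^ (-1 / T) ≤ 1 := by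
    intro n hn
    rw [hu n hn, Real.exp_le_one_iff]
    have : 0 ≤ Real.log n := Real.log_natCast_nonneg n
    have : 0 ≤ Real.log n / T := by positivity
    linarith
  have hu0 : ∀ n : ℕ, 0 ≤ (n : ℝ) ^ (-1 / T) := fun n => Real.rpow_nonneg (by positivity) _
  have hres : ∀ n : ℕ, 0 ≤ residueClass a n / n := fun n =>
    div_nonneg (residueClass_nonneg a n) (by positivity)
  have hneg : ∀ n ∉ s, residueClass a n / n *
      ((n : ℝ) ^ (-1 / T) * Q.eval ((n : ℝ) ^ (-1 / T))) ≤ 0 := by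
    intro n hn
    rcases n.eq_zero_or_pos with rfl | hn1
    · simp
    apply mul_nonpos_of_nonneg_of_nonpos (hres n)
    apply mul_nonpos_of_nonneg_of_nonpos (hu0 n)
    apply (hQ _ (hu0 n) (hu1 n hn1)).2
    by_contra! hcon
    rw [hu n hn1, Real.exp_le_exp, Real.exp_le_exp] at hcon
    apply hn
    have e1 := hcon.1
    have e2 := hcon.2
    rw [neg_le_neg_iff] at e1 e2
    rw [div_le_one hT0] at e1
    rw [le_div_iff₀ hT0] at e2
    exact hs n hn1 e2 e1
  have h1 : ∑' n : ℕ, residueClass a n / n * ((n : ℝ) ^ (-1 / T) * Q.eval ((n : ℝ) ^ (-1 / T))) ≤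
      ∑ n ∈ s, residueClass a n / n * ((n : ℝ) ^ (-1 / T) * Q.eval ((n : ℝ) ^ (-1 / T))) := by
    have := hsum.neg.sum_le_tsum s (fun n hn => by have := hneg n hn; linarith)
    rw [tsum_neg, Finset.sum_neg_distrib] at this
    linarith
  have h2 : ∑ n ∈ s, residueClass a n / n * ((n : ℝ) ^ (-1 / T) * Q.eval ((n : ℝ) ^ (-1 / T))) ≤
      ∑ n ∈ s, residueClass a n / n := by
    refine Finset.sum_le_sum fun n _ => ?_
    rcases n.eq_zero_or_pos with rfl | hn1
    · simp
    apply mul_le_of_le_one_right (hres n)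
    have := (hQ _ (hu0 n) (hu1 n hn1)).1
    have := hu0 n; have := hu1 n hn1
    nlinarith
  linarith

open ArithmeticFunction.vonMangoldt in
theorem primes_count (l : ℕ) (hl : 2 ≤ l) (δ : ℝ) (hδ : 0 < δ) (hδ1 : δ < 1) :
    ∃ P0 : ℝ, 1 ≤ P0 ∧ ∀ P : ℝ, P0 ≤ P →
      P ^ (1 - δ) ≤ (((Finset.range (⌊P⌋₊ + 1)).filter fun p : ℕ =>
        p.Prime ∧ l ∣ p - 1 ∧ P ^ (1 - δ) ≤ p).card : ℝ) := by
  haveI : NeZero l := ⟨by omega⟩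
  have ha : IsUnit (1 : ZMod l) := isUnit_one
  obtain ⟨c, hc, T0, hT0⟩ := gap_sum ha (δ / 2) (by linarith) (by linarith)
  set K := ∑' n : ℕ, (if n.Prime then 0 else residueClass (1 : ZMod l) n) / n with hK
  have hKs := summable_residueClass_non_primes_div (1 : ZMod l)
  -- c T - K ≥ (c/2) T, and (c/2) * P^{δ/2} ≥ 1
  obtain ⟨P1, hP1⟩ : ∃ P1 : ℝ, ∀ P ≥ P1, 2 / c ≤ P ^ (δ / 2) := by
    have := (tendsto_rpow_atTop (show 0 < δ / 2 by linarith)).eventually_ge_atTop (2 / c)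
    exact Filter.eventually_atTop.1 this
  refine ⟨max 1 (max P1 (max (Real.exp (max T0 (2 * K / c))) (Real.exp 1))), le_max_left _ _, ?_⟩
  intro P hP
  have hPp1 : 1 ≤ P := le_trans (le_max_left _ _) hP
  have hP1' : P1 ≤ P := le_trans (le_trans (le_max_left _ _) (le_max_right _ _)) hP
  have hPe : Real.exp (max T0 (2 * K / c)) ≤ P :=
    le_trans (le_trans (le_trans (le_max_left _ _) (le_max_right _ _)) (le_max_right _ _)) hP
  have hPe1 : Real.exp 1 ≤ P :=
    le_trans (le_trans (le_trans (le_max_right _ _) (le_max_right _ _)) (le_max_right _ _)) hP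
  have hP0 : 0 < P := by linarith
  set T := Real.log P with hT
  have hT1 : 1 ≤ T := by rw [hT, Real.le_log_iff_exp_le hP0]; exact hPe1
  have hTT : max T0 (2 * K / c) ≤ T := by rw [hT, Real.le_log_iff_exp_le hP0]; exact hPe
  have hTK : 2 * K ≤ c * T := by
    have := le_trans (le_max_right _ _) hTT
    rw [div_le_iff₀ hc] at this; linarith
  set s : Finset ℕ := (Finset.range (⌊P⌋₊ + 1)).filter fun n : ℕ => P ^ (1 - δ / 2) ≤ n with hs
  have h1 := hT0 T (le_trans (le_max_left _ _) hTT) s (by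
    intro n hn h2 h3
    have hn0 : (0 : ℝ) < n := by exact_mod_cast hn
    rw [hs, Finset.mem_filter, Finset.mem_range, Nat.lt_succ_iff]
    constructor
    · apply Nat.le_floor
      rw [hT] at h3
      exact (Real.log_le_log_iff hn0 hP0).1 h3
    · rw [← Real.log_le_log_iff (by positivity) hn0, Real.log_rpow hP0]
      exact h2)
  set s' : Finset ℕ := (Finset.range (⌊P⌋₊ + 1)).filter fun p : ℕ =>
        p.Prime ∧ l ∣ p - 1 ∧ P ^ (1 - δ) ≤ p with hs'
  have hdec : ∀ n : ℕ, residueClass (1 : ZMod l) n / n =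
      (if n.Prime then residueClass (1 : ZMod l) n else 0) / n +
      (if n.Prime then 0 else residueClass (1 : ZMod l) n) / n := by
    intro n; split_ifs <;> simp
  rw [Finset.sum_congr rfl (fun n _ => hdec n), Finset.sum_add_distrib] at h1
  have h2 : ∑ n ∈ s, (if n.Prime then 0 else residueClass (1 : ZMod l) n) / n ≤ K := by
    refine hKs.sum_le_tsum s fun n _ => ?_
    refine div_nonneg ?_ (by positivity)
    split_ifs
    · rfl
    · exact residueClass_nonneg _ _
  have hPδ : 0 < P ^ (1 - δ / 2) := by positivity
  have h3 : ∑ n ∈ s, (if n.Prime then residueClass (1 : ZMod l) n else 0) / n ≤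
      s'.card * (T / P ^ (1 - δ / 2)) := by
    rw [← nsmul_eq_mul]
    have e1 : ∑ n ∈ s, (if n.Prime then residueClass (1 : ZMod l) n else 0) / n =
        ∑ n ∈ s.filter (fun n => n ∈ s'), (if n.Prime then residueClass (1 : ZMod l) n else 0) / n := by
      symm
      apply Finset.sum_filter_of_ne
      intro n hn hne
      rw [hs, Finset.mem_filter] at hn
      have hsup := (Set.ext_iff.1 (support_residueClass_prime_div (1 : ZMod l)) n).1 hne
      rw [hs', Finset.mem_filter]
      refine ⟨hn.1, hsup.1, ?_, ?_⟩
      · have h5 : (n : ZMod l) = 1 := hsup.2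
        have h6 : ((n - 1 : ℕ) : ZMod l) = 0 := by
          rw [Nat.cast_sub hsup.1.one_le, h5]; simp
        exact (ZMod.natCast_eq_zero_iff _ _).1 h6
      · exact le_trans (Real.rpow_le_rpow_of_exponent_le hPp1 (by linarith)) hn.2
    rw [e1]
    refine (Finset.sum_le_card_nsmul _ _ (T / P ^ (1 - δ / 2)) ?_).trans ?_
    · intro n hn
      rw [Finset.mem_filter, hs, Finset.mem_filter, Finset.mem_range, Nat.lt_succ_iff] at hn
      have hn0 : (0 : ℝ) < n := lt_of_lt_of_le hPδ hn.1.2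
      have hnP : (n : ℝ) ≤ P := (Nat.le_floor_iff hP0.le).1 hn.1.1
      apply div_le_div₀ (by linarith) _ hPδ hn.1.2
      have e3 : residueClass (1 : ZMod l) n ≤ T :=
        ((residueClass_le _ n).trans ArithmeticFunction.vonMangoldt_le_log).trans
          (Real.log_le_log hn0 hnP)
      split_ifs
      · exact e3
      · linarith
    · refine nsmul_le_nsmul_left (by positivity) (Finset.card_le_card ?_)
      intro n hn
      exact (Finset.mem_filter.1 hn).2
  have h4 : c / 2 * T ≤ s'.card * (T / P ^ (1 - δ / 2)) := by linarith
  have h5 : c / 2 * P ^ (1 - δ / 2) ≤ s'.card := by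
    have e1 : (s'.card : ℝ) * (T / P ^ (1 - δ / 2)) = (s'.card / P ^ (1 - δ / 2)) * T := by ring
    rw [e1] at h4
    have e2 := le_of_mul_le_mul_right h4 (by linarith)
    rwa [le_div_iff₀ hPδ] at e2
  refine le_trans ?_ h5
  have h6 : P ^ (1 - δ / 2) = P ^ (1 - δ) * P ^ (δ / 2) := by
    rw [← Real.rpow_add hP0]; congr 1; ring
  rw [h6]
  have h7 := hP1 P hP1'
  rw [div_le_iff₀ hc] at h7
  have h8 : 0 < P ^ (1 - δ) := by positivity
  nlinarith
end primesAP

lemma sz_nat {R : Type*} [CommRing R] [IsDomain R] [DecidableEq R] {n : ℕ} (hn : 1 ≤ n)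
    {f : MvPolynomial (Fin n) R} (hf : f ≠ 0) (K : ℕ) (hK : f.totalDegree ≤ K) (S : Finset R) :
    ((Fintype.piFinset fun _ : Fin n => S).filter fun x => MvPolynomial.eval x f = 0).card
      ≤ K * S.card ^ (n - 1) := by
  obtain ⟨k, rfl⟩ : ∃ k, n = k + 1 := ⟨n - 1, by omega⟩
  rcases S.eq_empty_or_nonempty with rfl | hS
  · refine (Finset.card_le_card (Finset.filter_subset _ _)).trans ?_
    simp
  have h := MvPolynomial.schwartz_zippel_totalDegree hf S
  have hS0 : (0 : ℚ≥0) < S.card := by exact_mod_cast hS.card_pos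
  rw [div_le_div_iff₀ (by positivity) hS0, pow_succ] at h
  have h2 : ((((Fintype.piFinset fun _ : Fin (k+1) => S).filter
      fun x => MvPolynomial.eval x f = 0).card : ℕ) : ℚ≥0) ≤ f.totalDegree * S.card ^ k := by
    refine le_of_mul_le_mul_right ?_ hS0
    rw [mul_assoc]; exact h
  have h3 := (by exact_mod_cast h2 : ((Fintype.piFinset fun _ : Fin (k+1) => S).filter
      fun x => MvPolynomial.eval x f = 0).card ≤ f.totalDegree * S.card ^ k)
  exact h3.trans (Nat.mul_le_mul_right _ hK)

/-- `H(x + t w)` as a polynomial in `t` -/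
def Fw {R : Type*} [CommRing R] {n : ℕ} (H : MvPolynomial (Fin n) R) (w : Fin n → R) :
    (MvPolynomial (Fin n) R)[X] :=
  MvPolynomial.aeval (fun i => C (MvPolynomial.X i) + C (MvPolynomial.C (w i)) * X) H

lemma Fw_map {R S : Type*} [CommRing R] [CommRing S] (φ : R →+* S) {n : ℕ}
    (H : MvPolynomial (Fin n) R) (w : Fin n → R) :
    (Fw H w).map (MvPolynomial.map φ) = Fw (MvPolynomial.map φ H) (fun i => φ (w i)) := by
  have : ((mapRingHom (MvPolynomial.map φ)).comp (MvPolynomial.aeval (R := R) (fun i => (C (MvPolynomial.X i) + C (MvPolynomial.C (w i)) * X : (MvPolynomial (Fin n) R)[X]))).toRingHom) =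
     ((MvPolynomial.aeval (R := S) (fun i => (C (MvPolynomial.X i) + C (MvPolynomial.C (φ (w i))) * X : (MvPolynomial (Fin n) S)[X]))).toRingHom).comp (MvPolynomial.map φ) := by
    apply MvPolynomial.ringHom_ext
    · intro r
      simp [MvPolynomial.algebraMap_eq, Polynomial.algebraMap_apply]
    · intro i; simp
  exact congrArg (fun f => f H) this

lemma Fw_irreducible {n : ℕ} (H : MvPolynomial (Fin n) ℚ) (hH : Irreducible H) (w : Fin n → ℚ) :
    Irreducible (Fw H w) := by
  have h1 : Irreducible (C H : (MvPolynomial (Fin n) ℚ)[X]) := 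
    ((Polynomial.prime_C_iff).2 hH.prime).irreducible
  let Φ : (Fin n → ℚ) → (MvPolynomial (Fin n) ℚ)[X] →+* (MvPolynomial (Fin n) ℚ)[X] := fun w =>
    eval₂RingHom (MvPolynomial.aeval (R := ℚ) (fun i => (C (MvPolynomial.X i) + C (MvPolynomial.C (w i)) * X : (MvPolynomial (Fin n) ℚ)[X]))).toRingHom X
  have hΦ : ∀ w, (Φ (-w)).comp (Φ w) = RingHom.id _ := by
    intro w
    apply Polynomial.ringHom_ext'
    · apply MvPolynomial.ringHom_ext
      · intro r
        simp [Φ, Polynomial.algebraMap_apply, MvPolynomial.algebraMap_eq]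
      · intro i
        simp [Φ, Polynomial.algebraMap_apply, MvPolynomial.algebraMap_eq]
        ring
    · simp [Φ]
  let e : (MvPolynomial (Fin n) ℚ)[X] ≃+* (MvPolynomial (Fin n) ℚ)[X] :=
    RingEquiv.ofRingHom (Φ w) (Φ (-w)) (by simpa using hΦ (-w)) (hΦ w)
  have h2 : e (C H) = Fw H w := by
    simp [e, Φ, Fw]
  rw [← h2]
  exact (MulEquiv.irreducible_iff e.toMulEquiv).2 h1

lemma Fw_resultant_ne {n : ℕ} (H : MvPolynomial (Fin n) ℤ)
    (hH : Irreducible (MvPolynomial.map (Int.castRingHom ℚ) H)) (w : Fin n → ℤ)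
    (hk : 1 ≤ (Fw H w).natDegree) :
    resultant (Fw H w) (derivative (Fw H w)) (Fw H w).natDegree ((Fw H w).natDegree - 1) ≠ 0 := by
  set k := (Fw H w).natDegree with hkd
  have hinj : Function.Injective (MvPolynomial.map (σ := Fin n) (Int.castRingHom ℚ)) :=
    MvPolynomial.map_injective _ Int.cast_injective
  set G := Fw (MvPolynomial.map (Int.castRingHom ℚ) H) (fun i => (w i : ℚ)) with hG
  have hmap : (Fw H w).map (MvPolynomial.map (Int.castRingHom ℚ)) = G := by
    rw [Fw_map]; rfl
  have hGk : G.natDegree = k := by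
    rw [← hmap, natDegree_map_eq_of_injective hinj]
  let ι := algebraMap (MvPolynomial (Fin n) ℚ) (FractionRing (MvPolynomial (Fin n) ℚ))
  have hιinj : Function.Injective ι := IsFractionRing.injective _ _
  have hGirr : Irreducible G := Fw_irreducible _ hH _
  have hGprim : G.IsPrimitive := hGirr.isPrimitive (by omega)
  have hirr : Irreducible (G.map ι) := (hGprim.irreducible_iff_irreducible_map_fraction_map).1 hGirr
  have hnd : (G.map ι).natDegree = k := by rw [natDegree_map_eq_of_injective hιinj, hGk]
  have hder : (derivative (G.map ι)).natDegree = k - 1 := by rw [natDegree_derivative, hnd]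
  have hcop : IsCoprime (G.map ι) (derivative (G.map ι)) := by
    exact hirr.separable
  have hres := resultant_ne_zero _ _ hcop
  rw [hnd, hder] at hres
  intro h0
  apply hres
  have e1 : derivative (G.map ι) = (derivative (Fw H w)).map (ι.comp (MvPolynomial.map (Int.castRingHom ℚ))) := by
    rw [derivative_map, ← hmap, derivative_map, Polynomial.map_map]
  have e2 : G.map ι = (Fw H w).map (ι.comp (MvPolynomial.map (Int.castRingHom ℚ))) := by
    rw [← hmap, Polynomial.map_map]
  rw [e1, e2, resultant_map_map, h0, map_zero]

/-- natDegree and coefficient degrees at most `d` -/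
def TD {n : ℕ} (F : (MvPolynomial (Fin n) ℤ)[X]) (d : ℕ) : Prop :=
  F.natDegree ≤ d ∧ ∀ j, (F.coeff j).totalDegree ≤ d

lemma TD.mono {n : ℕ} {F : (MvPolynomial (Fin n) ℤ)[X]} {a b : ℕ} (h : TD F a) (hab : a ≤ b) :
    TD F b := ⟨h.1.trans hab, fun j => (h.2 j).trans hab⟩

lemma TD.mul {n : ℕ} {F G : (MvPolynomial (Fin n) ℤ)[X]} {a b : ℕ} (h : TD F a) (h2 : TD G b) :
    TD (F * G) (a + b) := by
  refine ⟨natDegree_mul_le.trans (add_le_add h.1 h2.1), fun j => ?_⟩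
  rw [coeff_mul]
  refine MvPolynomial.totalDegree_finsetSum_le fun x _ => ?_
  exact (MvPolynomial.totalDegree_mul _ _).trans (add_le_add (h.2 _) (h2.2 _))

lemma TD.sum {n : ℕ} {ι : Type*} (s : Finset ι) {F : ι → (MvPolynomial (Fin n) ℤ)[X]} {a : ℕ}
    (h : ∀ i ∈ s, TD (F i) a) : TD (∑ i ∈ s, F i) a := by
  refine ⟨natDegree_sum_le_of_forall_le _ _ fun i hi => (h i hi).1, fun j => ?_⟩
  rw [finsetSum_coeff]
  exact MvPolynomial.totalDegree_finsetSum_le fun x hx => (h x hx).2 j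

lemma TD.const {n : ℕ} (c : ℤ) : TD (C (MvPolynomial.C c) : (MvPolynomial (Fin n) ℤ)[X]) 0 := by
  refine ⟨by simp, fun j => ?_⟩
  rw [coeff_C]
  split_ifs
  · exact (MvPolynomial.totalDegree_C _).le
  · simp

lemma TD.pow {n : ℕ} {F : (MvPolynomial (Fin n) ℤ)[X]} {a : ℕ} (h : TD F a) (m : ℕ) :
    TD (F ^ m) (m * a) := by
  induction m with
  | zero => simpa using TD.const (n := n) 1
  | succ m ih => rw [pow_succ, Nat.succ_mul]; exact ih.mul h

lemma TD.prod {n : ℕ} {ι : Type*} (s : Finset ι) {F : ι → (MvPolynomial (Fin n) ℤ)[X]} {a : ι → ℕ}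
    (h : ∀ i ∈ s, TD (F i) (a i)) : TD (∏ i ∈ s, F i) (∑ i ∈ s, a i) := by
  classical
  induction s using Finset.induction_on with
  | empty => simpa using TD.const (n := n) 1
  | insert i s hi ih =>
    rw [Finset.prod_insert hi, Finset.sum_insert hi]
    exact (h i (by simp)).mul (ih fun j hj => h j (by simp [hj]))

lemma Fw_TD {n : ℕ} (H : MvPolynomial (Fin n) ℤ) (w : Fin n → ℤ) (D : ℕ) (hD : H.totalDegree ≤ D) :
    TD (Fw H w) D := by
  rw [Fw, MvPolynomial.aeval_def, MvPolynomial.eval₂_eq']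
  refine TD.sum _ fun m hm => ?_
  have h1 : TD (∏ i, (C (MvPolynomial.X i) + C (MvPolynomial.C (w i)) * X :
      (MvPolynomial (Fin n) ℤ)[X]) ^ m i) (∑ i, m i) := by
    refine TD.prod _ fun i _ => ?_
    have : TD (C (MvPolynomial.X i) + C (MvPolynomial.C (w i)) * X :
      (MvPolynomial (Fin n) ℤ)[X]) 1 := by
      refine ⟨by compute_degree, fun j => ?_⟩
      rw [coeff_add, coeff_C_mul, coeff_C, coeff_X]
      refine (MvPolynomial.totalDegree_add _ _).trans (max_le ?_ ?_)
      · split_ifs <;> simp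
      · split_ifs
        · rw [mul_one, MvPolynomial.totalDegree_C]; omega
        · simp
    simpa using this.pow (m i)
  have h2 : TD (algebraMap ℤ (MvPolynomial (Fin n) ℤ)[X] (MvPolynomial.coeff m H)) 0 := TD.const _
  have h3 := h2.mul h1
  refine h3.mono ?_
  rw [zero_add]
  refine le_trans ?_ hD
  have := MvPolynomial.le_totalDegree hm
  rwa [Finsupp.sum_fintype _ _ (fun _ => rfl)] at this

lemma TD.derivative {n : ℕ} {F : (MvPolynomial (Fin n) ℤ)[X]} {a : ℕ} (h : TD F a) :
    TD (Polynomial.derivative F) a := by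
  refine ⟨(natDegree_derivative_le F).trans (by have := h.1; omega), fun j => ?_⟩
  rw [coeff_derivative]
  refine (MvPolynomial.totalDegree_mul _ _).trans ?_
  have : ((j : MvPolynomial (Fin n) ℤ) + 1).totalDegree = 0 := by
    have : ((j : MvPolynomial (Fin n) ℤ) + 1) = MvPolynomial.C ((j : ℤ) + 1) := by simp
    rw [this, MvPolynomial.totalDegree_C]
  rw [this, add_zero]; exact h.2 _

lemma sylvester_all {R : Type*} [CommRing R] (P : R → Prop) (h0 : P 0) (f g : R[X]) (m n : ℕ)
    (hf : ∀ j, P (f.coeff j)) (hg : ∀ j, P (g.coeff j)) (i j) : P (sylvester f g m n i j) := by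
  simp only [sylvester, Matrix.of_apply]
  refine Fin.addCases (fun j => ?_) (fun j => ?_) j
  · simp only [Fin.addCases_left]; split_ifs
    · exact hg _
    · exact h0
  · simp only [Fin.addCases_right]; split_ifs
    · exact hf _
    · exact h0

lemma det_totalDegree {n N D : ℕ} (M : Matrix (Fin N) (Fin N) (MvPolynomial (Fin n) ℤ))
    (h : ∀ i j, (M i j).totalDegree ≤ D) : M.det.totalDegree ≤ N * D := by
  rw [Matrix.det_apply]
  refine MvPolynomial.totalDegree_finsetSum_le fun s _ => ?_
  have h1 : (∏ i, M (s i) i).totalDegree ≤ N * D := by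
    refine (MvPolynomial.totalDegree_finsetProd _ _).trans ?_
    refine (Finset.sum_le_sum fun i _ => h (s i) i).trans ?_
    simp
  rcases Int.units_eq_one_or (Equiv.Perm.sign s) with hs | hs
  · rw [hs, one_smul]; exact h1
  · rw [hs, Units.neg_smul, one_smul, MvPolynomial.totalDegree_neg]; exact h1

/-- coefficientwise majorant -/
def Maj (f q : ℤ[X]) : Prop := ∀ i, |f.coeff i| ≤ q.coeff i

lemma Maj.mul {f q f2 q2 : ℤ[X]} (h : Maj f q) (h2 : Maj f2 q2) : Maj (f * f2) (q * q2) := by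
  intro i
  rw [coeff_mul, coeff_mul]
  refine (Finset.abs_sum_le_sum_abs _ _).trans (Finset.sum_le_sum fun x _ => ?_)
  rw [abs_mul]
  exact mul_le_mul (h _) (h2 _) (abs_nonneg _) ((abs_nonneg _).trans (h _))

lemma Maj.sum {ι : Type*} (s : Finset ι) {f q : ι → ℤ[X]} (h : ∀ i ∈ s, Maj (f i) (q i)) :
    Maj (∑ i ∈ s, f i) (∑ i ∈ s, q i) := by
  intro i
  rw [finsetSum_coeff, finsetSum_coeff]
  exact (Finset.abs_sum_le_sum_abs _ _).trans (Finset.sum_le_sum fun x hx => h x hx i)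

lemma Maj.one : Maj 1 1 := by
  intro i; rw [coeff_one]; split_ifs <;> simp

lemma Maj.pow {f q : ℤ[X]} (h : Maj f q) (m : ℕ) : Maj (f ^ m) (q ^ m) := by
  induction m with
  | zero => simpa using Maj.one
  | succ m ih => rw [pow_succ, pow_succ]; exact ih.mul h

lemma Maj.prod {ι : Type*} (s : Finset ι) {f q : ι → ℤ[X]} (h : ∀ i ∈ s, Maj (f i) (q i)) :
    Maj (∏ i ∈ s, f i) (∏ i ∈ s, q i) := by
  classical
  induction s using Finset.induction_on with
  | empty => simpa using Maj.one
  | insert i s hi ih =>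
    rw [Finset.prod_insert hi, Finset.prod_insert hi]
    exact (h i (by simp)).mul (ih fun j hj => h j (by simp [hj]))

lemma Maj.le_eval {f q : ℤ[X]} (h : Maj f q) (i : ℕ) : |f.coeff i| ≤ q.eval 1 := by
  have hq : ∀ i, 0 ≤ q.coeff i := fun i => (abs_nonneg _).trans (h i)
  refine (h i).trans ?_
  rw [eval_eq_sum_range' (n := max (i + 1) (q.natDegree + 1)) (by simp)]
  simp only [one_pow, mul_one]
  exact Finset.single_le_sum (f := fun i => q.coeff i) (fun i _ => hq i) (by simp)

lemma support_card_le {n : ℕ} (H : MvPolynomial (Fin n) ℤ) (D : ℕ) (hD : H.totalDegree ≤ D) :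
    H.support.card ≤ (D + 1) ^ n := by
  classical
  have : H.support.card ≤ (Fintype.piFinset fun _ : Fin n => Finset.range (D + 1)).card := by
    refine Finset.card_le_card_of_injOn (fun m i => m i) ?_ ?_
    · intro m hm
      simp only [Finset.mem_coe, Fintype.mem_piFinset, Finset.mem_range]
      intro i
      have := MvPolynomial.le_totalDegree (Finset.mem_coe.1 hm)
      rw [Finsupp.sum_fintype _ _ (fun _ => rfl)] at this
      have h2 := Finset.single_le_sum (f := fun i => m i) (fun _ _ => Nat.zero_le _) (Finset.mem_univ i)
      omega
    · intro a _ b _ hab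
      ext i; exact congrFun hab i
  simpa using this

lemma line_coeff_le {n : ℕ} (H : MvPolynomial (Fin n) ℤ) (D : ℕ) (hD : H.totalDegree ≤ D)
    (N : ℕ) (hN : ∀ m, |H.coeff m| ≤ N) (x w : Fin n → ℤ) (K Z : ℕ) (hKZ : 1 ≤ K + Z)
    (hx : ∀ i, |x i| ≤ K) (hw : ∀ i, |w i| ≤ Z) (j : ℕ) :
    |((MvPolynomial.aeval (fun i => (C (x i) + C (w i) * X : ℤ[X])) H).coeff j)| ≤
      (D + 1) ^ n * N * (K + Z) ^ D := by
  rw [MvPolynomial.aeval_def, MvPolynomial.eval₂_eq']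
  have hm : Maj (∑ m ∈ H.support, algebraMap ℤ ℤ[X] (MvPolynomial.coeff m H) *
      ∏ i, (C (x i) + C (w i) * X : ℤ[X]) ^ m i)
      (∑ m ∈ H.support, C (N : ℤ) * ∏ i, (C (K : ℤ) + C (Z : ℤ) * X : ℤ[X]) ^ m i) := by
    refine Maj.sum _ fun m _ => Maj.mul ?_ (Maj.prod _ fun i _ => Maj.pow ?_ _)
    · intro i
      rw [← C_eq_algebraMap, coeff_C, coeff_C]
      split_ifs
      · exact hN m
      · simp
    · intro j
      rw [coeff_add, coeff_add, coeff_C_mul, coeff_C_mul, coeff_C, coeff_C, coeff_X]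
      refine (abs_add_le _ _).trans (add_le_add ?_ ?_)
      · split_ifs
        · exact hx i
        · simp
      · split_ifs
        · simpa using hw i
        · simp
  refine (hm.le_eval j).trans ?_
  simp only [eval_finsetSum, eval_mul, eval_C, eval_prod, eval_pow, eval_add, eval_X, mul_one]
  have : ∀ m ∈ H.support, (N : ℤ) * ∏ i, ((K : ℤ) + Z) ^ m i ≤ N * (K + Z) ^ D := by
    intro m hm
    refine mul_le_mul_of_nonneg_left ?_ (by positivity)
    rw [Finset.prod_pow_eq_pow_sum]
    refine pow_le_pow_right₀ (by exact_mod_cast hKZ) ?_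
    refine le_trans ?_ hD
    have := MvPolynomial.le_totalDegree hm
    rwa [Finsupp.sum_fintype _ _ (fun _ => rfl)] at this
  refine (Finset.sum_le_sum this).trans ?_
  rw [Finset.sum_const, nsmul_eq_mul, mul_assoc]
  refine mul_le_mul_of_nonneg_right ?_ (by positivity)
  exact_mod_cast support_card_le H D hD

/-- restriction of `H` to the line through `ξ` in direction `w`. -/
def lineP {n : ℕ} {S : Type*} [CommRing S] (H : MvPolynomial (Fin n) ℤ) (w : Fin n → ℤ)
    (ξ : Fin n → S) : S[X] :=
  MvPolynomial.aeval (fun i => (C (ξ i) + C ((w i : ℤ) : S) * X : S[X])) H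

lemma lineP_eq {n : ℕ} {S : Type*} [CommRing S] (H : MvPolynomial (Fin n) ℤ) (w : Fin n → ℤ)
    (ξ : Fin n → S) :
    (Fw H w).map (MvPolynomial.eval₂Hom (Int.castRingHom S) ξ) = lineP H w ξ := by
  have : ((mapRingHom (MvPolynomial.eval₂Hom (Int.castRingHom S) ξ)).comp (MvPolynomial.aeval (R := ℤ) (fun i => (C (MvPolynomial.X i) + C (MvPolynomial.C (w i)) * X : (MvPolynomial (Fin n) ℤ)[X]))).toRingHom) =
     (MvPolynomial.aeval (R := ℤ) (fun i => (C (ξ i) + C ((w i : ℤ) : S) * X : S[X]))).toRingHom := by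
    apply MvPolynomial.ringHom_ext
    · intro r
      simp
    · intro i; simp
  exact congrArg (fun f => f H) this

lemma lineP_eval {n : ℕ} {S : Type*} [CommRing S] (H : MvPolynomial (Fin n) ℤ) (w : Fin n → ℤ)
    (ξ : Fin n → S) (t : S) :
    (lineP H w ξ).eval t = MvPolynomial.aeval (fun i => ξ i + (w i : S) * t) H := by
  have : ((evalRingHom t).comp (MvPolynomial.aeval (R := ℤ) (fun i => (C (ξ i) + C ((w i : ℤ) : S) * X : S[X]))).toRingHom) =
     (MvPolynomial.aeval (R := ℤ) (fun i => ξ i + (w i : S) * t)).toRingHom := by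
    apply MvPolynomial.ringHom_ext
    · intro r
      simp
    · intro i; simp
  exact congrArg (fun f => f H) this

/-- the discriminant-like polynomial controlling good lines -/
def Rw {n : ℕ} (H : MvPolynomial (Fin n) ℤ) (w : Fin n → ℤ) : MvPolynomial (Fin n) ℤ :=
  resultant (Fw H w) (derivative (Fw H w)) (Fw H w).natDegree ((Fw H w).natDegree - 1) *
    (Fw H w).coeff (Fw H w).natDegree

lemma Rw_ne {n : ℕ} (H : MvPolynomial (Fin n) ℤ)
    (hH : Irreducible (MvPolynomial.map (Int.castRingHom ℚ) H)) (w : Fin n → ℤ)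
    (hk : 1 ≤ (Fw H w).natDegree) : Rw H w ≠ 0 := by
  refine mul_ne_zero (Fw_resultant_ne H hH w hk) ?_
  rw [coeff_natDegree, Ne, leadingCoeff_eq_zero]
  rintro h; rw [h] at hk; simp at hk

lemma Rw_degree {n : ℕ} (H : MvPolynomial (Fin n) ℤ) (w : Fin n → ℤ) (D : ℕ)
    (hD : H.totalDegree ≤ D) : (Rw H w).totalDegree ≤ 2 * D * D + D := by
  have hF := Fw_TD H w D hD
  refine (MvPolynomial.totalDegree_mul _ _).trans (add_le_add ?_ (hF.2 _))
  rw [resultant]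
  refine (det_totalDegree (D := D) _ (sylvester_all (fun q : MvPolynomial (Fin n) ℤ => q.totalDegree ≤ D) (by simp) _ _ _ _ hF.2 hF.derivative.2)).trans ?_
  refine Nat.mul_le_mul_right _ ?_
  have := hF.1
  omega

lemma Rw_map {n : ℕ} {S : Type*} [CommRing S] (H : MvPolynomial (Fin n) ℤ) (w : Fin n → ℤ)
    (ξ : Fin n → S) :
    MvPolynomial.eval₂Hom (Int.castRingHom S) ξ (Rw H w) =
    resultant (lineP H w ξ) (derivative (lineP H w ξ)) (Fw H w).natDegree
      ((Fw H w).natDegree - 1) * (lineP H w ξ).coeff (Fw H w).natDegree := by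
  rw [Rw, map_mul, ← resultant_map_map, ← derivative_map, lineP_eq, ← lineP_eq, coeff_map]

lemma line_good {n : ℕ} {S : Type*} [Field S] (H : MvPolynomial (Fin n) ℤ) (w : Fin n → ℤ)
    (ξ : Fin n → S) (D : ℕ) (hD : H.totalDegree ≤ D) (hk : 1 ≤ (Fw H w).natDegree)
    (h : MvPolynomial.eval₂Hom (Int.castRingHom S) ξ (Rw H w) ≠ 0) :
    IsCoprime (lineP H w ξ) (derivative (lineP H w ξ)) ∧ 1 ≤ (lineP H w ξ).natDegree ∧
      (lineP H w ξ).natDegree ≤ D := by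
  rw [Rw_map] at h
  obtain ⟨h1, h2⟩ := mul_ne_zero_iff.1 h
  have hle : (lineP H w ξ).natDegree ≤ (Fw H w).natDegree := by
    rw [← lineP_eq]; exact natDegree_map_le
  have hge := le_natDegree_of_ne_zero h2
  refine ⟨?_, hk.trans hge, hle.trans (Fw_TD H w D hD).1⟩
  obtain ⟨a, b, -, -, hab⟩ := exists_mul_add_mul_eq_C_resultant (lineP H w ξ)
    (derivative (lineP H w ξ)) hle
    ((natDegree_derivative_le _).trans (Nat.sub_le_sub_right hle 1)) (Or.inl (by omega))
  set r := resultant (lineP H w ξ) (derivative (lineP H w ξ)) (Fw H w).natDegree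
      ((Fw H w).natDegree - 1)
  refine ⟨C r⁻¹ * a, C r⁻¹ * b, ?_⟩
  calc _ = C r⁻¹ * (lineP H w ξ * a + derivative (lineP H w ξ) * b) := by ring
    _ = 1 := by rw [hab, ← C_mul, inv_mul_cancel₀ h1, C_1]

set_option maxHeartbeats 1000000 in
lemma Rw_size {n : ℕ} (H : MvPolynomial (Fin n) ℤ) (w : Fin n → ℤ) (D : ℕ)
    (hD : H.totalDegree ≤ D) (N : ℕ) (hN : ∀ m, |H.coeff m| ≤ N) (K Z : ℕ) (hZ : 1 ≤ Z)
    (hw : ∀ i, |w i| ≤ Z) (x : Fin n → ℤ) (hx : ∀ i, |x i| ≤ K) :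
    |MvPolynomial.eval₂Hom (Int.castRingHom ℤ) x (Rw H w)| ≤
      ((2 * D).factorial * ((D + 1) ^ (n + 1) * (K + 1) ^ D) ^ (2 * D + 1) : ℕ) *
        ((N + 1) * (Z + 1)) ^ ((D + 1) * (2 * D + 1)) := by
  rw [Rw_map]
  set k := (Fw H w).natDegree with hk
  have hkD : k ≤ D := (Fw_TD H w D hD).1
  set f := lineP H w x with hf
  set L : ℤ := (D + 1) ^ n * N * (K + Z) ^ D with hL
  have hL0 : 0 ≤ L := by positivity
  have hc : ∀ j, |f.coeff j| ≤ L := by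
    intro j
    have := line_coeff_le H D hD N hN x w K Z (by omega) hx hw j
    rw [hf, lineP]; simpa using this
  set E : ℤ := ((D + 1) ^ (n + 1) * (K + 1) ^ D) * ((N + 1) * (Z + 1)) ^ (D + 1) with hE
  have hLE : (D + 1) * L ≤ E := by
    calc (D + 1) * L = (D + 1) ^ (n + 1) * (N * (K + Z) ^ D) := by rw [hL]; ring
      _ ≤ (D + 1) ^ (n + 1) * ((N + 1) ^ (D + 1) * ((K + 1) * (Z + 1)) ^ D) := by
        gcongr
        · calc (N : ℤ) ≤ N + 1 := by linarith
            _ = (N + 1) ^ 1 := by ring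
            _ ≤ (N + 1) ^ (D + 1) := pow_le_pow_right₀ (by linarith [Int.natCast_nonneg N]) (by omega)
        · nlinarith [Int.natCast_nonneg K, Int.natCast_nonneg Z, mul_nonneg (Int.natCast_nonneg K) (Int.natCast_nonneg Z)]
      _ = (D + 1) ^ (n + 1) * (K + 1) ^ D * ((N + 1) ^ (D + 1) * (Z + 1) ^ D) := by rw [mul_pow]; ring
      _ ≤ (D + 1) ^ (n + 1) * (K + 1) ^ D * ((N + 1) ^ (D + 1) * (Z + 1) ^ (D + 1)) := by
        gcongr
        · linarith [Int.natCast_nonneg Z]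
        · omega
      _ = E := by rw [hE, mul_pow ((N : ℤ) + 1)]
  have hLL : L ≤ E := by nlinarith [Int.natCast_nonneg D, mul_nonneg (Int.natCast_nonneg D) hL0]
  have hE1 : 1 ≤ E := by
    have : 0 < E := by positivity
    omega
  have hc' : ∀ j, |(derivative f).coeff j| ≤ E := by
    intro j
    rw [coeff_derivative]
    have hfd : f.natDegree ≤ D := by
      rw [hf, ← lineP_eq]; exact natDegree_map_le.trans hkD
    by_cases hj : j + 1 ≤ D
    · rw [abs_mul]
      refine le_trans ?_ hLE
      rw [mul_comm]
      refine mul_le_mul ?_ (hc _) (abs_nonneg _) (by positivity)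
      rw [abs_of_nonneg (by positivity)]
      have : ((j + 1 : ℕ) : ℤ) ≤ D := by exact_mod_cast hj
      push_cast at this
      linarith
    · rw [coeff_eq_zero_of_natDegree_lt (by omega)]; simp; linarith
  have hdet : |resultant f (derivative f) k (k - 1)| ≤ (2 * D).factorial * E ^ (2 * D) := by
    rw [resultant]
    have := Matrix.det_le (abv := AbsoluteValue.abs) (A := sylvester f (derivative f) k (k-1)) (x := E)
      (sylvester_all (fun r => |r| ≤ E) (by simp; linarith) _ _ _ _ (fun j => (hc j).trans hLL) hc')
    rw [AbsoluteValue.abs_apply] at this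
    refine this.trans ?_
    rw [Fintype.card_fin, nsmul_eq_mul]
    have hkk : k + (k - 1) ≤ 2 * D := by omega
    gcongr
  rw [abs_mul]
  calc _ ≤ ((2 * D).factorial * E ^ (2 * D)) * E := mul_le_mul hdet ((hc _).trans hLL) (abs_nonneg _) (by positivity)
    _ = (2 * D).factorial * E ^ (2 * D + 1) := by ring
    _ = _ := by rw [hE, mul_pow, ← pow_mul]; push_cast; ring

open Classical in
theorem good_w (n D : ℕ) (hn : 1 ≤ n) : ∃ K c1 c2 : ℕ, ∀ (H : MvPolynomial (Fin n) ℤ),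
    Irreducible (MvPolynomial.map (Int.castRingHom ℚ) H) → H.totalDegree ≤ D →
    ∀ N : ℕ, (∀ m, |H.coeff m| ≤ N) → ∀ (w : Fin n → ℤ) (Z : ℕ), 1 ≤ Z → (∀ i, |w i| ≤ Z) →
    1 ≤ (Fw H w).natDegree → ∃ mw : ℤ, mw ≠ 0 ∧ |mw| ≤ c1 * ((N + 1) * (Z + 1)) ^ c2 ∧
    ∀ (p : ℕ) [Fact p.Prime], ¬ (p : ℤ) ∣ mw → 
      (Finset.univ.filter fun ξ : Fin n → ZMod p => ¬ (IsCoprime (lineP H w ξ)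
        (derivative (lineP H w ξ)) ∧ 1 ≤ (lineP H w ξ).natDegree ∧
      (lineP H w ξ).natDegree ≤ D)).card ≤ K * p ^ (n - 1) := by
  set K1 := 2 * D * D + D
  refine ⟨K1, ((2 * D).factorial * ((D + 1) ^ (n + 1) * (K1 + 1) ^ D) ^ (2 * D + 1) : ℕ),
    (D + 1) * (2 * D + 1), ?_⟩
  intro H hH hD N hN w Z hZ hw hk
  have hR := Rw_ne H hH w hk
  have hRd := Rw_degree H w D hD
  obtain ⟨x, hx, hx0⟩ : ∃ x : Fin n → ℤ, (∀ i, |x i| ≤ K1) ∧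
      MvPolynomial.eval x (Rw H w) ≠ 0 := by
    by_contra hcon
    push Not at hcon
    have h := sz_nat hn hR K1 hRd (Finset.Icc (0 : ℤ) K1)
    rw [Finset.filter_true_of_mem] at h
    · simp only [Fintype.card_piFinset, Int.card_Icc, Finset.prod_const, Finset.card_univ, Fintype.card_fin, sub_zero] at h
      have e : ((K1 : ℤ) + 1).toNat = K1 + 1 := by omega
      rw [e] at h
      obtain ⟨m, rfl⟩ : ∃ m, n = m + 1 := ⟨n - 1, by omega⟩
      rw [pow_succ] at h
      simp only [Nat.add_sub_cancel] at h
      have : 0 < (K1 + 1) ^ m := by positivity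
      nlinarith
    · intro x hx
      apply hcon
      intro i
      rw [Fintype.mem_piFinset] at hx
      have := Finset.mem_Icc.1 (hx i)
      rw [abs_of_nonneg this.1]; exact this.2
  have hxe : MvPolynomial.eval₂Hom (Int.castRingHom ℤ) x (Rw H w) = MvPolynomial.eval x (Rw H w) := by
    rfl
  refine ⟨MvPolynomial.eval x (Rw H w), hx0, ?_, ?_⟩
  · have := Rw_size H w D hD N hN K1 Z hZ hw x hx
    rw [hxe] at this; exact_mod_cast this
  · intro p _ hp
    have hRp : MvPolynomial.map (Int.castRingHom (ZMod p)) (Rw H w) ≠ 0 := by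
      intro h
      apply hp
      have h2 := congrArg (MvPolynomial.eval fun i => (x i : ZMod p)) h
      rw [map_zero, MvPolynomial.eval_map] at h2
      rw [← ZMod.intCast_zmod_eq_zero_iff_dvd _ p, ← h2]
      have h3 := MvPolynomial.eval₂_comp_left (Int.castRingHom (ZMod p)) (RingHom.id ℤ) x (Rw H w)
      exact h3
    have h := sz_nat hn hRp K1 ((Finset.sup_mono (MvPolynomial.support_map_subset _ _)).trans hRd) Finset.univ
    rw [Finset.card_univ, ZMod.card] at h
    refine le_trans (Finset.card_le_card ?_) h
    intro ξ hξ
    simp only [Finset.mem_filter, Fintype.mem_piFinset, Finset.mem_univ, implies_true, true_and] at hξ ⊢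
    by_contra h0
    apply hξ
    refine line_good H w ξ D hD hk ?_
    rwa [MvPolynomial.eval_map] at h0

lemma Fw_const {n : ℕ} (H : MvPolynomial (Fin n) ℤ) (w : Fin n → ℤ) (h : (Fw H w).natDegree = 0)
    {A : Type*} [CommRing A] (a : Fin n → A) (b : A) :
    MvPolynomial.aeval (fun i => a i + (w i : A) * b) H = MvPolynomial.aeval a H := by
  have h1 := lineP_eval H w a b
  have h2 := lineP_eval H w a 0
  obtain ⟨c, hc⟩ := natDegree_eq_zero.1 h
  rw [← lineP_eq, ← hc, map_C, eval_C] at h1 h2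
  rw [← h1, h2]
  simp

lemma genuine_natDegree {n : ℕ} (H : MvPolynomial (Fin n) ℤ)
    (hG : ¬ ∃ (σ : Matrix (Fin n) (Fin n) ℚ) (I : Set (Fin n)), IsUnit σ.det ∧
            I ≠ Set.univ ∧
            ∀ j ∉ I,
              MvPolynomial.degreeOf j (lsubMv σ (MvPolynomial.map (Int.castRingHom ℚ) H)) = 0)
    (w : Fin n → ℤ) (hw : w ≠ 0) : 1 ≤ (Fw H w).natDegree := by
  by_contra hcon
  have h0 : (Fw H w).natDegree = 0 := by omega
  obtain ⟨j, hj⟩ := Function.ne_iff.1 hw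
  apply hG
  refine ⟨(1 : Matrix (Fin n) (Fin n) ℚ).updateCol j (fun i => (w i : ℚ)), {j}ᶜ, ?_, ?_, ?_⟩
  · rw [← Matrix.cramer_apply, Matrix.cramer_one]
    simpa using hj
  · intro h
    have : j ∈ ({j}ᶜ : Set (Fin n)) := by rw [h]; trivial
    simp at this
  · intro j' hj'
    have : j' = j := by simpa using hj'
    subst this
    set a : Fin n → MvPolynomial (Fin n) ℚ := fun i => if i = j' then 0 else MvPolynomial.X i with ha
    have key : lsubMv ((1 : Matrix (Fin n) (Fin n) ℚ).updateCol j' (fun i => (w i : ℚ)))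
        (MvPolynomial.map (Int.castRingHom ℚ) H) =
        MvPolynomial.aeval (fun i => a i + (w i : MvPolynomial (Fin n) ℚ) * MvPolynomial.X j') H := by
      have : (lsubMv ((1 : Matrix (Fin n) (Fin n) ℚ).updateCol j' (fun i => (w i : ℚ)))).comp
          (MvPolynomial.map (Int.castRingHom ℚ)) =
        (MvPolynomial.aeval (R := ℤ) (fun i => a i + (w i : MvPolynomial (Fin n) ℚ) * MvPolynomial.X j')).toRingHom := by
        apply MvPolynomial.ringHom_ext
        · intro r; simp
        · intro i
          simp only [lsubMv, RingHom.comp_apply, MvPolynomial.map_X, AlgHom.toRingHom_eq_coe, RingHom.coe_coe, MvPolynomial.aeval_X]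
          rw [Finset.sum_eq_add_sum_sdiff_singleton_of_mem (Finset.mem_univ j')]
          rw [Matrix.updateCol_self, add_comm]
          congr 1
          · have : ∀ x ∈ Finset.univ \ {j'}, MvPolynomial.C ((1 : Matrix (Fin n) (Fin n) ℚ).updateCol j' (fun i => (w i : ℚ)) i x) * MvPolynomial.X x = if i = x then a i else 0 := by
              intro x hx
              have hx : x ≠ j' := by simpa using hx
              rw [Matrix.updateCol_ne hx, Matrix.one_apply]
              split_ifs with hix
              · subst hix; simp [ha, hx]
              · simp
            rw [Finset.sum_congr rfl this, Finset.sum_ite_eq]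
            split_ifs with h
            · rfl
            · have : i = j' := by simpa using h
              simp [ha, this]
      exact congrArg (fun f => f H) this
    have e : MvPolynomial.aeval (fun i => a i + (w i : MvPolynomial (Fin n) ℚ) * MvPolynomial.X j') H =
        MvPolynomial.aeval a H := by
      have e1 := Fw_const H w h0 a (MvPolynomial.X j')
      rw [MvPolynomial.aeval_def, MvPolynomial.aeval_def,
        show algebraMap ℤ (MvPolynomial (Fin n) ℚ) = Int.castRingHom _ from RingHom.ext_int _ _]
      exact e1
    rw [key, e]
    have hmem : MvPolynomial.aeval a H ∈ MvPolynomial.supported ℚ ({j'}ᶜ : Set (Fin n)) := by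
      rw [MvPolynomial.aeval_def, MvPolynomial.eval₂_eq']
      refine Subalgebra.sum_mem _ fun m _ => Subalgebra.mul_mem _ ?_ (Subalgebra.prod_mem _ fun i _ => Subalgebra.pow_mem _ ?_ _)
      · have : algebraMap ℤ (MvPolynomial (Fin n) ℚ) (MvPolynomial.coeff m H) =
          algebraMap ℚ (MvPolynomial (Fin n) ℚ) ((MvPolynomial.coeff m H : ℤ) : ℚ) := by simp
        rw [this]
        exact Subalgebra.algebraMap_mem _ _
      · simp only [ha]
        split_ifs with h
        · exact Subalgebra.zero_mem _
        · exact MvPolynomial.X_mem_supported.2 (by simpa using h)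
    rw [MvPolynomial.mem_supported] at hmem
    by_contra hd
    have h3 : j' ∈ (MvPolynomial.aeval a H).vars := MvPolynomial.mem_vars_iff_degreeOf_ne_zero.2 hd
    have := hmem (Finset.mem_coe.2 h3)
    simp at this

/-- correlation along multiples of `w` -/
def corr {p n : ℕ} [NeZero p] (g : (Fin n → ZMod p) → ℝ) (w : Fin n → ZMod p) : ℝ :=
  ∑ t : ZMod p, ∑ ξ : Fin n → ZMod p, g ξ * g (ξ + t • w)

lemma corr_eq {p n : ℕ} [NeZero p] (g : (Fin n → ZMod p) → ℝ) (w : Fin n → ZMod p) :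
    (p : ℝ) * corr g w = ∑ ξ : Fin n → ZMod p, (∑ t : ZMod p, g (ξ + t • w)) ^ 2 := by
  have h1 : ∀ s : ZMod p, corr g w = ∑ t : ZMod p, ∑ ξ : Fin n → ZMod p, g (ξ + s • w) * g (ξ + t • w) := by
    intro s
    rw [corr, ← Equiv.sum_comp (Equiv.subRight s)]
    refine Finset.sum_congr rfl fun t _ => ?_
    rw [← Equiv.sum_comp (Equiv.addRight (s • w))]
    refine Finset.sum_congr rfl fun ξ _ => ?_
    simp only [Equiv.coe_addRight, Equiv.subRight_apply]
    congr 2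
    rw [add_assoc, ← add_smul]; congr 2; ring
  have h2 : (p : ℝ) * corr g w = ∑ s : ZMod p, corr g w := by
    rw [Finset.sum_const, Finset.card_univ, ZMod.card, nsmul_eq_mul]
  rw [h2, Finset.sum_congr rfl fun s _ => h1 s]
  simp_rw [sq, Finset.sum_mul_sum]
  rw [Finset.sum_comm' (t' := Finset.univ) (s' := fun _ => Finset.univ) (by simp)]
  rw [Finset.sum_comm]
  simp_rw [Finset.sum_comm (s := (Finset.univ : Finset (ZMod p))) (t := (Finset.univ : Finset (Fin n → ZMod p)))]

lemma corr_trivial {p n : ℕ} [NeZero p] (g : (Fin n → ZMod p) → ℝ) (w : Fin n → ZMod p) (L : ℝ)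
    (hg : ∀ ξ, |g ξ| ≤ L) : corr g w ≤ L ^ 2 * (p : ℝ) ^ (n + 1) := by
  have : ∀ t : ZMod p, ∀ ξ : Fin n → ZMod p, g ξ * g (ξ + t • w) ≤ L ^ 2 := by
    intro t ξ
    refine (le_abs_self _).trans ?_
    rw [abs_mul, sq]
    exact mul_le_mul (hg _) (hg _) (abs_nonneg _) ((abs_nonneg _).trans (hg 0))
  refine (Finset.sum_le_sum fun t _ => Finset.sum_le_sum fun ξ _ => this t ξ).trans ?_
  simp only [Finset.sum_const, Finset.card_univ, nsmul_eq_mul, Fintype.card_fun, ZMod.card, Fintype.card_fin]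
  push_cast
  rw [pow_succ]
  apply le_of_eq; ring

open Classical in
lemma corr_good {p n : ℕ} [NeZero p] (hn : 1 ≤ n) (g : (Fin n → ZMod p) → ℝ) (w : Fin n → ZMod p) (L C K : ℝ)
    (hg : ∀ ξ, |g ξ| ≤ L) (bad : Finset (Fin n → ZMod p)) (hK : (bad.card : ℝ) ≤ K * (p : ℝ) ^ (n - 1))
    (hC : ∀ ξ, ξ ∉ bad → |∑ t : ZMod p, g (ξ + t • w)| ≤ C * √p) :
    corr g w ≤ (C ^ 2 + K * L ^ 2) * (p : ℝ) ^ n := by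
  have hp : (0 : ℝ) < p := by exact_mod_cast Nat.pos_of_ne_zero (NeZero.ne p)
  refine le_of_mul_le_mul_left ?_ hp
  rw [corr_eq]
  have hL : 0 ≤ L := (abs_nonneg _).trans (hg 0)
  have hpt : ∀ ξ : Fin n → ZMod p, (∑ t : ZMod p, g (ξ + t • w)) ^ 2 ≤
      C ^ 2 * p + if ξ ∈ bad then L ^ 2 * p ^ 2 else 0 := by
    intro ξ
    split_ifs with hξ
    · have : |∑ t : ZMod p, g (ξ + t • w)| ≤ L * p := by
        refine (Finset.abs_sum_le_sum_abs _ _).trans ?_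
        refine (Finset.sum_le_sum fun t _ => hg _).trans ?_
        simp [ZMod.card, mul_comm]
      have h2 := pow_le_pow_left₀ (abs_nonneg _) this 2
      rw [sq_abs] at h2
      nlinarith [mul_nonneg (sq_nonneg C) hp.le]
    · have h2 := pow_le_pow_left₀ (abs_nonneg _) (hC ξ hξ) 2
      rw [sq_abs, mul_pow, Real.sq_sqrt hp.le] at h2
      linarith
  refine (Finset.sum_le_sum fun ξ _ => hpt ξ).trans ?_
  rw [Finset.sum_add_distrib, ← Finset.sum_filter, Finset.filter_mem_eq_inter, Finset.univ_inter]
  simp only [Finset.sum_const, Finset.card_univ, nsmul_eq_mul, Fintype.card_fun, ZMod.card, Fintype.card_fin]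
  push_cast
  obtain ⟨m, rfl⟩ : ∃ m, n = m + 1 := ⟨n - 1, by omega⟩
  simp only [Nat.add_sub_cancel] at hK
  have := mul_le_mul_of_nonneg_right hK (by positivity : 0 ≤ L ^ 2 * (p : ℝ) ^ 2)
  calc _ ≤ (p : ℝ) ^ (m + 1) * (C ^ 2 * p) + K * (p : ℝ) ^ m * (L ^ 2 * (p : ℝ) ^ 2) := by linarith
    _ = _ := by ring

lemma corr_expand {p n : ℕ} [NeZero p] (g : (Fin n → ZMod p) → ℝ) {ι : Type*} (T : Finset ι)
    (v : ι → (Fin n → ZMod p)) :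
    ∑ t : ZMod p, ∑ ξ : Fin n → ZMod p, (∑ z ∈ T, g (ξ + t • v z)) ^ 2 =
      ∑ z ∈ T, ∑ z' ∈ T, corr g (v z' - v z) := by
  have : ∀ z z', corr g (v z' - v z) = ∑ t : ZMod p, ∑ ξ : Fin n → ZMod p,
      g (ξ + t • v z) * g (ξ + t • v z') := by
    intro z z'
    rw [corr]
    refine Finset.sum_congr rfl fun t _ => ?_
    rw [← Equiv.sum_comp (Equiv.addRight (t • v z))]
    refine Finset.sum_congr rfl fun ξ _ => ?_
    simp only [Equiv.coe_addRight]
    congr 2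
    rw [smul_sub]; abel
  simp_rw [this, sq, Finset.sum_mul_sum]
  rw [← Finset.sum_product' (s := (Finset.univ : Finset (ZMod p))) (t := (Finset.univ : Finset (Fin n → ZMod p))) (f := fun t ξ => ∑ i ∈ T, ∑ j ∈ T, g (ξ + t • v i) * g (ξ + t • v j))]
  simp_rw [← Finset.sum_product' (s := (Finset.univ : Finset (ZMod p))) (t := (Finset.univ : Finset (Fin n → ZMod p))) (f := fun t ξ => g (ξ + t • v _) * g (ξ + t • v _))]
  rw [Finset.sum_comm]
  refine Finset.sum_congr rfl fun z _ => ?_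
  rw [Finset.sum_comm]

/-- the function on residues -/
def gp {n : ℕ} (p l : ℕ) (H : MvPolynomial (Fin n) ℤ) (ξ : Fin n → ZMod p) : ℝ :=
  gch p l (MvPolynomial.aeval ξ H)

/-- box of natural vectors -/
def nbox (n Z : ℕ) : Finset (Fin n → ℕ) := Fintype.piFinset fun _ => Finset.range Z

/-- box of integer vectors -/
def zbox (n Z : ℕ) : Finset (Fin n → ℤ) := Fintype.piFinset fun _ => Finset.Icc (-(Z : ℤ)) Z

lemma nbox_card (n Z : ℕ) : (nbox n Z).card = Z ^ n := by simp [nbox]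

lemma zbox_card (n Z : ℕ) : (zbox n Z).card = (2 * Z + 1) ^ n := by
  simp only [zbox, Fintype.card_piFinset, Int.card_Icc, Finset.prod_const, Finset.card_univ, Fintype.card_fin]
  congr 1; omega

/-- partial sums over the lower box of `a` -/
def GG {n : ℕ} (p l Z : ℕ) (H : MvPolynomial (Fin n) ℤ) (a : Fin n → ℕ) (t : ZMod p)
    (ξ : Fin n → ZMod p) : ℝ :=
  ∑ z ∈ (nbox n Z).filter (fun z => ∀ i, z i ≤ a i), gp p l H (ξ + t • fun i => ((z i : ℕ) : ZMod p))

lemma gp_line {n : ℕ} (p l : ℕ) (H : MvPolynomial (Fin n) ℤ) (w : Fin n → ℤ) (ξ : Fin n → ZMod p)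
    (t : ZMod p) : gp p l H (ξ + t • fun i => ((w i : ℤ) : ZMod p)) = gch p l ((lineP H w ξ).eval t) := by
  rw [lineP_eval, gp]
  congr 2
  have : (ξ + t • fun i => ((w i : ℤ) : ZMod p)) = fun i => ξ i + (w i : ZMod p) * t := by
    funext i; simp [mul_comm]
  rw [this]

set_option maxHeartbeats 1000000 in
theorem line_bound (n l D : ℕ) (hn : 1 ≤ n) (hl : l.Prime) : ∃ C : ℝ, 0 < C ∧ ∃ c1 c2 : ℕ,
    ∀ (H : MvPolynomial (Fin n) ℤ), Irreducible (MvPolynomial.map (Int.castRingHom ℚ) H) →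
    H.totalDegree ≤ D → ∀ N : ℕ, (∀ m, |H.coeff m| ≤ N) →
    (∀ w, w ≠ 0 → 1 ≤ (Fw H w).natDegree) → ∀ Z : ℕ, 1 ≤ Z →
    ∃ m : (Fin n → ℤ) → ℤ, (∀ w ∈ zbox n Z, w ≠ 0 → m w ≠ 0 ∧ |m w| ≤ c1 * ((N + 1) * (Z + 1)) ^ c2) ∧
    ∀ (p : ℕ) [Fact p.Prime], l ∣ p - 1 → ∀ a : Fin n → ℕ,
      ∑ t : ZMod p, ∑ ξ : Fin n → ZMod p, (GG p l Z H a t ξ) ^ 2 ≤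
        C * ((Z : ℝ) ^ (2 * n) * (p : ℝ) ^ n + (p : ℝ) ^ (n + 1) * (Z : ℝ) ^ n *
          (1 + (((zbox n Z).filter fun w => w ≠ 0 ∧ (p : ℤ) ∣ m w).card : ℝ))) := by
  classical
  obtain ⟨K, c1, c2, hgood⟩ := good_w n D hn
  obtain ⟨Cw, hCw, hweil⟩ := weil_bound l D hl
  refine ⟨Cw ^ 2 + K * l ^ 2 + l ^ 2, by positivity, c1, c2, ?_⟩
  intro H hH hD N hN hnd Z hZ
  have hex : ∀ w : Fin n → ℤ, ∃ mw : ℤ, w ∈ zbox n Z → w ≠ 0 → (mw ≠ 0 ∧ |mw| ≤ c1 * ((N + 1) * (Z + 1)) ^ c2 ∧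
    ∀ (p : ℕ) [Fact p.Prime], ¬ (p : ℤ) ∣ mw → 
      (Finset.univ.filter fun ξ : Fin n → ZMod p => ¬ (IsCoprime (lineP H w ξ)
        (derivative (lineP H w ξ)) ∧ 1 ≤ (lineP H w ξ).natDegree ∧
      (lineP H w ξ).natDegree ≤ D)).card ≤ K * p ^ (n - 1)) := by
    intro w
    by_cases h : w ∈ zbox n Z ∧ w ≠ 0
    · obtain ⟨mw, h1⟩ := hgood H hH hD N hN w Z hZ (by
        intro i
        have := h.1
        rw [zbox, Fintype.mem_piFinset] at this
        have := Finset.mem_Icc.1 (this i)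
        exact abs_le.2 this) (hnd w h.2)
      exact ⟨mw, fun _ _ => h1⟩
    · exact ⟨0, fun h1 h2 => absurd ⟨h1, h2⟩ h⟩
  choose m hm using hex
  refine ⟨m, fun w h1 h2 => ⟨(hm w h1 h2).1, (hm w h1 h2).2.1⟩, ?_⟩
  intro p _ hlp a
  have hL : ∀ ξ : Fin n → ZMod p, |gp p l H ξ| ≤ l := fun ξ => gch_abs_le p l hl.one_lt.le _
  have htriv : ∀ w : Fin n → ZMod p, corr (gp p l H) w ≤ (l : ℝ) ^ 2 * (p : ℝ) ^ (n + 1) :=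
    fun w => corr_trivial _ _ _ hL
  have hgd : ∀ w ∈ zbox n Z, w ≠ 0 → ¬ (p : ℤ) ∣ m w →
      corr (gp p l H) (fun i => ((w i : ℤ) : ZMod p)) ≤ (Cw ^ 2 + K * l ^ 2) * (p : ℝ) ^ n := by
    intro w h1 h2 h3
    refine corr_good hn _ _ l Cw K hL _ (by exact_mod_cast (hm w h1 h2).2.2 p h3) ?_
    intro ξ hξ
    simp only [Finset.mem_filter, Finset.mem_univ, true_and, not_not] at hξ
    simp_rw [gp_line]
    exact hweil p hlp _ hξ.1 hξ.2.1 hξ.2.2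
  simp only [GG]
  rw [corr_expand]
  set T := (nbox n Z).filter (fun z => ∀ i, z i ≤ a i)
  have hTs : T ⊆ nbox n Z := Finset.filter_subset _ _
  have hTc : (T.card : ℝ) ≤ (Z : ℝ) ^ n := by
    have := Finset.card_le_card hTs
    rw [nbox_card] at this; exact_mod_cast this
  set Bd := (zbox n Z).filter fun w => w ≠ 0 ∧ (p : ℤ) ∣ m w with hBd
  set wd : (Fin n → ℕ) → (Fin n → ℕ) → (Fin n → ℤ) := fun z z' i => (z' i : ℤ) - z i with hwd
  have hterm : ∀ z ∈ T, ∀ z' ∈ T, corr (gp p l H) ((fun i => ((z' i : ℕ) : ZMod p)) - fun i => ((z i : ℕ) : ZMod p))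
      ≤ (Cw ^ 2 + K * l ^ 2) * (p : ℝ) ^ n + (if wd z z' ∈ insert 0 Bd then (l : ℝ) ^ 2 * (p : ℝ) ^ (n + 1) else 0) := by
    intro z hz z' hz'
    have e : ((fun i => ((z' i : ℕ) : ZMod p)) - fun i => ((z i : ℕ) : ZMod p)) = fun i => ((wd z z' i : ℤ) : ZMod p) := by
      funext i; simp [hwd]
    rw [e]
    split_ifs with h
    · have := htriv fun i => ((wd z z' i : ℤ) : ZMod p)
      have h0 : 0 ≤ (Cw ^ 2 + K * l ^ 2) * (p : ℝ) ^ n := by positivity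
      linarith
    · rw [Finset.mem_insert, not_or] at h
      rw [add_zero]
      have hmem : wd z z' ∈ zbox n Z := by
        rw [zbox, Fintype.mem_piFinset]
        intro i
        have h1 := hTs hz
        have h2 := hTs hz'
        rw [nbox, Fintype.mem_piFinset] at h1 h2
        have h1 := Finset.mem_range.1 (h1 i)
        have h2 := Finset.mem_range.1 (h2 i)
        rw [Finset.mem_Icc]; simp only [hwd]; omega
      refine hgd _ hmem h.1 fun hd => h.2 ?_
      rw [hBd, Finset.mem_filter]
      exact ⟨hmem, h.1, hd⟩
  have hcount : ∀ z ∈ T, ∑ z' ∈ T, (if wd z z' ∈ insert 0 Bd then (l : ℝ) ^ 2 * (p : ℝ) ^ (n + 1) else 0)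
      ≤ (1 + (Bd.card : ℝ)) * ((l : ℝ) ^ 2 * (p : ℝ) ^ (n + 1)) := by
    intro z _
    rw [← Finset.sum_filter, Finset.sum_const, nsmul_eq_mul]
    refine mul_le_mul_of_nonneg_right ?_ (by positivity)
    have h1 : (T.filter fun z' => wd z z' ∈ insert 0 Bd).card ≤ (insert 0 Bd).card := by
      refine Finset.card_le_card_of_injOn (fun z' => wd z z') ?_ ?_
      · intro z' hz'
        exact (Finset.mem_filter.1 (Finset.mem_coe.1 hz')).2
      · intro x _ y _ hxy
        funext i
        have := congrFun hxy i
        simp only [hwd] at this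
        omega
    have h2 := h1.trans (Finset.card_insert_le _ _)
    have : (((T.filter fun z' => wd z z' ∈ insert 0 Bd).card : ℕ) : ℝ) ≤ ((Bd.card + 1 : ℕ) : ℝ) := by exact_mod_cast h2
    push_cast at this; linarith
  have hmain : ∑ z ∈ T, ∑ z' ∈ T, corr (gp p l H) ((fun i => ((z' i : ℕ) : ZMod p)) - fun i => ((z i : ℕ) : ZMod p))
      ≤ ∑ z ∈ T, (T.card * ((Cw ^ 2 + K * l ^ 2) * (p : ℝ) ^ n) + (1 + (Bd.card : ℝ)) * ((l : ℝ) ^ 2 * (p : ℝ) ^ (n + 1))) := by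
    refine Finset.sum_le_sum fun z hz => ?_
    refine (Finset.sum_le_sum fun z' hz' => hterm z hz z' hz').trans ?_
    rw [Finset.sum_add_distrib, Finset.sum_const, nsmul_eq_mul]
    have := hcount z hz
    linarith
  refine hmain.trans ?_
  rw [Finset.sum_const, nsmul_eq_mul]
  have hT0 : (0 : ℝ) ≤ T.card := by positivity
  set u : ℝ := Cw ^ 2 + K * l ^ 2 with hu
  have hu0 : 0 ≤ u := by positivity
  set b : ℝ := 1 + (Bd.card : ℝ) with hb
  have hb0 : 0 ≤ b := by positivity
  calc (T.card : ℝ) * (T.card * (u * (p : ℝ) ^ n) + b * ((l : ℝ) ^ 2 * (p : ℝ) ^ (n + 1)))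
      ≤ (Z : ℝ) ^ n * ((Z : ℝ) ^ n * (u * (p : ℝ) ^ n) + b * ((l : ℝ) ^ 2 * (p : ℝ) ^ (n + 1))) := by gcongr
    _ = u * ((Z : ℝ) ^ (2 * n) * (p : ℝ) ^ n) + (l : ℝ) ^ 2 * ((p : ℝ) ^ (n + 1) * (Z : ℝ) ^ n * b) := by
      rw [two_mul n, pow_add]; ring
    _ ≤ (u + (l : ℝ) ^ 2) * ((Z : ℝ) ^ (2 * n) * (p : ℝ) ^ n) + (u + (l : ℝ) ^ 2) * ((p : ℝ) ^ (n + 1) * (Z : ℝ) ^ n * b) := by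
      gcongr
      · nlinarith [sq_nonneg (l : ℝ)]
      · linarith
    _ = _ := by ring

/-- a suitable smooth weight -/
structure Wt (φ : ℝ → ℝ) (c : ℝ) : Prop where
  nonneg : ∀ x, 0 ≤ φ x
  le_one : ∀ x, φ x ≤ 1
  one_on : ∀ x, |x| ≤ 1 → φ x = 1
  supp : ∀ x, 2 ≤ |x| → φ x = 0
  hc : 1 ≤ c
  lip : ∀ u s, |φ u - φ (u + s)| ≤ c * |s|
  mix : ∀ u s t, |φ u - φ (u + s) - φ (u + t) + φ (u + s + t)| ≤ c * |s| * |t|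

lemma exists_Wt : ∃ φ c, Wt φ c := by
  let b : ContDiffBump (0 : ℝ) := ⟨1, 2, by norm_num, by norm_num⟩
  have hcd : ContDiff ℝ 2 (b : ℝ → ℝ) := b.contDiff
  have hd : Differentiable ℝ (b : ℝ → ℝ) := hcd.differentiable (by norm_num)
  have hcs : HasCompactSupport (b : ℝ → ℝ) := b.hasCompactSupport
  have hcd1 : ContDiff ℝ 1 (deriv (b : ℝ → ℝ)) := by
    exact (contDiff_succ_iff_deriv (n := 1).1 hcd).2.2
  obtain ⟨c1, h1⟩ := ContDiff.lipschitzWith_of_hasCompactSupport hcs hcd (by norm_num)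
  obtain ⟨c2, h2⟩ := ContDiff.lipschitzWith_of_hasCompactSupport hcs.deriv hcd1 (by norm_num)
  refine ⟨b, 1 + c1 + c2, ?_, ?_, ?_, ?_, ?_, ?_, ?_⟩
  · intro x; exact b.nonneg
  · intro x; exact b.le_one
  · intro x hx; exact b.one_of_mem_closedBall (by simpa using hx)
  · intro x hx; exact b.zero_of_le_dist (by simpa using hx)
  · have := c1.coe_nonneg; have := c2.coe_nonneg; linarith
  · intro u s
    have := h1.dist_le_mul u (u + s)
    rw [Real.dist_eq, Real.dist_eq] at this
    have e : |u - (u + s)| = |s| := by rw [show u - (u + s) = -s by ring, abs_neg]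
    rw [e] at this
    refine this.trans ?_
    refine mul_le_mul_of_nonneg_right ?_ (abs_nonneg _)
    have := c2.coe_nonneg; linarith
  · intro u s t
    set h : ℝ → ℝ := fun y => b y - b (y + t) with hh
    have hder : ∀ y, HasDerivAt h (deriv b y - deriv b (y + t)) y := by
      intro y
      refine (hd y).hasDerivAt.sub ?_
      have := ((hd (y + t)).hasDerivAt).comp_add_const y t
      exact this
    have hb : ∀ y, ‖deriv b y - deriv b (y + t)‖ ≤ c2 * |t| := by
      intro y
      have := h2.dist_le_mul y (y + t)
      rw [Real.dist_eq, Real.dist_eq] at this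
      have e : |y - (y + t)| = |t| := by rw [show y - (y + t) = -t by ring, abs_neg]
      rw [e] at this
      exact this
    have := Convex.norm_image_sub_le_of_norm_hasDerivWithin_le (s := Set.univ) (f := h)
      (f' := fun y => deriv b y - deriv b (y + t)) (C := c2 * |t|) (x := u + s) (y := u)
      (fun y _ => (hder y).hasDerivWithinAt) (fun y _ => hb y) convex_univ trivial trivial
    rw [Real.norm_eq_abs, Real.norm_eq_abs] at this
    have e : |u - (u + s)| = |s| := by rw [show u - (u + s) = -s by ring, abs_neg]
    rw [e] at this
    have e2 : h u - h (u + s) = b u - b (u + s) - b (u + t) + b (u + s + t) := by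
      simp only [hh]; ring
    rw [e2] at this
    refine this.trans ?_
    rw [mul_right_comm]
    have h0 := c1.coe_nonneg
    have : (0:ℝ) ≤ |s| * |t| := by positivity
    nlinarith

lemma telesc (h : ℕ → ℝ) (Z : ℕ) (hZ : h Z = 0) (z : ℕ) (hz : z ≤ Z) :
    ∑ a ∈ Finset.range Z, (if z ≤ a then h a - h (a + 1) else 0) = h z := by
  have : ∀ k, ∑ a ∈ Finset.range (z + k), (if z ≤ a then h a - h (a + 1) else 0) = h z - h (z + k) := by
    intro k
    induction k with
    | zero =>
      rw [Finset.sum_eq_zero]; · simp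
      intro a ha; rw [if_neg]; simp at ha; omega
    | succ k ih => rw [← add_assoc, Finset.sum_range_succ, ih]; simp [add_assoc]
  have h2 := this (Z - z)
  rw [Nat.add_sub_cancel' hz, hZ, sub_zero] at h2
  exact h2

/-- cut-off -/
def cut (Z : ℕ) (f : ℕ → ℕ → ℝ) (a b : ℕ) : ℝ := if a < Z ∧ b < Z then f a b else 0

/-- mixed difference of the cut-off -/
def mdiff (Z : ℕ) (f : ℕ → ℕ → ℝ) (a b : ℕ) : ℝ :=
  (cut Z f a b - cut Z f a (b + 1)) - (cut Z f (a + 1) b - cut Z f (a + 1) (b + 1))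

lemma abel2 (Z : ℕ) (f : ℕ → ℕ → ℝ) (z z' : ℕ) (hz : z < Z) (hz' : z' < Z) :
    f z z' = ∑ α ∈ Finset.range Z ×ˢ Finset.range Z,
      (if z ≤ α.1 then 1 else 0) * (if z' ≤ α.2 then 1 else 0) * mdiff Z f α.1 α.2 := by
  rw [Finset.sum_product_right]
  have h1 : ∀ b ∈ Finset.range Z, ∑ a ∈ Finset.range Z, (if z ≤ a then 1 else 0) * (if z' ≤ b then 1 else 0) * mdiff Z f a b
      = if z' ≤ b then cut Z f z b - cut Z f z (b + 1) else 0 := by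
    intro b _
    split_ifs with hb
    · have := telesc (fun a => cut Z f a b - cut Z f a (b + 1)) Z (by simp [cut]) z hz.le
      rw [← this]
      refine Finset.sum_congr rfl fun a _ => ?_
      split_ifs <;> simp [mdiff]
    · simp
  rw [Finset.sum_congr rfl h1, telesc (fun b => cut Z f z b) Z (by simp [cut]) z' hz'.le]
  simp [cut, hz, hz']

/-- Abel weights -/
def mwt (Z a : ℕ) : ℝ := if a + 1 < Z then 1 / Z else 1

lemma mwt_nonneg (Z a : ℕ) : 0 ≤ mwt Z a := by unfold mwt; split_ifs <;> positivity

lemma mwt_sum (Z : ℕ) (hZ : 1 ≤ Z) : ∑ a ∈ Finset.range Z, mwt Z a ≤ 2 := by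
  have h : ∀ a ∈ Finset.range Z, mwt Z a ≤ 1 / (Z : ℝ) + if a = Z - 1 then 1 else 0 := by
    intro a ha
    rw [Finset.mem_range] at ha
    unfold mwt
    split_ifs with h1 h2 h2
    · linarith
    · linarith
    · have : (0:ℝ) ≤ 1 / Z := by positivity
      linarith
    · omega
  refine (Finset.sum_le_sum h).trans ?_
  rw [Finset.sum_add_distrib, Finset.sum_const, Finset.card_range, nsmul_eq_mul, Finset.sum_ite_eq']
  have : (Z : ℝ) ≠ 0 := by positivity
  rw [mul_one_div_cancel this]
  split_ifs <;> norm_num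

lemma mdiff_bound {φ : ℝ → ℝ} {c : ℝ} (h : Wt φ c) (Z p q : ℕ) (B : ℝ) (hB : 0 < B) (hZ : 1 ≤ Z)
    (hp : (p : ℝ) * Z ≤ B) (hq : (q : ℝ) * Z ≤ B) (x : ℝ) (a b : ℕ) (ha : a < Z) (hb : b < Z) :
    |mdiff Z (fun a b => φ ((x + q * a + p * b) / B)) a b| ≤ c * (mwt Z a * mwt Z b) := by
  have hZ0 : (0 : ℝ) < Z := by exact_mod_cast hZ
  have hp' : (p : ℝ) / B ≤ 1 / Z := by rw [div_le_div_iff₀ hB hZ0]; linarith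
  have hq' : (q : ℝ) / B ≤ 1 / Z := by rw [div_le_div_iff₀ hB hZ0]; linarith
  have hp0 : |(p : ℝ) / B| = p / B := abs_of_nonneg (by positivity)
  have hq0 : |(q : ℝ) / B| = q / B := abs_of_nonneg (by positivity)
  have hc := h.hc
  set u := (x + q * a + p * b) / B with hu
  have e1 : (x + q * ((a + 1 : ℕ) : ℝ) + p * b) / B = u + q / B := by rw [hu]; push_cast; field_simp; ring
  have e2 : (x + q * a + p * ((b + 1 : ℕ) : ℝ)) / B = u + p / B := by rw [hu]; push_cast; field_simp; ring
  have e3 : (x + q * ((a + 1 : ℕ) : ℝ) + p * ((b + 1 : ℕ) : ℝ)) / B = u + q / B + p / B := by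
    rw [hu]; push_cast; field_simp; ring
  unfold mdiff cut mwt
  simp only [e1, e2, e3, ha, hb, true_and, and_true, if_true]
  rw [← hu]
  by_cases h1 : a + 1 < Z <;> by_cases h2 : b + 1 < Z <;> simp only [h1, h2, if_true, if_false, and_true, and_false, true_and, and_self, sub_zero, sub_self]
  · have := h.mix u (q / B) (p / B)
    rw [hp0, hq0] at this
    calc _ = |φ u - φ (u + q / B) - φ (u + p / B) + φ (u + q / B + p / B)| := by congr 1; ring
      _ ≤ _ := this
      _ ≤ c * (1 / Z) * (1 / Z) := by gcongr
      _ = _ := by ring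
  · have := h.lip u (q / B)
    rw [hq0] at this
    calc _ ≤ _ := this
      _ ≤ c * (1 / Z) := by gcongr
      _ = _ := by ring
  · have := h.lip u (p / B)
    rw [hp0] at this
    calc _ ≤ _ := this
      _ ≤ c * (1 / Z) := by gcongr
      _ = _ := by ring
  · rw [abs_of_nonneg (h.nonneg u)]
    have := h.le_one u; linarith

/-- smooth weight on integer points -/
def Wgt {n : ℕ} (φ : ℝ → ℝ) (B : ℝ) (x : Fin n → ℤ) : ℝ := ∏ i, φ ((x i : ℝ) / B)

/-- reduction mod p -/
def castV {n : ℕ} (p : ℕ) (x : Fin n → ℤ) : Fin n → ZMod p := fun i => (x i : ZMod p)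

/-- index set for the Abel summation -/
def abox (n Z : ℕ) : Finset (Fin n → ℕ × ℕ) :=
  Fintype.piFinset fun _ => Finset.range Z ×ˢ Finset.range Z

/-- product Abel weight -/
def awt {n : ℕ} (Z : ℕ) (α : Fin n → ℕ × ℕ) : ℝ := ∏ i, (mwt Z (α i).1 * mwt Z (α i).2)

lemma awt_nonneg {n : ℕ} (Z : ℕ) (α : Fin n → ℕ × ℕ) : 0 ≤ awt Z α :=
  Finset.prod_nonneg fun i _ => mul_nonneg (mwt_nonneg _ _) (mwt_nonneg _ _)

lemma awt_sum (n Z : ℕ) (hZ : 1 ≤ Z) : ∑ α ∈ abox n Z, awt Z α ≤ 4 ^ n := by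
  unfold abox awt
  rw [Finset.sum_prod_piFinset (Finset.range Z ×ˢ Finset.range Z) (fun _ b => mwt Z b.1 * mwt Z b.2)]
  rw [Finset.prod_const, Finset.card_univ, Fintype.card_fin]
  have h0 : 0 ≤ ∑ a ∈ Finset.range Z, mwt Z a := Finset.sum_nonneg fun a _ => mwt_nonneg _ _
  rw [Finset.sum_product, ← Finset.sum_mul_sum]
  refine pow_le_pow_left₀ (mul_nonneg h0 h0) ?_ n
  have := mwt_sum Z hZ
  nlinarith

lemma filt_sum {n : ℕ} (Z : ℕ) (a : Fin n → ℕ) (A : (Fin n → ℕ) → ℝ) :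
    ∑ z ∈ nbox n Z, (∏ i, (if z i ≤ a i then (1 : ℝ) else 0)) * A z =
      ∑ z ∈ (nbox n Z).filter (fun z => ∀ i, z i ≤ a i), A z := by
  rw [Finset.sum_filter]
  refine Finset.sum_congr rfl fun z _ => ?_
  rw [Finset.prod_boole]
  simp only [Finset.mem_univ, true_implies]
  split_ifs <;> simp

lemma pair_pointwise {φ : ℝ → ℝ} {c : ℝ} (h : Wt φ c) {n : ℕ} (Z p q l : ℕ) (B : ℝ) (hB : 0 < B)
    (hZ : 1 ≤ Z) (hp : (p : ℝ) * Z ≤ B) (hq : (q : ℝ) * Z ≤ B) (H : MvPolynomial (Fin n) ℤ)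
    (x : Fin n → ℤ) :
    ∑ z ∈ nbox n Z, ∑ z' ∈ nbox n Z, Wgt φ B (fun i => x i + q * z i + p * z' i) *
      (gp p l H (castV p x + (q : ZMod p) • fun i => ((z i : ℕ) : ZMod p)) *
       gp q l H (castV q x + (p : ZMod q) • fun i => ((z' i : ℕ) : ZMod q))) ≤
    c ^ n * ∑ α ∈ abox n Z, awt Z α * (((GG p l Z H (fun i => (α i).1) q (castV p x)) ^ 2 +
      (GG q l Z H (fun i => (α i).2) p (castV q x)) ^ 2) / 2) := by
  set A : (Fin n → ℕ) → ℝ := fun z => gp p l H (castV p x + (q : ZMod p) • fun i => ((z i : ℕ) : ZMod p)) with hA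
  set A' : (Fin n → ℕ) → ℝ := fun z' => gp q l H (castV q x + (p : ZMod q) • fun i => ((z' i : ℕ) : ZMod q)) with hA'
  set f : Fin n → ℕ → ℕ → ℝ := fun i a b => φ (((x i : ℝ) + q * a + p * b) / B) with hf
  have hW : ∀ z ∈ nbox n Z, ∀ z' ∈ nbox n Z, Wgt φ B (fun i => x i + q * z i + p * z' i) =
      ∑ α ∈ abox n Z, (∏ i, (if z i ≤ (α i).1 then (1 : ℝ) else 0)) *
        (∏ i, (if z' i ≤ (α i).2 then (1 : ℝ) else 0)) * ∏ i, mdiff Z (f i) (α i).1 (α i).2 := by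
    intro z hz z' hz'
    rw [nbox, Fintype.mem_piFinset] at hz hz'
    have : Wgt φ B (fun i => x i + q * z i + p * z' i) = ∏ i, f i (z i) (z' i) := by
      unfold Wgt
      refine Finset.prod_congr rfl fun i _ => ?_
      simp only [hf]; push_cast; rfl
    rw [this, Finset.prod_congr rfl fun i _ => abel2 Z (f i) (z i) (z' i) (Finset.mem_range.1 (hz i)) (Finset.mem_range.1 (hz' i))]
    rw [Finset.prod_univ_sum]
    refine Finset.sum_congr rfl fun α _ => ?_
    rw [Finset.prod_mul_distrib, Finset.prod_mul_distrib]
  have h1 : ∑ z ∈ nbox n Z, ∑ z' ∈ nbox n Z, Wgt φ B (fun i => x i + q * z i + p * z' i) * (A z * A' z')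
      = ∑ α ∈ abox n Z, (∏ i, mdiff Z (f i) (α i).1 (α i).2) *
        (GG p l Z H (fun i => (α i).1) q (castV p x) * GG q l Z H (fun i => (α i).2) p (castV q x)) := by
    have e1 : ∀ α : Fin n → ℕ × ℕ, GG p l Z H (fun i => (α i).1) q (castV p x) * GG q l Z H (fun i => (α i).2) p (castV q x)
        = ∑ z ∈ nbox n Z, ∑ z' ∈ nbox n Z, ((∏ i, (if z i ≤ (α i).1 then (1 : ℝ) else 0)) * A z) *
          ((∏ i, (if z' i ≤ (α i).2 then (1 : ℝ) else 0)) * A' z') := by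
      intro α
      rw [← Finset.sum_mul_sum, filt_sum, filt_sum]; rfl
    simp_rw [e1, Finset.mul_sum]
    symm
    rw [Finset.sum_comm]
    refine Finset.sum_congr rfl fun z hz => ?_
    rw [Finset.sum_comm]
    refine Finset.sum_congr rfl fun z' hz' => ?_
    symm
    rw [hW z hz z' hz', Finset.sum_mul]
    refine Finset.sum_congr rfl fun α _ => ?_
    ring
  rw [h1, Finset.mul_sum]
  refine Finset.sum_le_sum fun α hα => ?_
  have hD : |∏ i, mdiff Z (f i) (α i).1 (α i).2| ≤ c ^ n * awt Z α := by
    rw [Finset.abs_prod]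
    have : c ^ n * awt Z α = ∏ i, (c * (mwt Z (α i).1 * mwt Z (α i).2)) := by
      rw [Finset.prod_mul_distrib]; simp [awt]
    rw [this]
    refine Finset.prod_le_prod (fun i _ => abs_nonneg _) fun i _ => ?_
    rw [abox, Fintype.mem_piFinset] at hα
    have := Finset.mem_product.1 (hα i)
    exact mdiff_bound h Z p q B hB hZ hp hq _ _ _ (Finset.mem_range.1 this.1) (Finset.mem_range.1 this.2)
  set g1 := GG p l Z H (fun i => (α i).1) q (castV p x)
  set g2 := GG q l Z H (fun i => (α i).2) p (castV q x)
  calc _ ≤ |∏ i, mdiff Z (f i) (α i).1 (α i).2| * |g1 * g2| := by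
        rw [← abs_mul]; exact le_abs_self _
    _ ≤ (c ^ n * awt Z α) * ((g1 ^ 2 + g2 ^ 2) / 2) := by
      have hc := h.hc
      have := awt_nonneg Z α
      refine mul_le_mul hD ?_ (abs_nonneg _) (by positivity)
      rw [abs_le]; constructor <;> nlinarith [sq_nonneg (g1 + g2), sq_nonneg (g1 - g2)]
    _ = _ := by ring

lemma Wgt_supp {φ : ℝ → ℝ} {c : ℝ} (h : Wt φ c) {n : ℕ} (B : ℝ) (hB : 0 < B) (x : Fin n → ℤ)
    (hx : Wgt φ B x ≠ 0) (i : Fin n) : |(x i : ℝ)| < 2 * B := by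
  by_contra hcon
  apply hx
  refine Finset.prod_eq_zero (Finset.mem_univ i) (h.supp _ ?_)
  rw [abs_div, abs_of_pos hB, le_div_iff₀ hB]
  linarith

lemma shift_sum {n : ℕ} (M : ℕ) (F : (Fin n → ℤ) → ℝ) (v : Fin n → ℤ)
    (h1 : ∀ x, F x ≠ 0 → x ∈ zbox n M) (h2 : ∀ x, F x ≠ 0 → x - v ∈ zbox n M) :
    ∑ x ∈ zbox n M, F x = ∑ x ∈ zbox n M, F (x + v) := by
  rw [← finsum_eq_sum_of_support_subset F (s := zbox n M) (fun x hx => h1 x hx)]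
  rw [← finsum_eq_sum_of_support_subset (fun x => F (x + v)) (s := zbox n M)]
  · exact (finsum_comp_equiv (Equiv.addRight v)).symm
  · intro x hx
    have := h2 _ hx
    simpa using this

lemma pair_sum {φ : ℝ → ℝ} {c : ℝ} (h : Wt φ c) {n : ℕ} (Z p q l M : ℕ) (B : ℝ) (hB : 0 < B)
    (hM : 4 * B ≤ M)
    (hZ : 1 ≤ Z) (hp : (p : ℝ) * Z ≤ B) (hq : (q : ℝ) * Z ≤ B) (H : MvPolynomial (Fin n) ℤ) :
    (Z : ℝ) ^ (2 * n) * ∑ x ∈ zbox n M, Wgt φ B x * (gp p l H (castV p x) * gp q l H (castV q x)) ≤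
    c ^ n * ∑ α ∈ abox n Z, awt Z α * ((∑ x ∈ zbox n M, (GG p l Z H (fun i => (α i).1) q (castV p x)) ^ 2 +
      ∑ x ∈ zbox n M, (GG q l Z H (fun i => (α i).2) p (castV q x)) ^ 2) / 2) := by
  have h1 : ∀ z ∈ nbox n Z, ∀ z' ∈ nbox n Z,
      ∑ x ∈ zbox n M, Wgt φ B x * (gp p l H (castV p x) * gp q l H (castV q x)) =
      ∑ x ∈ zbox n M, Wgt φ B (fun i => x i + q * z i + p * z' i) *
      (gp p l H (castV p x + (q : ZMod p) • fun i => ((z i : ℕ) : ZMod p)) *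
       gp q l H (castV q x + (p : ZMod q) • fun i => ((z' i : ℕ) : ZMod q))) := by
    intro z hz z' hz'
    rw [nbox, Fintype.mem_piFinset] at hz hz'
    rw [shift_sum M _ (fun i => (q : ℤ) * z i + p * z' i)]
    · refine Finset.sum_congr rfl fun x _ => ?_
      congr 1
      · congr 1; funext i; simp [add_assoc]
      · congr 2
        · funext i; simp [castV]
        · funext i; simp [castV]
    · intro x hx
      have hx := left_ne_zero_of_mul hx
      rw [zbox, Fintype.mem_piFinset]
      intro i
      have := Wgt_supp h B hB x hx i
      rw [Finset.mem_Icc, ← abs_le]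
      have h3 : |(x i : ℝ)| ≤ M := by linarith
      exact_mod_cast h3
    · intro x hx
      have hx := left_ne_zero_of_mul hx
      rw [zbox, Fintype.mem_piFinset]
      intro i
      have h4 := abs_lt.1 (Wgt_supp h B hB x hx i)
      have hz1 : (z i : ℝ) ≤ Z := by exact_mod_cast (Finset.mem_range.1 (hz i)).le
      have hz2 : (z' i : ℝ) ≤ Z := by exact_mod_cast (Finset.mem_range.1 (hz' i)).le
      have b1 : (q : ℝ) * z i ≤ B := (mul_le_mul_of_nonneg_left hz1 (by positivity)).trans hq
      have b2 : (p : ℝ) * z' i ≤ B := (mul_le_mul_of_nonneg_left hz2 (by positivity)).trans hp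
      have b3 : 0 ≤ (q : ℝ) * z i := by positivity
      have b4 : 0 ≤ (p : ℝ) * z' i := by positivity
      have h5 : -(M : ℝ) ≤ (x i : ℝ) - (q * z i + p * z' i) := by linarith
      have h6 : (x i : ℝ) - (q * z i + p * z' i) ≤ M := by linarith
      rw [Finset.mem_Icc, Pi.sub_apply]
      constructor
      · exact_mod_cast h5
      · exact_mod_cast h6
  have h2 : (Z : ℝ) ^ (2 * n) * ∑ x ∈ zbox n M, Wgt φ B x * (gp p l H (castV p x) * gp q l H (castV q x)) =
     ∑ z ∈ nbox n Z, ∑ z' ∈ nbox n Z, ∑ x ∈ zbox n M, Wgt φ B (fun i => x i + q * z i + p * z' i) *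
      (gp p l H (castV p x + (q : ZMod p) • fun i => ((z i : ℕ) : ZMod p)) *
       gp q l H (castV q x + (p : ZMod q) • fun i => ((z' i : ℕ) : ZMod q))) := by
    rw [Finset.sum_congr rfl fun z hz => Finset.sum_congr rfl fun z' hz' => (h1 z hz z' hz').symm]
    simp only [Finset.sum_const, nsmul_eq_mul, nbox_card]
    push_cast
    rw [two_mul, pow_add]; ring
  rw [h2]
  have h3 : ∑ z ∈ nbox n Z, ∑ z' ∈ nbox n Z, ∑ x ∈ zbox n M, Wgt φ B (fun i => x i + q * z i + p * z' i) *
      (gp p l H (castV p x + (q : ZMod p) • fun i => ((z i : ℕ) : ZMod p)) *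
       gp q l H (castV q x + (p : ZMod q) • fun i => ((z' i : ℕ) : ZMod q))) =
      ∑ x ∈ zbox n M, ∑ z ∈ nbox n Z, ∑ z' ∈ nbox n Z, Wgt φ B (fun i => x i + q * z i + p * z' i) *
      (gp p l H (castV p x + (q : ZMod p) • fun i => ((z i : ℕ) : ZMod p)) *
       gp q l H (castV q x + (p : ZMod q) • fun i => ((z' i : ℕ) : ZMod q))) := by
    symm
    rw [Finset.sum_comm]
    refine Finset.sum_congr rfl fun z _ => ?_
    exact Finset.sum_comm
  rw [h3]
  refine (Finset.sum_le_sum fun x _ => pair_pointwise h Z p q l B hB hZ hp hq H x).trans ?_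
  rw [← Finset.mul_sum, Finset.sum_comm]
  refine le_of_eq ?_
  congr 1
  refine Finset.sum_congr rfl fun α _ => ?_
  rw [← Finset.mul_sum, ← Finset.sum_div, Finset.sum_add_distrib]

lemma primes_dvd_card (S : Finset ℕ) (hS : ∀ p ∈ S, p.Prime) (m : ℤ) (hm : m ≠ 0) :
    (S.filter fun p : ℕ => (p : ℤ) ∣ m).card ≤ Nat.log 2 m.natAbs := by
  have hm' : m.natAbs ≠ 0 := Int.natAbs_ne_zero.2 hm
  have hsub : (S.filter fun p : ℕ => (p : ℤ) ∣ m) ⊆ m.natAbs.primeFactors := by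
    intro p hp
    rw [Finset.mem_filter] at hp
    exact Nat.mem_primeFactors.2 ⟨hS p hp.1, Int.natCast_dvd.1 hp.2, hm'⟩
  refine (Finset.card_le_card hsub).trans ?_
  apply Nat.le_log_of_pow_le (by norm_num)
  calc 2 ^ m.natAbs.primeFactors.card ≤ ∏ p ∈ m.natAbs.primeFactors, p :=
        Finset.pow_card_le_prod _ _ _ fun p hp => (Nat.prime_of_mem_primeFactors hp).two_le
    _ ≤ m.natAbs := Nat.le_of_dvd (Nat.pos_of_ne_zero hm') (Nat.prod_primeFactors_dvd _)

lemma int_fiber (p M : ℕ) (hp : 0 < p) (r : ZMod p) :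
    (((Finset.Icc (-(M : ℤ)) M).filter fun k : ℤ => (k : ZMod p) = r).card : ℝ)
      ≤ (2 * M + 1) / p + 1 := by
  have : NeZero p := ⟨hp.ne'⟩
  obtain ⟨v, rfl⟩ := ZMod.intCast_surjective r
  have h1 : ((Finset.Icc (-(M : ℤ)) M).filter fun k : ℤ => (k : ZMod p) = (v : ZMod p)) =
      (Finset.Ioc (-(M : ℤ) - 1) M).filter fun k : ℤ => k ≡ v [ZMOD p] := by
    ext k
    simp only [Finset.mem_filter, Finset.mem_Icc, Finset.mem_Ioc, ZMod.intCast_eq_intCast_iff]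
    constructor <;> rintro ⟨⟨h1, h2⟩, h3⟩ <;> exact ⟨⟨by omega, by omega⟩, h3⟩
  rw [h1]
  have h2 := Int.Ioc_filter_modEq_card (-(M : ℤ) - 1) M (r := (p : ℤ)) (by exact_mod_cast hp) v
  have h3 : ((((Finset.Ioc (-(M : ℤ) - 1) M).filter fun k : ℤ => k ≡ v [ZMOD p]).card : ℤ) : ℚ)
     ≤ (2 * M + 1) / p + 1 := by
    rw [h2]
    have hp' : (0 : ℚ) < p := by exact_mod_cast hp
    push_cast
    apply max_le
    · have a1 := Int.floor_le (((M : ℚ) - v) / p)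
      have a2 := Int.lt_floor_add_one ((-(M : ℚ) - 1 - v) / p)
      have a3 : ((M : ℚ) - v) / p - (-(M : ℚ) - 1 - v) / p = (2 * M + 1) / p := by field_simp; ring
      linarith
    · positivity
  have h4 : ((((((Finset.Ioc (-(M : ℤ) - 1) M).filter fun k : ℤ => k ≡ v [ZMOD p]).card : ℤ) : ℚ)) : ℝ)
     ≤ (((2 * M + 1) / p + 1 : ℚ) : ℝ) := by exact_mod_cast h3
  push_cast at h4
  exact h4

lemma vec_cover {n : ℕ} (p M : ℕ) [NeZero p] (K : ℝ) (hK : (2 * (M : ℝ) + 1) / p + 1 ≤ K)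
    (f : (Fin n → ZMod p) → ℝ) (hf : ∀ ξ, 0 ≤ f ξ) :
    ∑ x ∈ zbox n M, f (castV p x) ≤ K ^ n * ∑ ξ, f ξ := by
  rw [← Finset.sum_fiberwise (zbox n M) (castV p), Finset.mul_sum]
  refine Finset.sum_le_sum fun ξ _ => ?_
  have h1 : ∑ x ∈ (zbox n M).filter (fun x => castV p x = ξ), f (castV p x) =
      (((zbox n M).filter (fun x => castV p x = ξ)).card : ℝ) * f ξ := by
    rw [← nsmul_eq_mul, ← Finset.sum_const]
    refine Finset.sum_congr rfl fun x hx => ?_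
    rw [(Finset.mem_filter.1 hx).2]
  rw [h1]
  refine mul_le_mul_of_nonneg_right ?_ (hf ξ)
  have h2 : (zbox n M).filter (fun x => castV p x = ξ) =
      Fintype.piFinset fun i => (Finset.Icc (-(M : ℤ)) M).filter fun k : ℤ => (k : ZMod p) = ξ i := by
    ext x
    simp only [zbox, Finset.mem_filter, Fintype.mem_piFinset, castV, funext_iff]
    exact forall_and.symm
  rw [h2, Fintype.card_piFinset]
  push_cast
  calc _ ≤ ∏ _i : Fin n, K := Finset.prod_le_prod (fun i _ => by positivity) fun i _ =>
        (int_fiber p M (Nat.pos_of_ne_zero (NeZero.ne p)) (ξ i)).trans hK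
    _ = K ^ n := by simp

lemma nat_cover (p : ℕ) [NeZero p] (P : ℝ) (hP : 1 ≤ P) (hp : (p : ℝ) ≤ P) (S : Finset ℕ)
    (hS : ∀ q ∈ S, (q : ℝ) ≤ P) (f : ZMod p → ℝ) (hf : ∀ t, 0 ≤ f t) :
    ∑ q ∈ S, f (q : ZMod p) ≤ (4 * P / p) * ∑ t, f t := by
  rw [← Finset.sum_fiberwise S (fun q : ℕ => (q : ZMod p)), Finset.mul_sum]
  refine Finset.sum_le_sum fun ξ _ => ?_
  have h1 : ∑ x ∈ S.filter (fun q : ℕ => (q : ZMod p) = ξ), f (x : ZMod p) =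
      ((S.filter (fun q : ℕ => (q : ZMod p) = ξ)).card : ℝ) * f ξ := by
    rw [← nsmul_eq_mul, ← Finset.sum_const]
    refine Finset.sum_congr rfl fun x hx => ?_
    rw [(Finset.mem_filter.1 hx).2]
  rw [h1]
  refine mul_le_mul_of_nonneg_right ?_ (hf ξ)
  have hp0 : (0 : ℝ) < p := by exact_mod_cast Nat.pos_of_ne_zero (NeZero.ne p)
  have h2 : (S.filter (fun q : ℕ => (q : ZMod p) = ξ)).card ≤
      ((Finset.Icc (-(⌊P⌋₊ : ℤ)) ⌊P⌋₊).filter fun k : ℤ => (k : ZMod p) = ξ).card := by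
    apply Finset.card_le_card_of_injOn (fun q : ℕ => (q : ℤ))
    · intro q hq
      rw [Finset.mem_coe, Finset.mem_filter] at hq
      rw [Finset.mem_coe, Finset.mem_filter, Finset.mem_Icc]
      have := Nat.le_floor (hS q hq.1)
      have h5 : (q : ℤ) ≤ ⌊P⌋₊ := by exact_mod_cast this
      refine ⟨⟨by show -(⌊P⌋₊ : ℤ) ≤ (q : ℤ); omega, h5⟩, ?_⟩
      rw [← hq.2]; simp
    · intro a _ b _ h
      exact Nat.cast_injective (R := ℤ) h
  have h3 := int_fiber p ⌊P⌋₊ (Nat.pos_of_ne_zero (NeZero.ne p)) ξ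
  have h4 : (⌊P⌋₊ : ℝ) ≤ P := Nat.floor_le (by linarith)
  calc _ ≤ (2 * (⌊P⌋₊ : ℝ) + 1) / p + 1 := le_trans (by exact_mod_cast h2) h3
    _ ≤ (2 * P + P) / p + P / p := by
      gcongr
      rw [le_div_iff₀ hp0]; linarith
    _ = _ := by ring

lemma one_side {n : ℕ} (l Z M N : ℕ) (hn : 1 ≤ n) (hZ : 1 ≤ Z) (H : MvPolynomial (Fin n) ℤ) (C : ℝ) (hC : 0 < C)
    (m : (Fin n → ℤ) → ℤ) (hm : ∀ w ∈ zbox n Z, w ≠ 0 → m w ≠ 0 ∧ |m w| ≤ N)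
    (hL : ∀ (p : ℕ) [Fact p.Prime], l ∣ p - 1 → ∀ a : Fin n → ℕ, ∑ t : ZMod p, ∑ ξ, (GG p l Z H a t ξ) ^ 2 ≤
      C * ((Z : ℝ) ^ (2 * n) * (p : ℝ) ^ n + (p : ℝ) ^ (n + 1) * (Z : ℝ) ^ n *
        (1 + (((zbox n Z).filter fun w => w ≠ 0 ∧ (p : ℤ) ∣ m w).card : ℝ))))
    (B P Y : ℝ) (hP : 1 ≤ P) (hPB : P ≤ B) (hY : 0 < Y) (hM : (M : ℝ) ≤ 5 * B) (S : Finset ℕ)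
    (hS : ∀ p ∈ S, p.Prime ∧ l ∣ p - 1 ∧ Y ≤ p ∧ (p : ℝ) ≤ P) (a : Fin n → ℕ) :
    ∑ p ∈ S, ∑ q ∈ S, ∑ x ∈ zbox n M, (GG p l Z H a q (castV p x)) ^ 2 ≤
      (12 * B) ^ n * (4 * P) * C * ((Z : ℝ) ^ (2 * n) *
        (S.card / Y + S.card / (Z : ℝ) ^ n + 3 ^ n * Nat.log 2 N)) := by
  have hB : 1 ≤ B := hP.trans hPB
  have hZ0 : (1 : ℝ) ≤ Z := by exact_mod_cast hZ
  set bad : ℕ → ℕ := fun p => ((zbox n Z).filter fun w => w ≠ 0 ∧ (p : ℤ) ∣ m w).card with hbad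
  have h1 : ∀ p ∈ S, ∑ q ∈ S, ∑ x ∈ zbox n M, (GG p l Z H a q (castV p x)) ^ 2 ≤
      (12 * B) ^ n * (4 * P) * C * ((Z : ℝ) ^ (2 * n) / Y + (Z : ℝ) ^ n * (1 + bad p)) := by
    intro p hp
    obtain ⟨h1, h2, h3, h4⟩ := hS p hp
    haveI : Fact p.Prime := ⟨h1⟩
    have hp0 : (0 : ℝ) < p := by exact_mod_cast h1.pos
    have k1 : ∀ q ∈ S, ∑ x ∈ zbox n M, (GG p l Z H a q (castV p x)) ^ 2 ≤
        (12 * B / p) ^ n * ∑ ξ, (GG p l Z H a q ξ) ^ 2 := by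
      intro q _
      refine vec_cover p M (12 * B / p) ?_ (fun ξ => (GG p l Z H a q ξ) ^ 2) fun ξ => sq_nonneg _
      rw [div_add_one hp0.ne']
      gcongr
      linarith
    have k2 := nat_cover p P hP h4 S (fun q hq => (hS q hq).2.2.2)
      (fun t => ∑ ξ, (GG p l Z H a t ξ) ^ 2) fun t => Finset.sum_nonneg fun _ _ => sq_nonneg _
    calc _ ≤ ∑ q ∈ S, (12 * B / p) ^ n * ∑ ξ, (GG p l Z H a q ξ) ^ 2 := Finset.sum_le_sum k1
      _ = (12 * B / p) ^ n * ∑ q ∈ S, ∑ ξ, (GG p l Z H a q ξ) ^ 2 := by rw [Finset.mul_sum]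
      _ ≤ (12 * B / p) ^ n * ((4 * P / p) * (C * ((Z : ℝ) ^ (2 * n) * (p : ℝ) ^ n + (p : ℝ) ^ (n + 1) * (Z : ℝ) ^ n *
        (1 + (bad p : ℝ))))) := by
          refine mul_le_mul_of_nonneg_left (k2.trans ?_) (by positivity)
          exact mul_le_mul_of_nonneg_left (hL p h2 a) (by positivity)
      _ = (12 * B) ^ n * (4 * P) * C * ((Z : ℝ) ^ (2 * n) / p + (Z : ℝ) ^ n * (1 + bad p)) := by
          rw [div_pow, pow_succ]; field_simp
      _ ≤ _ := by gcongr
  have hbs : ∑ p ∈ S, bad p ≤ (2 * Z + 1) ^ n * Nat.log 2 N := by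
    have e1 : ∀ p, bad p = ∑ w ∈ zbox n Z, if w ≠ 0 ∧ (p : ℤ) ∣ m w then 1 else 0 := by
      intro p; rw [hbad]; simp only [Finset.card_filter]
    simp_rw [e1]
    rw [Finset.sum_comm, ← zbox_card, ← smul_eq_mul]
    refine Finset.sum_le_card_nsmul _ _ _ fun w hw => ?_
    by_cases hw0 : w = 0
    · simp [hw0]
    · have := hm w hw hw0
      simp only [ne_eq, hw0, not_false_eq_true, true_and]
      rw [← Finset.card_filter]
      refine (primes_dvd_card S (fun p hp => (hS p hp).1) _ this.1).trans ?_
      refine Nat.log_mono_right ?_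
      have := this.2
      rw [Int.abs_eq_natAbs] at this
      exact_mod_cast this
  have hbs' : ∑ p ∈ S, (bad p : ℝ) ≤ (3 * Z) ^ n * Nat.log 2 N := by
    have : ((∑ p ∈ S, bad p : ℕ) : ℝ) ≤ (((2 * Z + 1) ^ n * Nat.log 2 N : ℕ) : ℝ) := by exact_mod_cast hbs
    push_cast at this
    refine this.trans ?_
    gcongr
    linarith
  calc _ ≤ ∑ p ∈ S, (12 * B) ^ n * (4 * P) * C * ((Z : ℝ) ^ (2 * n) / Y + (Z : ℝ) ^ n * (1 + bad p)) :=
        Finset.sum_le_sum h1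
    _ = (12 * B) ^ n * (4 * P) * C * (S.card * ((Z : ℝ) ^ (2 * n) / Y) + (Z : ℝ) ^ n * (S.card + ∑ p ∈ S, (bad p : ℝ))) := by
        rw [← Finset.mul_sum, Finset.sum_add_distrib, ← Finset.mul_sum, Finset.sum_add_distrib]
        simp
    _ ≤ (12 * B) ^ n * (4 * P) * C * (S.card * ((Z : ℝ) ^ (2 * n) / Y) + (Z : ℝ) ^ n * (S.card + (3 * Z) ^ n * Nat.log 2 N)) := by
        gcongr
    _ = _ := by
        rw [two_mul, pow_add, mul_pow 3]; field_simp; ring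

lemma sieve_core (n l D : ℕ) (hn : 1 ≤ n) (hl : l.Prime) {φ : ℝ → ℝ} {c : ℝ} (h : Wt φ c) :
    ∃ C : ℝ, 0 < C ∧ ∃ c1 c2 : ℕ, ∀ H : MvPolynomial (Fin n) ℤ,
      Irreducible (MvPolynomial.map (Int.castRingHom ℚ) H) → H.totalDegree ≤ D →
      ∀ N : ℕ, (∀ m, |H.coeff m| ≤ N) → (∀ w, w ≠ 0 → 1 ≤ (Fw H w).natDegree) →
      ∀ (Z M : ℕ) (B P Y : ℝ), 1 ≤ Z → 1 ≤ P → P ≤ B → 0 < Y → P * Z ≤ B → 4 * B ≤ M → (M : ℝ) ≤ 5 * B →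
      ∀ S : Finset ℕ, (∀ p ∈ S, p.Prime ∧ l ∣ p - 1 ∧ Y ≤ p ∧ (p : ℝ) ≤ P) →
      ∑ x ∈ zbox n M, Wgt φ B x * (∑ p ∈ S, gp p l H (castV p x)) ^ 2 ≤
        C * B ^ n * P * (S.card / Y + S.card / (Z : ℝ) ^ n + Nat.log 2 (c1 * ((N + 1) * (Z + 1)) ^ c2)) := by
  obtain ⟨C, hC, c1, c2, hLB⟩ := line_bound n l D hn hl
  refine ⟨c ^ n * 4 ^ n * (12 ^ n * 4 * C * 3 ^ n), ?_, c1, c2, ?_⟩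
  · have := h.hc; positivity
  intro H hirr hdeg N hN hFw Z M B P Y hZ hP hPB hY hPZ hM1 hM2 S hS
  obtain ⟨m, hm, hL⟩ := hLB H hirr hdeg N hN hFw Z hZ
  have hB : 1 ≤ B := hP.trans hPB
  have hZ0 : (1 : ℝ) ≤ Z := by exact_mod_cast hZ
  have hc := h.hc
  set Lg := Nat.log 2 (c1 * ((N + 1) * (Z + 1)) ^ c2) with hLg
  set U := (12 * B) ^ n * (4 * P) * C * ((Z : ℝ) ^ (2 * n) *
        (S.card / Y + S.card / (Z : ℝ) ^ n + 3 ^ n * Lg)) with hU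
  have hone : ∀ a : Fin n → ℕ, ∑ p ∈ S, ∑ q ∈ S, ∑ x ∈ zbox n M, (GG p l Z H a q (castV p x)) ^ 2 ≤ U := by
    intro a
    exact one_side l Z M (c1 * ((N + 1) * (Z + 1)) ^ c2) hn hZ H C hC m (by exact_mod_cast hm)
      (fun p _ hp a => hL p hp a) B P Y hP hPB hY hM2 S hS a
  have hpz : ∀ p ∈ S, (p : ℝ) * Z ≤ B := fun p hp =>
    (mul_le_mul_of_nonneg_right (hS p hp).2.2.2 (by positivity)).trans hPZ
  have e1 : ∑ x ∈ zbox n M, Wgt φ B x * (∑ p ∈ S, gp p l H (castV p x)) ^ 2 =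
      ∑ p ∈ S, ∑ q ∈ S, ∑ x ∈ zbox n M, Wgt φ B x * (gp p l H (castV p x) * gp q l H (castV q x)) := by
    have : ∀ x : Fin n → ℤ, Wgt φ B x * (∑ p ∈ S, gp p l H (castV p x)) ^ 2 =
      ∑ p ∈ S, ∑ q ∈ S, Wgt φ B x * (gp p l H (castV p x) * gp q l H (castV q x)) := by
      intro x
      rw [sq, Finset.sum_mul_sum, Finset.mul_sum]
      simp_rw [Finset.mul_sum]
    simp_rw [this]
    rw [Finset.sum_comm]
    refine Finset.sum_congr rfl fun p _ => ?_
    rw [Finset.sum_comm]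
  have e2 : (Z : ℝ) ^ (2 * n) * ∑ x ∈ zbox n M, Wgt φ B x * (∑ p ∈ S, gp p l H (castV p x)) ^ 2 ≤
      c ^ n * (4 ^ n * U) := by
    rw [e1, Finset.mul_sum]
    simp_rw [Finset.mul_sum (s := S)]
    calc _ ≤ ∑ p ∈ S, ∑ q ∈ S, c ^ n * ∑ α ∈ abox n Z, awt Z α * ((∑ x ∈ zbox n M, (GG p l Z H (fun i => (α i).1) q (castV p x)) ^ 2 +
      ∑ x ∈ zbox n M, (GG q l Z H (fun i => (α i).2) p (castV q x)) ^ 2) / 2) :=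
          Finset.sum_le_sum fun p hp => Finset.sum_le_sum fun q hq =>
            pair_sum h Z p q l M B (by linarith) hM1 hZ (hpz p hp) (hpz q hq) H
      _ = c ^ n * ∑ α ∈ abox n Z, awt Z α * ((∑ p ∈ S, ∑ q ∈ S, ∑ x ∈ zbox n M, (GG p l Z H (fun i => (α i).1) q (castV p x)) ^ 2 +
      ∑ q ∈ S, ∑ p ∈ S, ∑ x ∈ zbox n M, (GG q l Z H (fun i => (α i).2) p (castV q x)) ^ 2) / 2) := by
          simp_rw [← Finset.mul_sum (s := S)]
          congr 1
          have : ∀ p ∈ S, ∑ q ∈ S, ∑ α ∈ abox n Z, awt Z α * ((∑ x ∈ zbox n M, (GG p l Z H (fun i => (α i).1) q (castV p x)) ^ 2 +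
      ∑ x ∈ zbox n M, (GG q l Z H (fun i => (α i).2) p (castV q x)) ^ 2) / 2) =
              ∑ α ∈ abox n Z, ∑ q ∈ S, awt Z α * ((∑ x ∈ zbox n M, (GG p l Z H (fun i => (α i).1) q (castV p x)) ^ 2 +
      ∑ x ∈ zbox n M, (GG q l Z H (fun i => (α i).2) p (castV q x)) ^ 2) / 2) := fun p _ => Finset.sum_comm
          rw [Finset.sum_congr rfl this, Finset.sum_comm]
          refine Finset.sum_congr rfl fun α _ => ?_
          rw [Finset.sum_comm (s := S) (t := S) (f := fun q p => ∑ x ∈ zbox n M, (GG q l Z H (fun i => (α i).2) p (castV q x)) ^ 2)]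
          rw [← Finset.sum_add_distrib, Finset.sum_div, Finset.mul_sum]
          refine Finset.sum_congr rfl fun p _ => ?_
          rw [← Finset.sum_add_distrib, Finset.sum_div, Finset.mul_sum]
      _ ≤ c ^ n * ∑ α ∈ abox n Z, awt Z α * U := by
          refine mul_le_mul_of_nonneg_left (Finset.sum_le_sum fun α _ => ?_) (by positivity)
          refine mul_le_mul_of_nonneg_left ?_ (awt_nonneg _ _)
          have := hone fun i => (α i).1
          have := hone fun i => (α i).2
          linarith
      _ ≤ _ := by
          rw [← Finset.sum_mul]
          have := awt_sum n Z hZ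
          have hU0 : 0 ≤ U := by positivity
          gcongr
  have hZp : (0 : ℝ) < (Z : ℝ) ^ (2 * n) := by positivity
  rw [← mul_le_mul_iff_right₀ hZp]
  refine e2.trans ?_
  have h3 : (1 : ℝ) ≤ 3 ^ n := one_le_pow₀ (by norm_num)
  have h5 : (S.card / Y + S.card / (Z : ℝ) ^ n + 3 ^ n * Lg) ≤ 3 ^ n * (S.card / Y + S.card / (Z : ℝ) ^ n + Lg) := by
    have t1 : (0 : ℝ) ≤ S.card / Y := by positivity
    have t2 : (0 : ℝ) ≤ S.card / (Z : ℝ) ^ n := by positivity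
    nlinarith
  calc _ ≤ c ^ n * (4 ^ n * ((12 * B) ^ n * (4 * P) * C * ((Z : ℝ) ^ (2 * n) * (3 ^ n * (S.card / Y + S.card / (Z : ℝ) ^ n + Lg))))) := by
        rw [hU]; gcongr
    _ = _ := by rw [mul_pow 12 B]; ring

lemma gp_ge_one {n : ℕ} (p l : ℕ) [Fact p.Prime] (hl : 2 ≤ l) (hlp : l ∣ p - 1) (H : MvPolynomial (Fin n) ℤ)
    (x : Fin n → ℤ) (y : ℤ) (hy : MvPolynomial.eval x H = y ^ l) (hp : ¬ (p : ℤ) ∣ MvPolynomial.eval x H) :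
    1 ≤ gp p l H (castV p x) := by
  have e : MvPolynomial.aeval (castV p x) H = ((MvPolynomial.eval x H : ℤ) : ZMod p) := by
    have h1 := MvPolynomial.map_aeval (R := ℤ) x (Int.castRingHom (ZMod p)) H
    rw [MvPolynomial.aeval_def, MvPolynomial.eval₂_eq_eval_map]
    have h2 : MvPolynomial.eval x H = MvPolynomial.aeval x H := by
      rw [MvPolynomial.aeval_eq_eval]
    rw [h2]
    change _ = Int.castRingHom (ZMod p) _
    rw [h1, MvPolynomial.eval_map]
    rfl
  unfold gp gch
  have hl2 : (2 : ℝ) ≤ l := by exact_mod_cast hl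
  rw [if_pos]
  · linarith
  · rw [e, hy]
    push_cast
    rw [← pow_mul, Nat.mul_div_cancel' hlp]
    apply ZMod.pow_card_sub_one_eq_one
    intro h0
    apply hp
    rw [hy]
    exact dvd_pow ((ZMod.intCast_zmod_eq_zero_iff_dvd y p).1 h0) (by omega)

lemma gp_ge {n : ℕ} (p l : ℕ) (H : MvPolynomial (Fin n) ℤ) (ξ : Fin n → ZMod p) :
    -1 ≤ gp p l H ξ := by
  unfold gp gch
  have : (0 : ℝ) ≤ l := by positivity
  split_ifs <;> linarith

lemma count_A {φ : ℝ → ℝ} {c : ℝ} (h : Wt φ c) {n : ℕ} (l Lx M X : ℕ) (hl : 2 ≤ l) (B : ℝ) (hB : 0 < B)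
    (hX : (X : ℝ) ≤ B) (hXM : X ≤ M) (H : MvPolynomial (Fin n) ℤ) (S : Finset ℕ)
    (hS : ∀ p ∈ S, p.Prime ∧ l ∣ p - 1) (hLx : 4 * Lx ≤ S.card) (A : Finset (Fin n → ℤ))
    (hA : ∀ x ∈ A, x ∈ zbox n X ∧ MvPolynomial.eval x H ≠ 0 ∧ (∃ y : ℤ, MvPolynomial.eval x H = y ^ l) ∧
      Nat.log 2 (MvPolynomial.eval x H).natAbs ≤ Lx) :
    (A.card : ℝ) * ((S.card : ℝ) / 2) ^ 2 ≤
      ∑ x ∈ zbox n M, Wgt φ B x * (∑ p ∈ S, gp p l H (castV p x)) ^ 2 := by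
  have hsub : A ⊆ zbox n M := by
    intro x hx
    have := (hA x hx).1
    rw [zbox, Fintype.mem_piFinset] at this ⊢
    intro i
    have := Finset.mem_Icc.1 (this i)
    rw [Finset.mem_Icc]; omega
  have hW0 : ∀ x : Fin n → ℤ, 0 ≤ Wgt φ B x := fun x => Finset.prod_nonneg fun _ _ => h.nonneg _
  calc (A.card : ℝ) * ((S.card : ℝ) / 2) ^ 2 = ∑ x ∈ A, ((S.card : ℝ) / 2) ^ 2 := by
        rw [Finset.sum_const, nsmul_eq_mul]
    _ ≤ ∑ x ∈ A, Wgt φ B x * (∑ p ∈ S, gp p l H (castV p x)) ^ 2 := by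
        refine Finset.sum_le_sum fun x hx => ?_
        obtain ⟨h1, h2, ⟨y, h3⟩, h4⟩ := hA x hx
        have hW : Wgt φ B x = 1 := by
          unfold Wgt
          refine Finset.prod_eq_one fun i _ => h.one_on _ ?_
          rw [abs_div, abs_of_pos hB, div_le_one hB]
          refine le_trans ?_ hX
          rw [zbox, Fintype.mem_piFinset] at h1
          have := abs_le.2 (Finset.mem_Icc.1 (h1 i))
          exact_mod_cast this
        rw [hW, one_mul]
        refine pow_le_pow_left₀ (by positivity) ?_ 2
        have k1 : ∀ p ∈ S, (1 : ℝ) - 2 * (if (p : ℤ) ∣ MvPolynomial.eval x H then 1 else 0) ≤ gp p l H (castV p x) := by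
          intro p hp
          have : Fact p.Prime := ⟨(hS p hp).1⟩
          split_ifs with hd
          · have := gp_ge p l H (castV p x); linarith
          · have := gp_ge_one p l hl (hS p hp).2 H x y h3 hd; linarith
        have k2 := Finset.sum_le_sum k1
        rw [Finset.sum_sub_distrib, ← Finset.mul_sum, Finset.sum_boole] at k2
        have k3 := (primes_dvd_card S (fun p hp => (hS p hp).1) _ h2).trans h4
        have k4 : ((S.filter fun p : ℕ => (p : ℤ) ∣ MvPolynomial.eval x H).card : ℝ) ≤ Lx := by exact_mod_cast k3
        have k5 : 4 * (Lx : ℝ) ≤ S.card := by exact_mod_cast hLx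
        simp only [Finset.sum_const, nsmul_eq_mul, mul_one] at k2
        linarith
    _ ≤ _ := Finset.sum_le_sum_of_subset_of_nonneg hsub fun x _ _ => mul_nonneg (hW0 x) (sq_nonneg _)

lemma eval_bound {n : ℕ} (H : MvPolynomial (Fin n) ℤ) (D N X : ℕ) (hX : 1 ≤ X) (hD : H.totalDegree ≤ D)
    (hN : ∀ m, |H.coeff m| ≤ N) (x : Fin n → ℤ) (hx : x ∈ zbox n X) :
    (MvPolynomial.eval x H).natAbs ≤ (D + 1) ^ n * ((N + 1) * (X + 1)) ^ (D + 1) := by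
  have hX' : (1 : ℤ) ≤ X := by exact_mod_cast hX
  have h1 : |MvPolynomial.eval x H| ≤ (H.support.card : ℤ) * (N * X ^ D) := by
    rw [MvPolynomial.eval_eq']
    refine (Finset.abs_sum_le_sum_abs _ _).trans ?_
    rw [← nsmul_eq_mul]
    refine Finset.sum_le_card_nsmul _ _ _ fun m hm => ?_
    rw [abs_mul]
    refine mul_le_mul (hN m) ?_ (abs_nonneg _) (by positivity)
    rw [Finset.abs_prod]
    calc ∏ i, |x i ^ m i| ≤ ∏ i, (X : ℤ) ^ m i := by
          refine Finset.prod_le_prod (fun _ _ => abs_nonneg _) fun i _ => ?_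
          rw [abs_pow]
          rw [zbox, Fintype.mem_piFinset] at hx
          exact pow_le_pow_left₀ (abs_nonneg _) (abs_le.2 (Finset.mem_Icc.1 (hx i))) _
      _ = (X : ℤ) ^ (∑ i, m i) := Finset.prod_pow_eq_pow_sum _ _ _
      _ ≤ (X : ℤ) ^ D := by
          refine pow_le_pow_right₀ hX' ?_
          refine le_trans ?_ hD
          have := MvPolynomial.le_totalDegree hm
          rwa [Finsupp.sum_fintype _ _ (fun _ => rfl)] at this
  rw [Int.abs_eq_natAbs] at h1
  have h2 : (MvPolynomial.eval x H).natAbs ≤ H.support.card * (N * X ^ D) := by exact_mod_cast h1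
  refine h2.trans (Nat.mul_le_mul (support_card_le H D hD) ?_)
  calc N * X ^ D ≤ ((N + 1) * (X + 1)) * ((N + 1) * (X + 1)) ^ D := by
        refine Nat.mul_le_mul (by nlinarith) (Nat.pow_le_pow_left (by nlinarith) D)
    _ = _ := by rw [pow_succ]; ring

lemma log_bd (c1 c2 : ℕ) (δ : ℝ) (hδ : 0 < δ) : ∃ K : ℝ, 2 ≤ K ∧ ∀ (N W : ℕ) (B : ℝ), 1 ≤ B → (W : ℝ) ≤ B →
    (Nat.log 2 (c1 * ((N + 1) * (W + 1)) ^ c2) : ℝ) ≤ K * Real.log (N + 2) * B ^ δ := by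
  refine ⟨2 * (2 * c1 + c2 * (2 + 2 / δ)) + 2, ?_, ?_⟩
  · have : (0 : ℝ) ≤ 2 * (2 * c1 + c2 * (2 + 2 / δ)) := by positivity
    linarith
  intro N W B hB hW
  have hl2 : (1 : ℝ) / 2 < Real.log 2 := by have := Real.log_two_gt_d9; norm_num at this ⊢; linarith
  have hN0 : (0 : ℝ) ≤ N := by positivity
  have hh : Real.log 2 ≤ Real.log (N + 2) := Real.log_le_log (by norm_num) (by linarith)
  set t := Real.log ((N : ℝ) + 2) with ht
  have hb : 1 ≤ B ^ δ := Real.one_le_rpow hB hδ.le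
  have ht0 : 1 ≤ 2 * t := by linarith
  have hc1 : (0 : ℝ) ≤ c1 := by positivity
  have hc2 : (0 : ℝ) ≤ c2 := by positivity
  have htb : t ≤ t * B ^ δ := by nlinarith
  have htb1 : 1 ≤ 2 * (t * B ^ δ) := by nlinarith
  by_cases ha : c1 = 0
  · subst ha; simp only [zero_mul, Nat.log_zero_right, Nat.cast_zero]
    have : 0 ≤ t := by linarith
    positivity
  have ha' : (0 : ℝ) < c1 := by exact_mod_cast Nat.pos_of_ne_zero ha
  have h1 : (Nat.log 2 (c1 * ((N + 1) * (W + 1)) ^ c2) : ℝ) ≤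
      Real.logb 2 ((c1 * ((N + 1) * (W + 1)) ^ c2 : ℕ) : ℝ) := by
    exact_mod_cast Real.natLog_le_logb _ _
  refine h1.trans ?_
  rw [Real.logb, div_le_iff₀ (by linarith)]
  push_cast
  rw [Real.log_mul ha'.ne' (by positivity), Real.log_pow, Real.log_mul (by positivity) (by positivity)]
  have e1 : Real.log c1 ≤ c1 := Real.log_le_self ha'.le
  have e2 : Real.log ((N : ℝ) + 1) ≤ t := Real.log_le_log (by positivity) (by linarith)
  have e3 : Real.log ((W : ℝ) + 1) ≤ t + B ^ δ / δ := by
    calc Real.log ((W : ℝ) + 1) ≤ Real.log (2 * B) := Real.log_le_log (by positivity) (by linarith)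
      _ = Real.log 2 + Real.log B := Real.log_mul (by norm_num) (by linarith)
      _ ≤ _ := add_le_add hh (Real.log_le_rpow_div (by linarith) hδ)
  have e4 : B ^ δ / δ ≤ 2 / δ * (t * B ^ δ) := by
    rw [div_mul_eq_mul_div]
    gcongr
    nlinarith
  have e5 : Real.log c1 + c2 * (Real.log ((N : ℝ) + 1) + Real.log ((W : ℝ) + 1)) ≤
      (2 * c1 + c2 * (2 + 2 / δ)) * (t * B ^ δ) := by
    have f1 : (c1 : ℝ) ≤ 2 * c1 * (t * B ^ δ) := by nlinarith
    have f2 : (c2 : ℝ) * (Real.log ((N : ℝ) + 1) + Real.log ((W : ℝ) + 1)) ≤ c2 * ((2 + 2 / δ) * (t * B ^ δ)) := by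
      refine mul_le_mul_of_nonneg_left ?_ hc2
      linarith
    linarith
  refine e5.trans ?_
  have hK : 0 ≤ 2 * (2 * (c1 : ℝ) + c2 * (2 + 2 / δ)) := by positivity
  have htb0 : 0 ≤ t * B ^ δ := by linarith
  nlinarith [mul_nonneg hK htb0, mul_nonneg (mul_nonneg hK htb0) (by linarith : (0 : ℝ) ≤ Real.log 2 - 1 / 2), mul_nonneg htb0 (by linarith : (0 : ℝ) ≤ Real.log 2)]

/-- target exponent without epsilon -/
def expo (n : ℕ) : ℝ := (n : ℝ) - 1 + 1 / ((n : ℝ) + 1)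

lemma aux_ar1 (E r k : ℝ) (hE : 1 ≤ E) (hr : 1 ≤ r) (hk : 0 ≤ k) :
    (1 + k) * r + E ≤ (2 + k) * E * r ^ 2 := by
  have q2 : r ≤ r ^ 2 := by nlinarith
  have q3 : r ≤ E * r ^ 2 := by nlinarith
  have q4 : E ≤ E * r ^ 2 := by nlinarith
  nlinarith [mul_le_mul_of_nonneg_left q3 (by linarith : 0 ≤ 1 + k)]

lemma aux_ar2 (x y : ℝ) (hx : 1 ≤ x) (hy : 1 ≤ y) : 1 ≤ x * y := by nlinarith

lemma aux_ar3 (Z P B : ℝ) (hP : 1 ≤ P) (hZ : 0 ≤ Z) (h : P * Z ≤ B) : Z ≤ B := by nlinarith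

lemma aux_ar4 (Q Y P k z : ℝ) (hQ : 0 < Q) (hY : Y ≤ P) (h : P ≤ k * z) : Q * Y ≤ k * Q * z := by
  nlinarith

lemma aux_ar5 (K h b : ℝ) (hK : 4 ≤ K) (hh : 1 / 2 ≤ h) (hb : 1 ≤ b) :
    1 / 2 ≤ h * b ∧ 1 ≤ K * (h * b) := by
  have : 1 / 2 ≤ h * b := by nlinarith
  exact ⟨this, by nlinarith⟩

lemma aux_ar6 (n θ δ ε : ℝ) (h0 : 0 < δ) (h1 : θ ≤ 1) (h : 3 * δ ≤ ε) :
    δ + n + θ * (2 * δ - 1) ≤ n - θ + ε := by nlinarith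

set_option maxHeartbeats 1000000 in
lemma main_nz (n l D : ℕ) (hn : 1 ≤ n) (hl : l.Prime) (ε : ℝ) (hε : 0 < ε) :
    ∃ C : ℝ, 0 < C ∧ ∀ H : MvPolynomial (Fin n) ℤ,
      Irreducible (MvPolynomial.map (Int.castRingHom ℚ) H) → H.totalDegree ≤ D →
      ∀ N : ℕ, (∀ m, |H.coeff m| ≤ N) → (∀ w, w ≠ 0 → 1 ≤ (Fw H w).natDegree) →
      ∀ B : ℝ, 1 ≤ B → ∀ A : Finset (Fin n → ℤ),
        (∀ x ∈ A, x ∈ zbox n ⌊B⌋₊ ∧ MvPolynomial.eval x H ≠ 0 ∧ ∃ y : ℤ, MvPolynomial.eval x H = y ^ l) →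
        (A.card : ℝ) ≤ C * Real.log (N + 2) * B ^ (expo n + ε) := by
  obtain ⟨φ, c, hW⟩ := exists_Wt
  set δ : ℝ := min (ε / 3) (1 / 2) with hδdef
  have hδ : 0 < δ := lt_min (by linarith) (by norm_num)
  have hδ1 : δ < 1 := (min_le_right _ _).trans_lt (by norm_num)
  have hδε : 3 * δ ≤ ε := by have := min_le_left (ε / 3) (1 / 2); rw [← hδdef] at this; linarith
  obtain ⟨P0, hP0, hprimes⟩ := primes_count l hl.two_le δ hδ hδ1
  obtain ⟨C, hC, c1, c2, hcore⟩ := sieve_core n l D hn hl hW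
  obtain ⟨K1, hK1, hlog1⟩ := log_bd c1 c2 δ hδ
  obtain ⟨K2, hK2, hlog2⟩ := log_bd ((D + 1) ^ n) (D + 1) δ hδ
  set K := K1 + K2 with hK
  set G := 3 ^ n * P0 + 3 ^ n * 4 + 4 * C * (2 + 2 ^ n) with hG
  have hGpos : 0 < G := by positivity
  have hKpos : 0 < K := by linarith
  refine ⟨G * K, by positivity, ?_⟩
  intro H hirr hdeg N hN hFw B hB A hA
  have hB0 : 0 < B := by linarith
  have hnR : (1 : ℝ) ≤ n := by exact_mod_cast hn
  set θ : ℝ := n / (n + 1) with hθ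
  have hθ0 : 0 < θ := by positivity
  have hθ1 : θ ≤ 1 := by rw [hθ, div_le_one (by positivity)]; linarith
  set P : ℝ := B ^ θ with hP
  have hP1 : 1 ≤ P := Real.one_le_rpow hB hθ0.le
  have hPB : P ≤ B := by
    calc P ≤ B ^ (1 : ℝ) := Real.rpow_le_rpow_of_exponent_le hB hθ1
      _ = B := Real.rpow_one B
  have hPpos : 0 < P := by linarith
  set Y : ℝ := P ^ (1 - δ) with hY
  have hY1 : 1 ≤ Y := Real.one_le_rpow hP1 (by linarith)
  have hYP : Y ≤ P := by
    calc Y ≤ P ^ (1 : ℝ) := Real.rpow_le_rpow_of_exponent_le hP1 (by linarith)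
      _ = P := Real.rpow_one P
  have hYpos : 0 < Y := by linarith
  set h := Real.log ((N : ℝ) + 2) with hh
  have hl2 : (1 : ℝ) / 2 < Real.log 2 := by have := Real.log_two_gt_d9; norm_num at this ⊢; linarith
  have hN0 : (0 : ℝ) ≤ N := by positivity
  have hhl : 1 / 2 ≤ h := hl2.le.trans (Real.log_le_log (by norm_num) (by linarith))
  have hBδ : 1 ≤ B ^ δ := Real.one_le_rpow hB hδ.le
  set E := K * h * B ^ δ with hE
  obtain ⟨hhB, hhB2⟩ := aux_ar5 K h (B ^ δ) (by linarith) hhl hBδ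
  have hE1 : 1 ≤ E := by
    rw [hE, mul_assoc]; exact hhB2
  have hfl : (⌊B⌋₊ : ℝ) ≤ B := Nat.floor_le hB0.le
  have hX1 : 1 ≤ ⌊B⌋₊ := Nat.le_floor (by exact_mod_cast hB)
  -- trivial bound
  have htriv : (A.card : ℝ) ≤ 3 ^ n * B ^ n := by
    have h1 : A.card ≤ (2 * ⌊B⌋₊ + 1) ^ n := by
      rw [← zbox_card]
      exact Finset.card_le_card fun x hx => (hA x hx).1
    calc (A.card : ℝ) ≤ (2 * (⌊B⌋₊ : ℝ) + 1) ^ n := by exact_mod_cast h1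
      _ ≤ (3 * B) ^ n := pow_le_pow_left₀ (by positivity) (by linarith) n
      _ = _ := mul_pow _ _ _
  have hBn : 0 < B ^ n := by positivity
  -- unified bound
  have huni : (A.card : ℝ) ≤ G * (E * B ^ n * (P / Y ^ 2)) := by
    by_cases hPP : P < P0
    · have k1 : 1 ≤ P0 * (P / Y ^ 2) := by
        rw [← mul_div_assoc, le_div_iff₀ (by positivity), one_mul, sq]
        exact mul_le_mul (hYP.trans hPP.le) hYP hYpos.le (by linarith)
      calc (A.card : ℝ) ≤ 3 ^ n * B ^ n := htriv
        _ ≤ 3 ^ n * B ^ n * (E * (P0 * (P / Y ^ 2))) := by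
            exact le_mul_of_one_le_right (by positivity) (aux_ar2 _ _ hE1 k1)
        _ = 3 ^ n * P0 * (E * B ^ n * (P / Y ^ 2)) := by ring
        _ ≤ _ := by
            refine mul_le_mul_of_nonneg_right ?_ (by positivity)
            rw [hG]
            have : 0 ≤ 3 ^ n * 4 + 4 * C * (2 + 2 ^ n) := by positivity
            linarith
    · have hQ := hprimes P (not_lt.1 hPP)
      set S := (Finset.range (⌊P⌋₊ + 1)).filter fun p : ℕ => p.Prime ∧ l ∣ p - 1 ∧ P ^ (1 - δ) ≤ p with hS
      have hSm : ∀ p ∈ S, p.Prime ∧ l ∣ p - 1 ∧ Y ≤ p ∧ (p : ℝ) ≤ P := by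
        intro p hp
        rw [hS, Finset.mem_filter, Finset.mem_range] at hp
        refine ⟨hp.2.1, hp.2.2.1, hp.2.2.2, ?_⟩
        have : p ≤ ⌊P⌋₊ := by omega
        exact (Nat.le_floor_iff hPpos.le).1 this
      set Q : ℝ := (S.card : ℝ) with hQdef
      have hQY : Y ≤ Q := hQ
      set Lx := Nat.log 2 ((D + 1) ^ n * ((N + 1) * (⌊B⌋₊ + 1)) ^ (D + 1)) with hLx
      have hLxE : (Lx : ℝ) ≤ E := by
        refine (hlog2 N ⌊B⌋₊ B hB hfl).trans ?_
        rw [hE, mul_assoc, mul_assoc]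
        refine mul_le_mul_of_nonneg_right (by linarith) (by linarith)
      by_cases hcase : 4 * Lx ≤ S.card
      · set Z := ⌊B / P⌋₊ with hZ
        have hBP : 1 ≤ B / P := by rwa [le_div_iff₀ hPpos, one_mul]
        have hZ1 : 1 ≤ Z := Nat.le_floor (by exact_mod_cast hBP)
        have hZ1' : (1 : ℝ) ≤ Z := by exact_mod_cast hZ1
        have hZle : (Z : ℝ) ≤ B / P := Nat.floor_le (by linarith)
        have hPZ : P * Z ≤ B := by
          rw [le_div_iff₀ hPpos] at hZle; linarith
        have hZB : (Z : ℝ) ≤ B := aux_ar3 Z P B hP1 (by linarith) hPZ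
        have hZn : P ≤ 2 ^ n * (Z : ℝ) ^ n := by
          have z1 : B / P ≤ 2 * Z := by
            have := Nat.lt_floor_add_one (B / P)
            rw [← hZ] at this
            linarith
          have z2 : (B / P) ^ n = P := by
            have z3 : B / P = B ^ (1 - θ) := by
              rw [Real.rpow_sub hB0, Real.rpow_one]
            rw [z3, ← Real.rpow_natCast, ← Real.rpow_mul hB0.le, hP]
            congr 1
            rw [hθ]; field_simp; ring
          rw [← mul_pow, ← z2]
          exact pow_le_pow_left₀ (by linarith) z1 n
        have hcore' := hcore H hirr hdeg N hN hFw Z ⌈4 * B⌉₊ B P Y hZ1 hP1 hPB hYpos hPZ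
          (Nat.le_ceil _) (by have := Nat.ceil_lt_add_one (show 0 ≤ 4 * B by linarith); linarith) S hSm
        have hcount := count_A hW l Lx ⌈4 * B⌉₊ ⌊B⌋₊ hl.two_le B hB0 hfl
          (by
            have := Nat.le_ceil (4 * B)
            have h2 : (⌊B⌋₊ : ℝ) ≤ ⌈4 * B⌉₊ := by linarith
            exact_mod_cast h2) H S (fun p hp => ⟨(hSm p hp).1, (hSm p hp).2.1⟩) hcase A
          (fun x hx => ⟨(hA x hx).1, (hA x hx).2.1, (hA x hx).2.2,
            Nat.log_mono_right (eval_bound H D N _ hX1 hdeg hN x (hA x hx).1)⟩)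
        have hall := hcount.trans hcore'
        have hLyE : (Nat.log 2 (c1 * ((N + 1) * (Z + 1)) ^ c2) : ℝ) ≤ E := by
          refine (hlog1 N Z B hB hZB).trans ?_
          rw [hE, mul_assoc, mul_assoc]
          refine mul_le_mul_of_nonneg_right (by linarith) (by linarith)
        rw [← hQdef] at hall
        have hQpos : 0 < Q := by linarith
        have hQZ : Q / (Z : ℝ) ^ n ≤ 2 ^ n * (Q / Y) := by
          rw [← mul_div_assoc, div_le_div_iff₀ (by positivity) hYpos]
          exact aux_ar4 Q Y P (2 ^ n) ((Z : ℝ) ^ n) hQpos hYP hZn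
        have hb : (A.card : ℝ) * (Q / 2) ^ 2 ≤ C * B ^ n * P * ((1 + 2 ^ n) * (Q / Y) + E) := by
          refine hall.trans (mul_le_mul_of_nonneg_left ?_ (by positivity))
          linarith
        have hb2 : (1 + 2 ^ n) * (Q / Y) + E ≤ (2 + 2 ^ n) * E * (Q ^ 2 / Y ^ 2) := by
          have q1 : 1 ≤ Q / Y := by rwa [le_div_iff₀ hYpos, one_mul]
          rw [← div_pow]
          exact aux_ar1 E (Q / Y) (2 ^ n) hE1 q1 (by positivity)
        have hb3 : (A.card : ℝ) * (Q / 2) ^ 2 ≤ (4 * C * (2 + 2 ^ n) * (E * B ^ n * (P / Y ^ 2))) * (Q / 2) ^ 2 := by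
          refine hb.trans ((mul_le_mul_of_nonneg_left hb2 (by positivity)).trans (le_of_eq ?_))
          field_simp
          try ring
        refine (le_of_mul_le_mul_right hb3 (by positivity)).trans ?_
        refine mul_le_mul_of_nonneg_right ?_ (by positivity)
        rw [hG]
        have : 0 ≤ 3 ^ n * P0 + 3 ^ n * 4 := by positivity
        linarith
      · have k0 : Q ≤ 4 * E := by
          have : S.card ≤ 4 * Lx := by omega
          have : Q ≤ 4 * Lx := by rw [hQdef]; exact_mod_cast this
          linarith
        have k1 : 1 ≤ 4 * E * (P / Y ^ 2) := by
          rw [← mul_div_assoc, le_div_iff₀ (by positivity), one_mul, sq]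
          exact mul_le_mul (hQY.trans k0) hYP hYpos.le (by linarith)
        calc (A.card : ℝ) ≤ 3 ^ n * B ^ n := htriv
          _ ≤ 3 ^ n * B ^ n * (4 * E * (P / Y ^ 2)) := le_mul_of_one_le_right (by positivity) k1
          _ = 3 ^ n * 4 * (E * B ^ n * (P / Y ^ 2)) := by ring
          _ ≤ _ := by
            refine mul_le_mul_of_nonneg_right ?_ (by positivity)
            rw [hG]
            have : 0 ≤ 3 ^ n * P0 + 4 * C * (2 + 2 ^ n) := by positivity
            linarith
  refine huni.trans ?_
  have e1 : P / Y ^ 2 = B ^ (θ * (2 * δ - 1)) := by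
    have : Y ^ 2 = P ^ (2 * (1 - δ)) := by
      rw [hY, ← Real.rpow_natCast, ← Real.rpow_mul hPpos.le]; congr 1; push_cast; ring
    rw [this]
    nth_rewrite 1 [← Real.rpow_one P]
    rw [← Real.rpow_sub hPpos, hP, ← Real.rpow_mul hB0.le]
    congr 1; ring
  have e2 : B ^ δ * B ^ n * B ^ (θ * (2 * δ - 1)) ≤ B ^ (expo n + ε) := by
    rw [← Real.rpow_natCast, ← Real.rpow_add hB0, ← Real.rpow_add hB0]
    refine Real.rpow_le_rpow_of_exponent_le hB ?_
    have : expo n = n - θ := by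
      unfold expo; rw [hθ]; field_simp; ring
    rw [this]
    exact aux_ar6 n θ δ ε hδ hθ1 hδε
  calc G * (E * B ^ n * (P / Y ^ 2)) = G * K * h * (B ^ δ * B ^ n * B ^ (θ * (2 * δ - 1))) := by
        rw [e1, hE]; ring
    _ ≤ _ := mul_le_mul_of_nonneg_left e2 (by positivity)

lemma main_l (n l D : ℕ) (hn : 1 ≤ n) (hl : l.Prime) (ε : ℝ) (hε : 0 < ε) :
    ∃ C : ℝ, 0 < C ∧ ∀ H : MvPolynomial (Fin n) ℤ,
      Irreducible (MvPolynomial.map (Int.castRingHom ℚ) H) → H.totalDegree ≤ D →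
      ∀ N : ℕ, (∀ m, |H.coeff m| ≤ N) → (∀ w, w ≠ 0 → 1 ≤ (Fw H w).natDegree) →
      ∀ B : ℝ, 1 ≤ B → ∀ A : Finset (Fin n → ℤ),
        (∀ x ∈ A, x ∈ zbox n ⌊B⌋₊ ∧ ∃ y : ℤ, MvPolynomial.eval x H = y ^ l) →
        (A.card : ℝ) ≤ C * Real.log (N + 2) * B ^ (expo n + ε) := by
  obtain ⟨C, hC, hmain⟩ := main_nz n l D hn hl ε hε
  refine ⟨C + 2 * (D * 3 ^ (n - 1)), by positivity, ?_⟩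
  intro H hirr hdeg N hN hFw B hB A hA
  have hB0 : 0 < B := by linarith
  have hH0 : H ≠ 0 := by
    rintro rfl
    rw [map_zero] at hirr
    exact not_irreducible_zero hirr
  have h1 := hmain H hirr hdeg N hN hFw B hB (A.filter fun x => ¬ MvPolynomial.eval x H = 0) (fun x hx => by
    rw [Finset.mem_filter] at hx
    exact ⟨(hA x hx.1).1, hx.2, (hA x hx.1).2⟩)
  have h2 : (A.filter fun x => MvPolynomial.eval x H = 0).card ≤ D * (2 * ⌊B⌋₊ + 1) ^ (n - 1) := by
    have := sz_nat hn hH0 D hdeg (Finset.Icc (-(⌊B⌋₊ : ℤ)) ⌊B⌋₊)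
    have e : (Finset.Icc (-(⌊B⌋₊ : ℤ)) ⌊B⌋₊).card = 2 * ⌊B⌋₊ + 1 := by
      rw [Int.card_Icc]; omega
    rw [e] at this
    refine le_trans (Finset.card_le_card ?_) this
    intro x hx
    rw [Finset.mem_filter] at hx ⊢
    exact ⟨(hA x hx.1).1, hx.2⟩
  have hl2 : (1 : ℝ) / 2 < Real.log 2 := by have := Real.log_two_gt_d9; norm_num at this ⊢; linarith
  have hN0 : (0 : ℝ) ≤ N := by positivity
  have hhl : 1 / 2 ≤ Real.log ((N : ℝ) + 2) := hl2.le.trans (Real.log_le_log (by norm_num) (by linarith))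
  have hfl : (⌊B⌋₊ : ℝ) ≤ B := Nat.floor_le hB0.le
  have h3 : ((A.filter fun x => MvPolynomial.eval x H = 0).card : ℝ) ≤
      D * 3 ^ (n - 1) * B ^ (expo n + ε) := by
    calc _ ≤ (D : ℝ) * (2 * (⌊B⌋₊ : ℝ) + 1) ^ (n - 1) := by exact_mod_cast h2
      _ ≤ D * (3 * B) ^ (n - 1) := by gcongr; linarith
      _ = D * 3 ^ (n - 1) * B ^ (n - 1) := by rw [mul_pow]; ring
      _ ≤ _ := by
        refine mul_le_mul_of_nonneg_left ?_ (by positivity)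
        rw [← Real.rpow_natCast]
        refine Real.rpow_le_rpow_of_exponent_le hB ?_
        rw [Nat.cast_sub hn, expo]
        have : 0 ≤ 1 / ((n : ℝ) + 1) := by positivity
        push_cast
        linarith
  have h4 : (A.card : ℝ) = ((A.filter fun x => MvPolynomial.eval x H = 0).card : ℝ) +
      ((A.filter fun x => ¬ MvPolynomial.eval x H = 0).card : ℝ) := by
    exact_mod_cast (Finset.card_filter_add_card_filter_not _).symm
  have h5 : 0 ≤ (D : ℝ) * 3 ^ (n - 1) * B ^ (expo n + ε) := by positivity
  rw [h4]
  nlinarith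

lemma coeff_zero_F {n d : ℕ} (hd : 2 ≤ d) (H : MvPolynomial (Fin n) ℤ) :
    ((Polynomial.X ^ d - Polynomial.C H : Polynomial (MvPolynomial (Fin n) ℤ))).coeff 0 = -H := by
  rw [Polynomial.coeff_sub, Polynomial.coeff_X_pow, Polynomial.coeff_C_zero, if_neg (by omega), zero_sub]

lemma coeff_d_F {n d : ℕ} (hd : 2 ≤ d) (H : MvPolynomial (Fin n) ℤ) :
    ((Polynomial.X ^ d - Polynomial.C H : Polynomial (MvPolynomial (Fin n) ℤ))).coeff d = 1 := by
  rw [Polynomial.coeff_sub, Polynomial.coeff_X_pow, Polynomial.coeff_C, if_pos rfl, if_neg (by omega), sub_zero]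

lemma deg_ge_d {n d : ℕ} (hd : 2 ≤ d) (H : MvPolynomial (Fin n) ℤ) :
    d ≤ totalDeg (Polynomial.X ^ d - Polynomial.C H : Polynomial (MvPolynomial (Fin n) ℤ)) := by
  unfold totalDeg
  have hm : d ∈ (Polynomial.X ^ d - Polynomial.C H : Polynomial (MvPolynomial (Fin n) ℤ)).support := by
    rw [Polynomial.mem_support_iff, coeff_d_F hd]; exact one_ne_zero
  refine le_trans ?_ (Finset.le_sup hm)
  exact Nat.le_add_right _ _

lemma deg_ge_H {n d : ℕ} (hd : 2 ≤ d) (H : MvPolynomial (Fin n) ℤ) (h0 : H ≠ 0) :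
    H.totalDegree ≤ totalDeg (Polynomial.X ^ d - Polynomial.C H : Polynomial (MvPolynomial (Fin n) ℤ)) := by
  unfold totalDeg
  have hm : 0 ∈ (Polynomial.X ^ d - Polynomial.C H : Polynomial (MvPolynomial (Fin n) ℤ)).support := by
    rw [Polynomial.mem_support_iff, coeff_zero_F hd]; exact neg_ne_zero.2 h0
  refine le_trans ?_ (Finset.le_sup hm)
  rw [coeff_zero_F hd, MvPolynomial.totalDegree_neg, zero_add]

lemma norm_ge_H {n d : ℕ} (hd : 2 ≤ d) (H : MvPolynomial (Fin n) ℤ) (m : Fin n →₀ ℕ) :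
    |H.coeff m| ≤ (polyNorm (Polynomial.X ^ d - Polynomial.C H : Polynomial (MvPolynomial (Fin n) ℤ)) : ℤ) := by
  by_cases hc : H.coeff m = 0
  · rw [hc]; simp
  rw [Int.abs_eq_natAbs]
  have h0 : H ≠ 0 := by rintro rfl; simp at hc
  have hm : 0 ∈ (Polynomial.X ^ d - Polynomial.C H : Polynomial (MvPolynomial (Fin n) ℤ)).support := by
    rw [Polynomial.mem_support_iff, coeff_zero_F hd]; exact neg_ne_zero.2 h0
  have : (H.coeff m).natAbs ≤ polyNorm (Polynomial.X ^ d - Polynomial.C H : Polynomial (MvPolynomial (Fin n) ℤ)) := by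
    unfold polyNorm
    refine le_trans ?_ (Finset.le_sup hm)
    rw [coeff_zero_F hd]
    unfold mvNorm
    have hm2 : m ∈ (-H).support := by
      rw [MvPolynomial.mem_support_iff, MvPolynomial.coeff_neg]; exact neg_ne_zero.2 hc
    refine le_trans ?_ (Finset.le_sup hm2)
    rw [MvPolynomial.coeff_neg, Int.natAbs_neg]
  exact_mod_cast this

theorem statement0 (n : ℕ) (hn : 2 ≤ n) :
    ∃ e : ℕ, 1 ≤ e ∧ ∀ D : ℕ, ∀ ε : ℝ, 0 < ε → ∃ C : ℝ, 0 < C ∧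
      ∀ (d : ℕ) (H : MvPolynomial (Fin n) ℤ), 2 ≤ d →
        Irreducible (MvPolynomial.map (Int.castRingHom ℚ) H) →
        (¬ ∃ (σ : Matrix (Fin n) (Fin n) ℚ) (I : Set (Fin n)), IsUnit σ.det ∧
            I ≠ Set.univ ∧
            ∀ j ∉ I,
              MvPolynomial.degreeOf j (lsubMv σ (MvPolynomial.map (Int.castRingHom ℚ) H)) = 0) →
        totalDeg (Polynomial.X ^ d - Polynomial.C H) = D →
        ∀ B : ℝ, 1 ≤ B →
          (NFB (Polynomial.X ^ d - Polynomial.C H) B : ℝ) ≤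
            C * Real.log ((polyNorm (Polynomial.X ^ d - Polynomial.C H) : ℝ) + 2) ^ e *
              B ^ ((n : ℝ) - 1 + 1 / ((n : ℝ) + 1) + ε) := by
  refine ⟨1, le_rfl, fun D ε hε => ?_⟩
  have hall : ∀ l : ℕ, ∃ C : ℝ, 0 < C ∧ (l.Prime → ∀ H : MvPolynomial (Fin n) ℤ,
      Irreducible (MvPolynomial.map (Int.castRingHom ℚ) H) → H.totalDegree ≤ D →
      ∀ N : ℕ, (∀ m, |H.coeff m| ≤ N) → (∀ w, w ≠ 0 → 1 ≤ (Fw H w).natDegree) →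
      ∀ B : ℝ, 1 ≤ B → ∀ A : Finset (Fin n → ℤ),
        (∀ x ∈ A, x ∈ zbox n ⌊B⌋₊ ∧ ∃ y : ℤ, MvPolynomial.eval x H = y ^ l) →
        (A.card : ℝ) ≤ C * Real.log (N + 2) * B ^ (expo n + ε)) := by
    intro l
    by_cases hl : l.Prime
    · obtain ⟨C, hC, h⟩ := main_l n l D (by omega) hl ε hε
      exact ⟨C, hC, fun _ => h⟩
    · exact ⟨1, one_pos, fun h => absurd h hl⟩
  choose Cl hCl hmain using hall
  refine ⟨1 + ∑ l ∈ Finset.range (D + 1), Cl l, ?_, ?_⟩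
  · have : 0 ≤ ∑ l ∈ Finset.range (D + 1), Cl l := Finset.sum_nonneg fun l _ => (hCl l).le
    linarith
  intro d H hd hirr hgen hdeg B hB
  have hB0 : 0 < B := by linarith
  have hH0 : H ≠ 0 := by
    rintro rfl
    rw [map_zero] at hirr
    exact not_irreducible_zero hirr
  have hdD : d ≤ D := hdeg ▸ deg_ge_d hd H
  have hHD : H.totalDegree ≤ D := hdeg ▸ deg_ge_H hd H hH0
  set l := d.minFac with hl
  have hlp : l.Prime := Nat.minFac_prime (by omega)
  have hlD : l ∈ Finset.range (D + 1) := by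
    rw [Finset.mem_range]
    have := Nat.minFac_le (show 0 < d by omega)
    omega
  set N := polyNorm (Polynomial.X ^ d - Polynomial.C H) with hN
  set A := {x : Fin n → ℤ | (∀ i, |(x i : ℝ)| ≤ B) ∧
    ∃ y : ℤ, Polynomial.eval y ((Polynomial.X ^ d - Polynomial.C H : Polynomial (MvPolynomial (Fin n) ℤ)).map (MvPolynomial.eval x)) = 0} with hA
  have hAsub : ∀ x ∈ A, x ∈ zbox n ⌊B⌋₊ ∧ ∃ y : ℤ, MvPolynomial.eval x H = y ^ l := by
    rintro x ⟨h1, y, hy⟩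
    constructor
    · rw [zbox, Fintype.mem_piFinset]
      intro i
      rw [Finset.mem_Icc, ← abs_le, Int.abs_eq_natAbs]
      have : (x i).natAbs ≤ ⌊B⌋₊ := by
        apply Nat.le_floor
        rw [Nat.cast_natAbs]
        push_cast
        exact h1 i
      exact_mod_cast this
    · refine ⟨y ^ (d / l), ?_⟩
      rw [← pow_mul, Nat.div_mul_cancel (Nat.minFac_dvd d)]
      simp at hy
      linarith
  have hfin : A.Finite := (zbox n ⌊B⌋₊).finite_toSet.subset fun x hx => (hAsub x hx).1
  have hcard : NFB (Polynomial.X ^ d - Polynomial.C H) B = hfin.toFinset.card := by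
    rw [NFB, ← hA, Set.ncard_eq_toFinset_card A hfin]
  have key := hmain l hlp H hirr hHD N (norm_ge_H hd H) (genuine_natDegree H hgen) B hB hfin.toFinset
    (fun x hx => hAsub x (hfin.mem_toFinset.1 hx))
  rw [hcard, pow_one]
  refine key.trans ?_
  have hlog : 0 ≤ Real.log ((N : ℝ) + 2) := Real.log_nonneg (by have : (0 : ℝ) ≤ N := by positivity
                                                                linarith)
  unfold expo
  have hle : Cl l ≤ 1 + ∑ l ∈ Finset.range (D + 1), Cl l := by
    have := Finset.single_le_sum (f := Cl) (fun l _ => (hCl l).le) hlD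
    linarith
  gcongr
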